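/- arXiv:math/0506514 — 2 statements merged into one kernel-verified Lean document; each statement's English description precedes it below -/
import Mathlib

section
/- For every prime p, the set of real numbers u for which liminf_{q→∞} q·|q|_p·⟨qu⟩ > 0 (the liminf taken over positive integers q) has Hausdorff dimension zero. -/
/-- `nearestIntDist z` is the distance from `z` to the nearest integer, denoted ⟨z⟩. -/
noncomputable def nearestIntDist (z : ℝ) : ℝ := ⨅ k : ℤ, |z - (k : ℝ)|

/-!
Applying the hypothesis to `q ↦ N p²ⁿ q` shows that all the multiples `p²ⁿ u` are badly
approximable with one constant `c`. Let `K` be the set of these `u`, and suppose that `dim K > 0`.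

Encode `u` by the lattices of `p²ⁿ u`, renormalised at a scale `e`; by the choice of `c` they stay
in a compact set. Hence among sufficiently many times there are two, `n` and `n + d`, with nearly
equal lattices, which are compared by an integral matrix. Transporting a real number by this matrix
moves it by a quadratic polynomial, its displacement. Cleared of denominators, the matrix has
determinant `p²ᵈ` and, coming from a matrix upper triangular modulo a power of `p`, a trace prime to
`p`. Hence its discriminant is not zero, it is not parabolic, and the displacement varies by a
definite amount at some scale.

By Gibbs' inequality a set of positive dimension contains finite samples that branch at almost all
scales around almost all of their points. A suitable scale and a suitable sample point then make
the displacement at the point both small and bounded away from zero, and the matrix moves all the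
points with good renormalised lattices near it by almost the same amount. The quality of a lattice
deteriorates in this process; but weakening the threshold of quality in many successive steps, by
the pigeonhole principle one of the steps creates no new good points up to a small error, for most
points, scales and times. One can therefore repeat the move, walking through good points with steps
of almost constant length. By Dirichlet's theorem there are intervals without good points that are
longer than such a step, a contradiction.
-/

section Combinatorics

open Finset

theorem card_filter_product {α β : Type*} (S : Finset α) (T : Finset β) (P : α × β → Prop)
    [DecidablePred P] : #{x ∈ S ×ˢ T | P x} = ∑ s ∈ S, #{t ∈ T | P (s, t)} := by
  simp only [card_filter, sum_product]

theorem card_filter_product_right {α β : Type*} (S : Finset α) (T : Finset β)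
    (P : α × β → Prop) [DecidablePred P] : #{x ∈ S ×ˢ T | P x} = ∑ t ∈ T, #{s ∈ S | P (s, t)} := by
  simp only [card_filter, sum_product_right]

open scoped Classical in
/-- The predicate `P` has density at most `1 / K` in every backward window `(i - τ, i]`; the
windows are indexed by the distance `σ` to the endpoint `i`. -/
def SparseBackward (K : ℕ) (P : ℕ → Prop) (i : ℕ) : Prop :=
  ∀ τ ≤ i + 1, K * #{σ ∈ range τ | P (i - σ)} ≤ τ

theorem card_filter_range_sub (P : ℕ → Prop) [DecidablePred P] {i τ : ℕ} (hτ : τ ≤ i + 1) :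
    #{σ ∈ range τ | P (i - σ)} = #{j ∈ Ico (i + 1 - τ) (i + 1) | P j} := by
  rw [card_filter, card_filter, range_eq_Ico,
    sum_Ico_reflect (fun j => if P j then 1 else 0) 0 hτ, Nat.sub_zero]

open scoped Classical in
/-- Discrete Hardy–Littlewood maximal inequality. -/
theorem card_not_sparseBackward_le (K : ℕ) (P : ℕ → Prop) (h : ℕ) :
    #{i ∈ range h | ¬ SparseBackward K P i} ≤ K * #{j ∈ range h | P j} := by
  induction h using Nat.strong_induction_on with
  | _ h ih =>
    rcases h with _ | h
    · simp
    by_cases hsparse : SparseBackward K P h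
    · rw [range_add_one, filter_insert, if_neg (not_not.2 hsparse)]
      refine (ih h (by omega)).trans (Nat.mul_le_mul_left _ (card_le_card ?_))
      exact filter_subset_filter _ (subset_insert _ _)
    · simp only [SparseBackward, not_forall, not_le] at hsparse
      obtain ⟨τ, hτ, hdense⟩ := hsparse
      rw [card_filter_range_sub P hτ] at hdense
      have hτ0 : τ ≠ 0 := by rintro rfl; simp at hdense
      have hsplit : range (h + 1) = range (h + 1 - τ) ∪ Ico (h + 1 - τ) (h + 1) := by
        ext x; simp only [mem_union, mem_range, mem_Ico]; omega
      have hdisj : Disjoint (range (h + 1 - τ)) (Ico (h + 1 - τ) (h + 1)) := by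
        rw [Finset.disjoint_left]; intro x; simp only [mem_range, mem_Ico]; omega
      have hbefore := ih (h + 1 - τ) (by omega)
      rw [hsplit, filter_union, filter_union,
        card_union_of_disjoint (disjoint_filter_filter hdisj),
        card_union_of_disjoint (disjoint_filter_filter hdisj), mul_add]
      refine Nat.add_le_add hbefore ((card_filter_le _ _).trans ?_)
      rw [Nat.card_Ico]; omega

/-- The fibres of `π 0, π 1, …` form successively finer partitions. -/
def IsRefining {α β : Type*} (π : ℕ → α → β) : Prop :=
  ∀ ⦃k l x y⦄, k ≤ l → π l x = π l y → π k x = π k y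

section CellDense

variable {α β : Type*} [DecidableEq β] (K : ℕ) (π : ℕ → α → β) (S E : Finset α)

/-- The points of `S` in the level `k` cell of `s`. -/
def cell (k : ℕ) (s : α) : Finset α := {u ∈ S | π k u = π k s}

variable {π S} in
theorem mem_cell {k : ℕ} {s u : α} : u ∈ cell π S k s ↔ u ∈ S ∧ π k u = π k s := mem_filter

variable {π S} in
theorem self_mem_cell {s : α} (hs : s ∈ S) (k : ℕ) : s ∈ cell π S k s := mem_cell.2 ⟨hs, rfl⟩

variable {π} in
theorem cell_congr {k : ℕ} {s t : α} (h : π k t = π k s) : cell π S k t = cell π S k s := by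
  simp only [cell, h]

/-- In the level `k` cell of `s` the proportion of `E` relative to `S` exceeds `1 / K`. -/
def CellDenseAt (k : ℕ) (s : α) : Prop := #(cell π S k s) < K * #(cell π E k s)

/-- Some cell of `s` contains a proportion larger than `1 / K` of points of `E`. -/
def CellDense (s : α) : Prop := ∃ k, CellDenseAt K π S E k s

/-- The first level at which the cell of `s` has a proportion larger than `1 / K` of points
of `E`. -/
noncomputable def denseLevel (s : α) : ℕ := sInf {k | CellDenseAt K π S E k s}

variable {K π S E}

theorem CellDenseAt.congr {k : ℕ} {s t : α} (hs : CellDenseAt K π S E k s)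
    (h : π k t = π k s) : CellDenseAt K π S E k t := by
  rwa [CellDenseAt, cell_congr S h, cell_congr E h]

theorem CellDense.cellDenseAt_denseLevel {s : α} (hs : CellDense K π S E s) :
    CellDenseAt K π S E (denseLevel K π S E s) s :=
  Nat.sInf_mem hs

theorem CellDense.denseLevel_eq (hπ : IsRefining π) {s t : α} (hs : CellDense K π S E s)
    (h : π (denseLevel K π S E s) t = π (denseLevel K π S E s) s) :
    denseLevel K π S E t = denseLevel K π S E s := by
  have ht : CellDenseAt K π S E (denseLevel K π S E s) t := hs.cellDenseAt_denseLevel.congr h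
  have hle : denseLevel K π S E t ≤ denseLevel K π S E s := Nat.sInf_le ht
  have hs' : CellDenseAt K π S E (denseLevel K π S E t) s :=
    (CellDense.cellDenseAt_denseLevel ⟨_, ht⟩).congr (hπ hle h.symm)
  exact hle.antisymm (Nat.sInf_le hs')

open scoped Classical in
/-- Doob's maximal inequality for counting measures: the first dense cells are disjoint. -/
theorem card_cellDense_le (hπ : IsRefining π) :
    #{s ∈ S | CellDense K π S E s} ≤ K * #E := by
  set level := denseLevel K π S E
  set B := {s ∈ S | CellDense K π S E s}
  set firstCell : α → ℕ × β := fun s => (level s, π (level s) s)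
  have hfibre : ∀ c ∈ B.image firstCell,
      #{s ∈ B | firstCell s = c} ≤ K * #{s ∈ E | firstCell s = c} := by
    intro c hc
    obtain ⟨s, hs, rfl⟩ := mem_image.1 hc
    have hs : CellDense K π S E s := (mem_filter.1 hs).2
    have hB : {t ∈ B | firstCell t = firstCell s} ⊆ cell π S (level s) s := by
      intro t ht
      simp only [mem_filter, mem_cell, firstCell, Prod.mk.injEq, B] at ht ⊢
      obtain ⟨⟨htS, -⟩, hlevel, hcell⟩ := ht
      exact ⟨htS, hlevel ▸ hcell⟩
    have hE : cell π E (level s) s ⊆ {t ∈ E | firstCell t = firstCell s} := by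
      intro t ht
      simp only [mem_filter, mem_cell, firstCell, Prod.mk.injEq] at ht ⊢
      have hlevel : level t = level s := hs.denseLevel_eq hπ ht.2
      exact ⟨ht.1, hlevel, hlevel ▸ ht.2⟩
    exact (card_le_card hB).trans
      (hs.cellDenseAt_denseLevel.le.trans (Nat.mul_le_mul_left _ (card_le_card hE)))
  calc #B = ∑ c ∈ B.image firstCell, #{s ∈ B | firstCell s = c} := card_eq_sum_card_image _ _
    _ ≤ ∑ c ∈ B.image firstCell, K * #{s ∈ E | firstCell s = c} := sum_le_sum hfibre
    _ = K * #{s ∈ E | firstCell s ∈ B.image firstCell} := by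
        rw [← mul_sum, sum_card_fiberwise_eq_card_filter]
    _ ≤ K * #E := Nat.mul_le_mul_left _ (card_filter_le _ _)

end CellDense

section UniformlySparse

variable {α β : Type*} [DecidableEq β] {S : Finset α} {H N : ℕ}

open scoped Classical in
theorem card_product_not_sparseBackward_le (K : ℕ) (P : α → ℕ → Prop) :
    #{x ∈ S ×ˢ range H | ¬ SparseBackward K (P x.1) x.2} ≤
      K * #{x ∈ S ×ˢ range H | P x.1 x.2} := by
  rw [card_filter_product, card_filter_product, mul_sum]
  exact sum_le_sum fun s _ => card_not_sparseBackward_le K (P s) H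

open scoped Classical in
theorem card_product_cellDense_le (K : ℕ) {π : ℕ → α → β} (hπ : IsRefining π)
    (Q : α → ℕ → Prop) :
    #{x ∈ S ×ˢ range H | CellDense K π S {u ∈ S | Q u x.2} x.1} ≤
      K * #{x ∈ S ×ˢ range H | Q x.1 x.2} := by
  rw [card_filter_product_right, card_filter_product_right, mul_sum]
  exact sum_le_sum fun j _ => card_cellDense_le (E := {u ∈ S | Q u j}) hπ

theorem mul_card_half_le (X : Finset α) (W : ℕ → α → Prop) [∀ n, DecidablePred (W n)] :
    N * #{x ∈ X | N ≤ 2 * #{n ∈ range N | W n x}} ≤ 2 * ∑ n ∈ range N, #{x ∈ X | W n x} := by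
  have hsum : ∑ n ∈ range N, #{x ∈ X | W n x} = ∑ x ∈ X, #{n ∈ range N | W n x} := by
    simp only [card_filter]
    exact sum_comm
  rw [hsum, mul_sum, mul_comm, ← smul_eq_mul]
  refine (card_nsmul_le_sum _ _ N fun x hx => (mem_filter.1 hx).2).trans ?_
  exact sum_le_sum_of_subset (filter_subset _ _)

theorem four_mul_card_product_lt_le {J : ℕ} (hJ : 4 * J ≤ H) :
    4 * #{x ∈ S ×ˢ range H | x.2 < J} ≤ #S * H := by
  have hsub : {x ∈ S ×ˢ range H | x.2 < J} ⊆ S ×ˢ range J := by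
    intro x hx
    simp only [mem_filter, mem_product, mem_range] at hx ⊢
    exact ⟨hx.1.1, hx.2⟩
  have hcard := card_le_card hsub
  rw [card_product, card_range] at hcard
  nlinarith

theorem exists_notMem_three {X A B C : Finset α} (hX : X.Nonempty) (hA : 4 * #A ≤ #X)
    (hB : 4 * #B ≤ #X) (hC : 4 * #C ≤ #X) : ∃ x ∈ X, x ∉ A ∧ x ∉ B ∧ x ∉ C := by
  classical
  have hAB := card_union_le A B
  have hABC := card_union_le (A ∪ B) C
  obtain ⟨x, hx, hnot⟩ := exists_mem_notMem_of_card_lt_card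
    (show #(A ∪ B ∪ C) < #X by have := hX.card_pos; omega)
  simp only [mem_union, not_or] at hnot
  exact ⟨x, hx, hnot.1.1, hnot.1.2, hnot.2⟩

open scoped Classical in
/-- The constants are `400 = 4 * 100` and `6400 = 4 * 2 * 100 * 8`: each of the three exceptional
sets, of small indices, of dense `P` and of dense `Q`, has proportion at most `1 / 4`. -/
theorem exists_uniformly_sparse (hS : S.Nonempty) {π : ℕ → α → β} (hπ : IsRefining π) {J : ℕ}
    (hH : 0 < H) (hN : 0 < N) (hJ : 4 * J ≤ H) {P : α → ℕ → Prop} {Q : ℕ → α → ℕ → Prop}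
    (hP : 400 * #{x ∈ S ×ˢ range H | P x.1 x.2} ≤ #S * H)
    (hQ : 6400 * #{x ∈ range N ×ˢ S ×ˢ range H | Q x.1 x.2.1 x.2.2} ≤ N * (#S * H)) :
    ∃ s ∈ S, ∃ i ∈ Ico J H, SparseBackward 100 (P s) i ∧
      N < 2 * #{n ∈ range N |
        SparseBackward 100 (fun j => CellDense 8 π S {u ∈ S | Q n u j} s) i} := by
  let X := S ×ˢ range H
  have hX : #X = #S * H := by rw [card_product, card_range]
  let W : ℕ → α × ℕ → Prop := fun n x =>
    ¬ SparseBackward 100 (fun j => CellDense 8 π S {u ∈ S | Q n u j} x.1) x.2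
  have hW : ∀ n, #{x ∈ X | W n x} ≤ 800 * #{x ∈ X | Q n x.1 x.2} := fun n =>
    calc #{x ∈ X | W n x}
        ≤ 100 * #{x ∈ X | CellDense 8 π S {u ∈ S | Q n u x.2} x.1} :=
          card_product_not_sparseBackward_le 100 fun s j => CellDense 8 π S {u ∈ S | Q n u j} s
      _ ≤ 100 * (8 * #{x ∈ X | Q n x.1 x.2}) :=
          Nat.mul_le_mul_left _ (card_product_cellDense_le 8 hπ (Q n))
      _ = 800 * #{x ∈ X | Q n x.1 x.2} := by ring
  have hsmall : 4 * #{x ∈ X | x.2 < J} ≤ #X := hX ▸ four_mul_card_product_lt_le hJ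
  have hsparse : 4 * #{x ∈ X | ¬ SparseBackward 100 (P x.1) x.2} ≤ #X :=
    calc 4 * #{x ∈ X | ¬ SparseBackward 100 (P x.1) x.2}
        ≤ 4 * (100 * #{x ∈ X | P x.1 x.2}) :=
          Nat.mul_le_mul_left _ (card_product_not_sparseBackward_le 100 P)
      _ ≤ #X := by rw [← mul_assoc, hX]; exact hP
  have hhalf : 4 * #{x ∈ X | N ≤ 2 * #{n ∈ range N | W n x}} ≤ #X := by
    refine Nat.le_of_mul_le_mul_left ?_ hN
    have hmarkov := mul_card_half_le (N := N) X W
    have hsum : ∑ n ∈ range N, #{x ∈ X | W n x} ≤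
        800 * #{x ∈ range N ×ˢ X | Q x.1 x.2.1 x.2.2} := by
      rw [card_filter_product, mul_sum]
      exact sum_le_sum fun n _ => hW n
    rw [hX]
    linarith
  obtain ⟨⟨s, i⟩, hx, hsmall, hsparse, hhalf⟩ := exists_notMem_three
    (card_pos.1 (hX ▸ Nat.mul_pos hS.card_pos hH)) hsmall hsparse hhalf
  simp only [mem_filter, hx, true_and, not_lt, not_not, not_le] at hsmall hsparse hhalf
  simp only [X, mem_product, mem_range] at hx
  refine ⟨s, hx.1, i, mem_Ico.2 ⟨hsmall, hx.2⟩, hsparse, ?_⟩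
  have hcompl := card_filter_add_card_filter_not (s := range N) (fun n => W n (s, i))
  simp only [W, not_not, card_range] at hcompl hhalf
  omega

end UniformlySparse

/-- Pigeonhole principle in the blocks of length `2 * C`. -/
theorem exists_near_same_color {γ : Type*} {C N : ℕ} {G : Finset ℕ} (hN : 2 * C ∣ N)
    (hG : G ⊆ range N) (hcard : N < 2 * #G) {T : Finset γ} (hT : #T ≤ C) {f : ℕ → γ}
    (hf : ∀ n ∈ G, f n ∈ T) :
    ∃ n ∈ G, ∃ m ∈ G, n < m ∧ m ≤ n + 2 * C ∧ f n = f m := by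
  obtain ⟨B, rfl⟩ := hN
  have hC : 0 < 2 * C := by
    rcases Nat.eq_zero_or_pos C with rfl | h
    · have := card_le_card hG
      simp only [mul_zero, zero_mul, range_zero, card_empty] at this hcard
      omega
    · omega
  have hlt : #(range B ×ˢ T) < #G := by
    rw [card_product, card_range]
    nlinarith [Nat.mul_le_mul_left B hT]
  obtain ⟨n, hn, m, hm, hne, heq⟩ := exists_ne_map_eq_of_card_lt_of_maps_to hlt
    (f := fun n => (n / (2 * C), f n)) fun n hn => by
      have hn : n ∈ G := hn
      simp only [coe_product, Set.mem_prod, mem_coe, mem_range]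
      exact ⟨Nat.div_lt_of_lt_mul (mem_range.1 (hG hn)), hf n hn⟩
  simp only [Prod.mk.injEq] at heq
  have hdivn := Nat.div_add_mod n (2 * C)
  have hdivm := Nat.div_add_mod m (2 * C)
  have hmodn := Nat.mod_lt n hC
  have hmodm := Nat.mod_lt m hC
  rw [heq.1] at hdivn
  rcases lt_or_gt_of_ne hne with h | h
  · exact ⟨n, hn, m, hm, h, by omega, heq.2⟩
  · exact ⟨m, hm, n, hn, h, by omega, heq.2.symm⟩

theorem card_ne_succ_add_card_le {β : Type*} [DecidableEq β] {f : ℕ → Finset β}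
    (hf : ∀ i, f (i + 1) ⊆ f i) (I : ℕ) :
    #{i ∈ range I | f i ≠ f (i + 1)} + #(f I) ≤ #(f 0) := by
  induction I with
  | zero => simp
  | succ I ih =>
    rw [range_add_one, filter_insert]
    split_ifs with h
    · rw [card_insert_of_notMem (by simp)]
      have := card_lt_card ((hf I).ssubset_of_ne h.symm)
      omega
    · have := card_le_card (hf I)
      omega

theorem exists_lt_mul_card_ne_succ_le {α β : Type*} [DecidableEq β] (X : Finset α)
    {Φ : ℕ → α → Finset β}
    (hΦ : ∀ i x, Φ (i + 1) x ⊆ Φ i x) {M : ℕ} (hM : ∀ x, #(Φ 0 x) ≤ M) {I : ℕ} (hI : 0 < I) :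
    ∃ i < I, I * #{x ∈ X | Φ i x ≠ Φ (i + 1) x} ≤ M * #X := by
  by_contra! h
  have hle : ∑ i ∈ range I, #{x ∈ X | Φ i x ≠ Φ (i + 1) x} ≤ M * #X := by
    simp_rw [card_filter]
    rw [sum_comm, mul_comm]
    refine sum_le_card_nsmul _ _ _ fun x _ => ?_
    rw [← card_filter]
    exact (Nat.le_of_add_right_le (card_ne_succ_add_card_le (fun i => hΦ i x) I)).trans (hM x)
  have hlt : ∑ _i ∈ range I, M * #X < ∑ i ∈ range I, I * #{x ∈ X | Φ i x ≠ Φ (i + 1) x} :=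
    sum_lt_sum_of_nonempty ⟨0, mem_range.2 hI⟩ fun i hi => h i (mem_range.1 hi)
  rw [sum_const, card_range, smul_eq_mul, ← mul_sum] at hlt
  exact absurd hle (not_le.2 (lt_of_mul_lt_mul_left hlt (Nat.zero_le _)))

end Combinatorics

section QuaternaryCells

/-- The index of the quaternary interval of length `4⁻ᵏ` containing `u`. -/
noncomputable def quadCell (k : ℕ) (u : ℝ) : ℤ := ⌊(4 : ℝ) ^ k * u⌋

theorem quadCell_add_ediv (k l : ℕ) (u : ℝ) : quadCell (k + l) u / 4 ^ l = quadCell k u := by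
  have h := Int.natCast_mul_floor_div_cancel (n := 4 ^ l) (by positivity) ((4 : ℝ) ^ k * u)
  rw [quadCell, quadCell, ← h, pow_add, mul_comm (4 ^ k : ℝ), mul_assoc]
  push_cast
  rfl

theorem isRefining_quadCell : IsRefining quadCell := by
  intro k l u v h huv
  obtain ⟨d, rfl⟩ := Nat.exists_eq_add_of_le h
  rw [← quadCell_add_ediv k d u, ← quadCell_add_ediv k d v, huv]

theorem abs_sub_le_of_quadCell_eq {k : ℕ} {u v : ℝ} (h : quadCell k u = quadCell k v) :
    |u - v| ≤ ((4 : ℝ) ^ k)⁻¹ := by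
  have h4 : (0 : ℝ) < 4 ^ k := by positivity
  have habs := Int.abs_sub_lt_one_of_floor_eq_floor h
  rw [← mul_sub, abs_mul, abs_of_pos h4] at habs
  rw [← one_div, le_div_iff₀ h4]
  linarith

theorem add_inv_le_of_quadCell_add_two_le {k : ℕ} {u v : ℝ}
    (h : quadCell k u + 2 ≤ quadCell k v) : u + ((4 : ℝ) ^ k)⁻¹ ≤ v := by
  have h4 : (0 : ℝ) < 4 ^ k := by positivity
  have hu := Int.lt_floor_add_one ((4 : ℝ) ^ k * u)
  have hv := Int.floor_le ((4 : ℝ) ^ k * v)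
  have h' : (quadCell k u : ℝ) + 2 ≤ quadCell k v := by exact_mod_cast h
  unfold quadCell at h'
  refine le_of_mul_le_mul_left ?_ h4
  rw [mul_add, mul_inv_cancel₀ h4.ne']
  linarith

open scoped Classical in
/-- The cells of level `k + l` inside the cell `a` of level `k` that meet `K`. -/
noncomputable def descendants (K : Set ℝ) (k l : ℕ) (a : ℤ) : Finset ℤ :=
  {b ∈ Finset.Ico (a * 4 ^ l) ((a + 1) * 4 ^ l) | ∃ u ∈ K, quadCell (k + l) u = b}

theorem mem_descendants {K : Set ℝ} {k l : ℕ} {a b : ℤ} :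
    b ∈ descendants K k l a ↔ ∃ u ∈ K, quadCell k u = a ∧ quadCell (k + l) u = b := by
  have h4 : (0 : ℤ) < 4 ^ l := by positivity
  have hIco : a * 4 ^ l ≤ b ∧ b < (a + 1) * 4 ^ l ↔ b / 4 ^ l = a := by
    rw [← Int.le_ediv_iff_mul_le h4, ← Int.ediv_lt_iff_lt_mul h4]
    omega
  simp only [descendants, Finset.mem_filter, Finset.mem_Ico, hIco]
  constructor
  · rintro ⟨rfl, u, hu, rfl⟩
    exact ⟨u, hu, (quadCell_add_ediv k l u).symm, rfl⟩
  · rintro ⟨u, hu, rfl, rfl⟩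
    exact ⟨quadCell_add_ediv k l u, u, hu, rfl⟩

/-- At all sufficiently fine levels every cell has at most `4 ^ (θ l)` descendants meeting `K`
after `l` generations. -/
def CellGrowthLE (K : Set ℝ) (θ : ℝ) (l : ℕ) : Prop :=
  ∃ J, ∀ k ≥ J, ∀ a, ((descendants K k l a).card : ℝ) ≤ (4 : ℝ) ^ (θ * l)

variable {K : Set ℝ} {θ : ℝ} {l : ℕ}

theorem descendants_add_subset (k l m : ℕ) (a : ℤ) :
    descendants K k (l + m) a ⊆
      (descendants K k l a).biUnion fun b => descendants K (k + l) m b := by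
  intro c hc
  obtain ⟨u, hu, rfl, rfl⟩ := mem_descendants.1 hc
  simp only [Finset.mem_biUnion, mem_descendants]
  exact ⟨_, ⟨u, hu, rfl, rfl⟩, u, hu, rfl, by rw [add_assoc]⟩

theorem card_descendants_mul_le {J : ℕ}
    (h : ∀ k ≥ J, ∀ a, ((descendants K k l a).card : ℝ) ≤ (4 : ℝ) ^ (θ * l)) (q : ℕ) {k : ℕ}
    (hk : J ≤ k) (a : ℤ) :
    ((descendants K k (l * q) a).card : ℝ) ≤ (4 : ℝ) ^ (θ * (l * q : ℕ)) := by
  induction q with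
  | zero =>
    have hcard : (descendants K k 0 a).card ≤ 1 := by
      refine Finset.card_le_one.2 fun b hb c hc => ?_
      obtain ⟨u, -, rfl, rfl⟩ := mem_descendants.1 hb
      obtain ⟨v, -, huv, rfl⟩ := mem_descendants.1 hc
      exact huv.symm
    simpa using hcard
  | succ q ih =>
    have hcard := (Finset.card_le_card (descendants_add_subset (K := K) k (l * q) l a)).trans
      Finset.card_biUnion_le
    calc ((descendants K k (l * (q + 1)) a).card : ℝ)
        ≤ ∑ b ∈ descendants K k (l * q) a, ((descendants K (k + l * q) l b).card : ℝ) := by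
          rw [mul_add_one]; exact_mod_cast hcard
      _ ≤ ∑ _b ∈ descendants K k (l * q) a, (4 : ℝ) ^ (θ * l) :=
          Finset.sum_le_sum fun b _ => h _ (by omega) b
      _ ≤ (4 : ℝ) ^ (θ * (l * q : ℕ)) * (4 : ℝ) ^ (θ * l) := by
          rw [Finset.sum_const, nsmul_eq_mul]
          gcongr
      _ = (4 : ℝ) ^ (θ * (l * (q + 1) : ℕ)) := by
          rw [← Real.rpow_add (by norm_num)]
          push_cast
          ring_nf

theorem CellGrowthLE.mul (h : CellGrowthLE K θ l) (q : ℕ) : CellGrowthLE K θ (l * q) := by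
  obtain ⟨J, hJ⟩ := h
  exact ⟨J, fun k hk a => card_descendants_mul_le hJ q hk a⟩

theorem cellGrowthLE_one (K : Set ℝ) : CellGrowthLE K 1 1 := by
  classical
  refine ⟨0, fun k _ a => ?_⟩
  have hcard : (descendants K k 1 a).card ≤ 4 := by
    refine (Finset.card_filter_le _ _).trans ?_
    rw [Int.card_Ico]
    omega
  rw [Nat.cast_one, mul_one, Real.rpow_one]
  exact_mod_cast hcard

open Filter Topology MeasureTheory

theorem tendsto_ofReal_inv_four_pow (J : ℕ) (hl : 0 < l) :
    Tendsto (fun i : ℕ => ENNReal.ofReal (((4 : ℝ) ^ (J + l * i))⁻¹)) atTop (𝓝 0) := by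
  rw [← ENNReal.ofReal_zero]
  refine ENNReal.tendsto_ofReal (Tendsto.inv_tendsto_atTop ?_)
  refine (tendsto_pow_atTop_atTop_of_one_lt (by norm_num : (1 : ℝ) < 4)).comp ?_
  refine tendsto_atTop_mono (fun i => ?_) tendsto_id
  exact (Nat.le_mul_of_pos_left i hl).trans (Nat.le_add_left _ _)

theorem ediam_quadCell_fibre_le (k : ℕ) (b : ℤ) :
    Metric.ediam {u : ℝ | quadCell k u = b} ≤ ENNReal.ofReal ((4 : ℝ) ^ k)⁻¹ :=
  Metric.ediam_le_of_forall_dist_le fun x (hx : _ = _) y (hy : _ = _) =>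
    (Real.dist_eq x y).trans_le (abs_sub_le_of_quadCell_eq (hx.trans hy.symm))

theorem sum_ediam_rpow_le_one (hθ : 0 < θ) {J n : ℕ} {G : Finset ℤ}
    (hG : (G.card : ℝ) ≤ (4 : ℝ) ^ (θ * n)) :
    ∑ c : G, Metric.ediam {u : ℝ | quadCell (J + n) u = c} ^ θ ≤ 1 := by
  have h4 : (0 : ℝ) < 4 ^ (J + n) := by positivity
  calc ∑ c : G, Metric.ediam {u : ℝ | quadCell (J + n) u = c} ^ θ
      ≤ ∑ _c : G, ENNReal.ofReal ((((4 : ℝ) ^ (J + n))⁻¹) ^ θ) := by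
        refine Finset.sum_le_sum fun c _ => ?_
        rw [← ENNReal.ofReal_rpow_of_pos (by positivity)]
        exact ENNReal.rpow_le_rpow (ediam_quadCell_fibre_le _ _) hθ.le
    _ = ENNReal.ofReal (G.card * (((4 : ℝ) ^ (J + n))⁻¹) ^ θ) := by
        rw [Finset.sum_const, nsmul_eq_mul, ENNReal.ofReal_mul (Nat.cast_nonneg _),
          ENNReal.ofReal_natCast, Finset.card_univ, Fintype.card_coe]
    _ ≤ 1 := by
        rw [ENNReal.ofReal_le_one, Real.inv_rpow h4.le, ← div_eq_mul_inv,
          div_le_one (by positivity)]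
        refine hG.trans ?_
        rw [← Real.rpow_natCast, ← Real.rpow_mul (by norm_num), mul_comm]
        gcongr
        · norm_num
        · omega

theorem CellGrowthLE.dimH_le (h : CellGrowthLE K θ l) (hθ : 0 < θ) (hl : 0 < l) :
    dimH K ≤ ENNReal.ofReal θ := by
  obtain ⟨J, hJ⟩ := h
  have hcells : K = ⋃ a : ℤ, {u ∈ K | quadCell J u = a} := by
    ext u; simp
  rw [hcells, dimH_iUnion]
  refine iSup_le fun a => ?_
  have hmeasure : μH[θ] {u ∈ K | quadCell J u = a} ≤ 1 := by
    refine (Measure.hausdorffMeasure_le_liminf_sum (l := atTop) θ _ _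
      (tendsto_ofReal_inv_four_pow J hl)
      (fun i (c : descendants K J (l * i) a) => {u | quadCell (J + l * i) u = c})
      (Eventually.of_forall fun i c => ediam_quadCell_fibre_le _ _)
      (Eventually.of_forall fun i u hu => ?_)).trans ?_
    · simp only [Set.mem_iUnion]
      exact ⟨⟨_, mem_descendants.2 ⟨u, hu.1, hu.2, rfl⟩⟩, rfl⟩
    · refine liminf_le_of_le (by isBoundedDefault) fun b hb => ?_
      obtain ⟨i, hi⟩ := hb.exists
      exact hi.trans (sum_ediam_rpow_le_one hθ (card_descendants_mul_le hJ i le_rfl a))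
  have hdim : dimH {u ∈ K | quadCell J u = a} ≤ (θ.toNNReal : ENNReal) := by
    apply dimH_le_of_hausdorffMeasure_ne_top
    rw [Real.coe_toNNReal θ hθ.le]
    exact ne_top_of_le_ne_top ENNReal.one_ne_top hmeasure
  exact hdim

end QuaternaryCells

section Entropy

open Finset

variable {α β : Type*} [DecidableEq β]

theorem sum_inv_card_fibre_mul (D : Finset α) (χ : α → β) (y : β → ℝ) :
    ∑ s ∈ D, y (χ s) / #{u ∈ D | χ u = χ s} = ∑ c ∈ D.image χ, y c := by
  rw [← sum_fiberwise_of_maps_to fun s hs => mem_image_of_mem χ hs]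
  refine sum_congr rfl fun c hc => ?_
  obtain ⟨s, hs, rfl⟩ := mem_image.1 hc
  have hcard : (#{u ∈ D | χ u = χ s} : ℝ) ≠ 0 := by
    exact_mod_cast (card_pos.2 ⟨s, (mem_filter.2 ⟨hs, rfl⟩ : s ∈ {u ∈ D | χ u = χ s})⟩).ne'
  rw [sum_congr rfl fun t ht => by rw [(mem_filter.1 ht).2], sum_const, nsmul_eq_mul,
    mul_div_cancel₀ _ hcard]

/-- Gibbs' inequality for the partition of `D` into the fibres of `χ`. -/
theorem sum_log_card_div_card_fibre_le (D : Finset α) (χ : α → β) {y : β → ℝ}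
    (hy : ∀ c, 0 < y c) :
    ∑ s ∈ D, Real.log ((#D : ℝ) / #{u ∈ D | χ u = χ s}) ≤
      ∑ s ∈ D, (Real.log (y (χ s)) - 1) + #D * ∑ c ∈ D.image χ, (y c)⁻¹ := by
  rw [← sum_inv_card_fibre_mul D χ fun c => (y c)⁻¹, mul_sum, ← sum_add_distrib]
  refine sum_le_sum fun s hs => ?_
  have hD : (0 : ℝ) < #D := by exact_mod_cast card_pos.2 ⟨s, hs⟩
  have hfibre : (0 : ℝ) < #{u ∈ D | χ u = χ s} := by
    exact_mod_cast card_pos.2 ⟨s, (mem_filter.2 ⟨hs, rfl⟩ : s ∈ {u ∈ D | χ u = χ s})⟩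
  have hlog := Real.log_le_sub_one_of_pos
    (show 0 < (#D : ℝ) / #{u ∈ D | χ u = χ s} / y (χ s) from
      div_pos (div_pos hD hfibre) (hy _))
  rw [Real.log_div (by positivity) (hy _).ne'] at hlog
  have hcomm : (#D : ℝ) / #{u ∈ D | χ u = χ s} / y (χ s) =
      #D * ((y (χ s))⁻¹ / #{u ∈ D | χ u = χ s}) := by ring
  linarith

theorem sum_log_card_div_card_fibre_le_mul {D : Finset α} {χ : α → β} {Λ : ℝ}
    (hΛ : (#(D.image χ) : ℝ) ≤ Real.exp Λ) :
    ∑ s ∈ D, Real.log ((#D : ℝ) / #{u ∈ D | χ u = χ s}) ≤ #D * Λ := by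
  have hgibbs := sum_log_card_div_card_fibre_le D χ fun _ => Real.exp_pos Λ
  simp only [sum_const, nsmul_eq_mul, Real.log_exp] at hgibbs
  have hsum : (#(D.image χ) : ℝ) * (Real.exp Λ)⁻¹ ≤ 1 := by
    rwa [← div_eq_mul_inv, div_le_one (Real.exp_pos _)]
  have hmul : (#D : ℝ) * (#(D.image χ) * (Real.exp Λ)⁻¹) ≤ #D * 1 := by gcongr
  linarith

theorem sum_inv_ite_mem_le_one {I T : Finset β} (hT : #T ≤ 4) {Y : ℝ} (hY : 0 < Y)
    (hI : #I ≤ Y) : ∑ c ∈ I, (if c ∈ T then (8 : ℝ) else 2 * Y)⁻¹ ≤ 1 := by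
  have hle : ∀ c ∈ I, (if c ∈ T then (8 : ℝ) else 2 * Y)⁻¹ ≤
      (if c ∈ T then (8 : ℝ)⁻¹ else 0) + (2 * Y)⁻¹ := by
    intro c _
    have : 0 < (2 * Y)⁻¹ := by positivity
    split_ifs <;> linarith
  refine (sum_le_sum hle).trans ?_
  rw [sum_add_distrib, ← sum_filter, sum_const, sum_const, nsmul_eq_mul, nsmul_eq_mul]
  have hmem : (#{c ∈ I | c ∈ T} : ℝ) ≤ 4 := by
    exact_mod_cast (card_le_card fun c hc => (mem_filter.1 hc).2).trans hT
  have hrest : (#I : ℝ) * (2 * Y)⁻¹ ≤ 1 / 2 := by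
    rw [← div_eq_mul_inv, div_le_iff₀ (by positivity)]
    linarith
  linarith

theorem sum_log_card_div_card_fibre_le_half_mul {D : Finset α} {χ : α → β} {Λ : ℝ}
    (hΛ : (#(D.image χ) : ℝ) ≤ Real.exp Λ) (hΛ6 : 6 ≤ Λ) {T : Finset β} (hT : #T ≤ 4)
    (hDT : 7 * #D ≤ 8 * #{u ∈ D | χ u ∈ T}) :
    ∑ s ∈ D, Real.log ((#D : ℝ) / #{u ∈ D | χ u = χ s}) ≤ #D * (Λ / 2) := by
  have hexp := Real.exp_pos Λ
  have hgibbs := sum_log_card_div_card_fibre_le D χ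
    (y := fun c => if c ∈ T then 8 else 2 * Real.exp Λ) fun c => by split_ifs <;> positivity
  have hlog8 : Real.log 8 = 3 * Real.log 2 := by
    rw [show (8 : ℝ) = 2 ^ 3 by norm_num, Real.log_pow]; norm_num
  have hlogΛ : Real.log (2 * Real.exp Λ) = Real.log 2 + Λ := by
    rw [Real.log_mul (by norm_num) hexp.ne', Real.log_exp]
  have hterm : ∀ s ∈ D, Real.log (if χ s ∈ T then (8 : ℝ) else 2 * Real.exp Λ) - 1 =
      (if χ s ∈ T then 2 * Real.log 2 - Λ else 0) + (Real.log 2 + Λ - 1) := by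
    intro s _
    split_ifs <;> linarith
  rw [sum_congr rfl hterm, sum_add_distrib, ← sum_filter, sum_const, sum_const, nsmul_eq_mul,
    nsmul_eq_mul] at hgibbs
  have hDT' : (7 : ℝ) * #D ≤ 8 * #{u ∈ D | χ u ∈ T} := by exact_mod_cast hDT
  have hinv : (#D : ℝ) * ∑ c ∈ D.image χ, (if c ∈ T then (8 : ℝ) else 2 * Real.exp Λ)⁻¹ ≤
      #D * 1 :=
    mul_le_mul_of_nonneg_left (sum_inv_ite_mem_le_one hT hexp hΛ) (Nat.cast_nonneg _)
  have hlog2 := Real.log_two_lt_d9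
  have hD0 : (0 : ℝ) ≤ #D := Nat.cast_nonneg _
  nlinarith [mul_nonneg hD0 (sub_nonneg.2 hΛ6)]

/-- Up to a proportion of one eighth, the points of `S` in the level `k` cell of `s` lie in at most
four cells of level `k + L`. -/
def CellConcentrated (π : ℕ → α → β) (S : Finset α) (k L : ℕ) (s : α) : Prop :=
  ∃ T : Finset β, #T ≤ 4 ∧ 7 * #(cell π S k s) ≤ 8 * #{u ∈ cell π S k s | π (k + L) u ∈ T}

variable {π : ℕ → α → β} {S : Finset α}

theorem cellConcentrated_congr {k L : ℕ} {s t : α} (h : π k t = π k s) :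
    CellConcentrated π S k L t ↔ CellConcentrated π S k L s := by
  simp only [CellConcentrated, cell_congr S h]

theorem cell_add_eq_filter_cell (hπ : IsRefining π) {k L : ℕ} {s t : α} (ht : π k t = π k s) :
    cell π S (k + L) t = {u ∈ cell π S k s | π (k + L) u = π (k + L) t} := by
  ext u
  simp only [mem_cell, mem_filter]
  exact ⟨fun h => ⟨⟨h.1, (hπ (Nat.le_add_right k L) h.2).trans ht⟩, h.2⟩, fun h => ⟨h.1.1, h.2⟩⟩

open scoped Classical in
theorem sum_log_card_cell_div_le (hπ : IsRefining π) (k L : ℕ) {Λ : ℝ} (hΛ6 : 6 ≤ Λ)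
    (hΛ : ∀ s ∈ S, (#((cell π S k s).image (π (k + L))) : ℝ) ≤ Real.exp Λ) :
    ∑ s ∈ S, Real.log ((#(cell π S k s) : ℝ) / #(cell π S (k + L) s)) ≤
      #S * Λ - #{s ∈ S | CellConcentrated π S k L s} * (Λ / 2) := by
  have hterm : ∀ s ∈ S, (if CellConcentrated π S k L s then Λ / 2 else Λ) =
      Λ - if CellConcentrated π S k L s then Λ / 2 else 0 := by
    intro s _; split_ifs <;> ring
  have hrhs : (#S * Λ - #{s ∈ S | CellConcentrated π S k L s} * (Λ / 2) : ℝ) =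
      ∑ s ∈ S, if CellConcentrated π S k L s then Λ / 2 else Λ := by
    rw [sum_congr rfl hterm, sum_sub_distrib, ← sum_filter, sum_const, sum_const, nsmul_eq_mul,
      nsmul_eq_mul]
  have hmaps : ∀ s ∈ S, π k s ∈ S.image (π k) := fun s hs => mem_image_of_mem _ hs
  rw [hrhs, ← sum_fiberwise_of_maps_to hmaps, ← sum_fiberwise_of_maps_to hmaps]
  refine sum_le_sum fun c hc => ?_
  obtain ⟨s, hs, rfl⟩ := mem_image.1 hc
  change ∑ t ∈ cell π S k s, _ ≤ ∑ t ∈ cell π S k s, _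
  have hlhs : ∀ t ∈ cell π S k s,
      Real.log ((#(cell π S k t) : ℝ) / #(cell π S (k + L) t)) = Real.log
        ((#(cell π S k s) : ℝ) / #{u ∈ cell π S k s | π (k + L) u = π (k + L) t}) := by
    intro t ht
    have ht := (mem_cell.1 ht).2
    rw [cell_congr S ht, cell_add_eq_filter_cell hπ ht]
  have hconst : ∀ t ∈ cell π S k s, (if CellConcentrated π S k L t then Λ / 2 else Λ) =
      if CellConcentrated π S k L s then Λ / 2 else Λ := by
    intro t ht
    simp only [cellConcentrated_congr (mem_cell.1 ht).2]
  rw [sum_congr rfl hlhs, sum_congr rfl hconst, sum_const, nsmul_eq_mul]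
  split_ifs with hconc
  · obtain ⟨T, hT, hDT⟩ := hconc
    exact sum_log_card_div_card_fibre_le_half_mul (hΛ s hs) hΛ6 hT hDT
  · exact sum_log_card_div_card_fibre_le_mul (hΛ s hs)

theorem sum_range_log_card_cell_div {k₀ L H : ℕ} {s : α} (hs : s ∈ S)
    (hroot : ∀ u ∈ S, π k₀ u = π k₀ s) (hinj : Set.InjOn (π (k₀ + L * H)) S) :
    ∑ j ∈ range H,
      Real.log ((#(cell π S (k₀ + L * j) s) : ℝ) / #(cell π S (k₀ + L * j + L) s)) =
      Real.log #S := by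
  have hpos : ∀ k, (#(cell π S k s) : ℝ) ≠ 0 := fun k => by
    exact_mod_cast (card_pos.2 ⟨s, self_mem_cell hs k⟩).ne'
  have hstep : ∀ j ∈ range H,
      Real.log ((#(cell π S (k₀ + L * j) s) : ℝ) / #(cell π S (k₀ + L * j + L) s)) =
        Real.log #(cell π S (k₀ + L * j) s) - Real.log #(cell π S (k₀ + L * (j + 1)) s) := by
    intro j _
    rw [Real.log_div (hpos _) (hpos _), mul_add_one, add_assoc]
  have hfirst : cell π S k₀ s = S := filter_true_of_mem hroot
  have hlast : cell π S (k₀ + L * H) s = {s} := by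
    ext u
    rw [mem_cell, mem_singleton]
    exact ⟨fun h => hinj h.1 hs h.2, by rintro rfl; exact ⟨hs, rfl⟩⟩
  rw [sum_congr rfl hstep, sum_range_sub' fun j => Real.log #(cell π S (k₀ + L * j) s), hlast,
    mul_zero, add_zero, hfirst, card_singleton, Nat.cast_one, Real.log_one, sub_zero]

open scoped Classical in
theorem card_mul_log_card_le (hπ : IsRefining π) {k₀ L H : ℕ} {Λ : ℝ} (hΛ6 : 6 ≤ Λ)
    (hroot : ∀ u ∈ S, ∀ v ∈ S, π k₀ u = π k₀ v) (hinj : Set.InjOn (π (k₀ + L * H)) S)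
    (hΛ : ∀ k ≥ k₀, ∀ s ∈ S, (#((cell π S k s).image (π (k + L))) : ℝ) ≤ Real.exp Λ) :
    #S * Real.log #S ≤ #S * H * Λ -
      #{x ∈ S ×ˢ range H | CellConcentrated π S (k₀ + L * x.2) L x.1} * (Λ / 2) :=
  calc #S * Real.log #S = ∑ _s ∈ S, Real.log #S := by rw [sum_const, nsmul_eq_mul]
    _ = ∑ j ∈ range H, ∑ s ∈ S,
        Real.log ((#(cell π S (k₀ + L * j) s) : ℝ) / #(cell π S (k₀ + L * j + L) s)) := by
        rw [sum_comm]
        exact sum_congr rfl fun s hs =>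
          (sum_range_log_card_cell_div hs (fun u hu => hroot u hu s hs) hinj).symm
    _ ≤ ∑ j ∈ range H,
        (#S * Λ - #{s ∈ S | CellConcentrated π S (k₀ + L * j) L s} * (Λ / 2)) :=
        sum_le_sum fun j _ => sum_log_card_cell_div_le hπ _ L hΛ6 (hΛ _ (by omega))
    _ = _ := by
        rw [sum_sub_distrib, card_filter_product_right, Nat.cast_sum, sum_mul, sum_const,
          card_range, nsmul_eq_mul]
        ring

open scoped Classical in
theorem mul_card_cellConcentrated_le (hπ : IsRefining π) {k₀ L H : ℕ} {Λ : ℝ} (hΛ6 : 6 ≤ Λ)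
    (hroot : ∀ u ∈ S, ∀ v ∈ S, π k₀ u = π k₀ v) (hinj : Set.InjOn (π (k₀ + L * H)) S)
    (hΛ : ∀ k ≥ k₀, ∀ s ∈ S, (#((cell π S k s).image (π (k + L))) : ℝ) ≤ Real.exp Λ)
    (hS : (1 - 1 / 800) * (H * Λ) ≤ Real.log #S) :
    400 * #{x ∈ S ×ˢ range H | CellConcentrated π S (k₀ + L * x.2) L x.1} ≤ #S * H := by
  have hentropy := card_mul_log_card_le hπ hΛ6 hroot hinj hΛ
  have hmul : (#S : ℝ) * ((1 - 1 / 800) * (H * Λ)) ≤ #S * Real.log #S := by gcongr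
  have hle : (400 * #{x ∈ S ×ˢ range H | CellConcentrated π S (k₀ + L * x.2) L x.1} : ℝ) * Λ ≤
      #S * H * Λ := by nlinarith
  exact_mod_cast le_of_mul_le_mul_right hle (by linarith)

end Entropy

section BranchingSample

open Finset

variable {K : Set ℝ}

theorem exists_cellGrowthLE_and_forall_not (hK : dimH K ≠ 0) {ε : ℝ} (hε : 0 < ε)
    (hε1 : ε < 1) (M : ℝ) :
    ∃ θ > 0, (∃ l : ℕ, 0 < l ∧ M ≤ θ * l ∧ CellGrowthLE K θ l) ∧
      ∀ l : ℕ, 0 < l → ¬ CellGrowthLE K ((1 - ε) * θ) l := by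
  set Θ : Set ℝ := {θ | 0 < θ ∧ ∃ l > 0, CellGrowthLE K θ l}
  have hne : Θ.Nonempty := ⟨1, one_pos, 1, one_pos, cellGrowthLE_one K⟩
  have hbdd : BddBelow Θ := ⟨0, fun θ hθ => hθ.1.le⟩
  have hpos : 0 < sInf Θ := by
    obtain ⟨r, hr0, hr⟩ := ENNReal.lt_iff_exists_nnreal_btwn.1 (pos_iff_ne_zero.2 hK)
    refine lt_of_lt_of_le (show (0 : ℝ) < r by exact_mod_cast hr0) (le_csInf hne ?_)
    rintro θ ⟨hθ, l, hl, hgrowth⟩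
    have hlt := hr.trans_le (hgrowth.dimH_le hθ hl)
    rw [← ENNReal.ofReal_coe_nnreal, ENNReal.ofReal_lt_ofReal_iff hθ] at hlt
    exact hlt.le
  obtain ⟨θ, ⟨hθ, l, hl, hgrowth⟩, hlt⟩ := exists_lt_of_csInf_lt hne
    (show sInf Θ < sInf Θ / (1 - ε) by rw [lt_div_iff₀ (by linarith)]; nlinarith)
  obtain ⟨q, hq⟩ := exists_nat_gt (M / θ)
  rw [div_lt_iff₀ hθ] at hq
  have hl1 : (1 : ℝ) ≤ l := by exact_mod_cast hl
  have hM : M ≤ θ * (l * (q + 1) : ℕ) :=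
    calc M ≤ q * θ := hq.le
      _ ≤ θ * (l * (q + 1) : ℕ) := by
        push_cast
        nlinarith [mul_nonneg hθ.le (Nat.cast_nonneg (α := ℝ) q)]
  refine ⟨θ, hθ, ⟨l * (q + 1), Nat.mul_pos hl q.succ_pos, hM, hgrowth.mul _⟩, fun l hl h => ?_⟩
  rw [lt_div_iff₀ (by linarith), mul_comm] at hlt
  exact notMem_of_lt_csInf hlt hbdd ⟨mul_pos (by linarith) hθ, l, hl, h⟩

theorem exists_finset_card_eq_card_descendants (K : Set ℝ) (k l : ℕ) (a : ℤ) :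
    ∃ S : Finset ℝ, (S : Set ℝ) ⊆ K ∧ (∀ u ∈ S, quadCell k u = a) ∧
      Set.InjOn (quadCell (k + l)) S ∧ #S = #(descendants K k l a) := by
  obtain ⟨S, hSK, hinj, himage⟩ := exists_subset_injOn_image_eq_of_surjOn
    (f := quadCell (k + l)) {u ∈ K | quadCell k u = a} (descendants K k l a) (by
      intro b hb
      obtain ⟨u, hu, ha, hb⟩ := mem_descendants.1 hb
      exact ⟨u, ⟨hu, ha⟩, hb⟩)
  exact ⟨S, fun u hu => (hSK hu).1, fun u hu => (hSK hu).2, hinj,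
    by rw [← himage, card_image_of_injOn hinj]⟩

theorem image_cell_subset_descendants {S : Finset ℝ} (hS : (S : Set ℝ) ⊆ K) (k L : ℕ) (s : ℝ) :
    (cell quadCell S k s).image (quadCell (k + L)) ⊆ descendants K k L (quadCell k s) := by
  intro b hb
  obtain ⟨u, hu, rfl⟩ := mem_image.1 hb
  exact mem_descendants.2 ⟨u, hS (mem_cell.1 hu).1, (mem_cell.1 hu).2, rfl⟩

open scoped Classical in
theorem exists_branching_sample (hK : dimH K ≠ 0) :
    ∃ L > 0, ∀ J, ∀ H > 0, ∃ k₀ ≥ J, ∃ S : Finset ℝ, S.Nonempty ∧ (S : Set ℝ) ⊆ K ∧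
      400 * #{x ∈ S ×ˢ range H | CellConcentrated quadCell S (k₀ + L * x.2) L x.1} ≤
        #S * H := by
  obtain ⟨θ, -, ⟨L, hL, hL6, J₁, hJ₁⟩, hnot⟩ :=
    exists_cellGrowthLE_and_forall_not hK (show (0 : ℝ) < 1 / 800 by norm_num) (by norm_num) 6
  refine ⟨L, hL, fun J H hH => ?_⟩
  obtain ⟨k₀, hk₀, a, hcard⟩ : ∃ k₀ ≥ max J J₁, ∃ a,
      (4 : ℝ) ^ ((1 - 1 / 800) * θ * (L * H : ℕ)) < #(descendants K k₀ (L * H) a) := by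
    have hmany := hnot (L * H) (Nat.mul_pos hL hH)
    simp only [CellGrowthLE] at hmany
    push Not at hmany
    exact hmany (max J J₁)
  obtain ⟨S, hSK, hroot, hinj, hScard⟩ := exists_finset_card_eq_card_descendants K k₀ (L * H) a
  rw [← hScard] at hcard
  have hpos : (0 : ℝ) < (4 : ℝ) ^ ((1 - 1 / 800) * θ * (L * H : ℕ)) := by positivity
  have hSne : S.Nonempty := card_pos.1 (by exact_mod_cast hpos.trans hcard)
  refine ⟨k₀, (le_max_left _ _).trans hk₀, S, hSne, hSK, ?_⟩
  have hlog4 : 1 < Real.log 4 := by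
    rw [Real.lt_log_iff_exp_lt (by norm_num)]
    linarith [Real.exp_one_lt_d9]
  refine mul_card_cellConcentrated_le (Λ := Real.log 4 * (θ * L)) isRefining_quadCell
    (by nlinarith) (fun u hu v hv => (hroot u hu).trans (hroot v hv).symm) hinj
    (fun k hk s _ => ?_) ?_
  · have hsub := card_le_card (image_cell_subset_descendants hSK k L s)
    refine (Nat.cast_le.2 hsub).trans ((hJ₁ k (by omega) _).trans ?_)
    rw [Real.rpow_def_of_pos (by norm_num)]
  · have hlog := Real.log_le_log hpos hcard.le
    rw [Real.log_rpow (by norm_num)] at hlog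
    refine le_trans (le_of_eq ?_) hlog
    push_cast
    ring

end BranchingSample

section RenormalisedLattices

/-- The real numbers all of whose multiples `p ^ (2 n) * u` are badly approximable with the same
constant `c`. -/
def uniformlyBadlyApproximable (p : ℕ) (c : ℝ) : Set ℝ :=
  {u | ∀ (n : ℕ) (q m : ℤ), q ≠ 0 → c ≤ |(q : ℝ)| * |(p : ℝ) ^ (2 * n) * q * u - m|}

/-- First coordinate of the vector with integral coordinates `(q, m)` in the lattice of
`p ^ (2 n) * v` renormalised at scale `e`; it depends neither on `v` nor on `m`. -/
noncomputable def latX (p : ℕ) (e : ℝ) (n : ℕ) (q : ℤ) : ℝ := (p : ℝ) ^ n * q / e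

/-- Second coordinate of the vector with integral coordinates `(q, m)` in the lattice of
`p ^ (2 n) * v` renormalised at scale `e`. -/
noncomputable def latY (p : ℕ) (e v : ℝ) (n : ℕ) (q m : ℤ) : ℝ :=
  e * ((p : ℝ) ^ n * q * v - m / (p : ℝ) ^ n)

/-- The lattices of `v` at scale `e` and times `n, …, n + R` have no nonzero vector in the box of
size `R` with product of coordinates less than `κ`: a version of bad approximability that sees
only finitely many times and vectors. -/
def LatGood (p R : ℕ) (κ e : ℝ) (n : ℕ) (v : ℝ) : Prop :=
  ∀ k ≤ R, ∀ q m : ℤ, (q ≠ 0 ∨ m ≠ 0) → |latX p e (n + k) q| ≤ R →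
    |latY p e v (n + k) q m| ≤ R → κ ≤ |latX p e (n + k) q * latY p e v (n + k) q m|

theorem LatGood.mono {p R R' : ℕ} {κ κ' e v : ℝ} {n : ℕ} (hR : R ≤ R') (hκ : κ ≤ κ')
    (h : LatGood p R' κ' e n v) : LatGood p R κ e n v := by
  intro k hk q m hqm hx hy
  have hRR : (R : ℝ) ≤ R' := by exact_mod_cast hR
  exact hκ.trans (h k (hk.trans hR) q m hqm (hx.trans hRR) (hy.trans hRR))

variable {p n : ℕ} {c e u : ℝ}

theorem latX_pos (hp : 0 < p) (he : 0 < e) (n : ℕ) {q : ℤ} (hq : 0 < q) : 0 < latX p e n q := by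
  have : (0 : ℝ) < q := by exact_mod_cast hq
  unfold latX
  positivity

theorem latX_mul_latY (hp : 0 < p) (he : 0 < e) (v : ℝ) (n : ℕ) (q m : ℤ) :
    latX p e n q * latY p e v n q m = q * ((p : ℝ) ^ (2 * n) * q * v - m) := by
  unfold latX latY
  field_simp
  ring

theorem latX_mul_latY_sub_latX_mul_latY (hp : 0 < p) (he : 0 < e) (v : ℝ) (n : ℕ)
    (q₁ m₁ q₂ m₂ : ℤ) :
    latX p e n q₁ * latY p e v n q₂ m₂ - latX p e n q₂ * latY p e v n q₁ m₁ =
      q₂ * m₁ - q₁ * m₂ := by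
  unfold latX latY
  field_simp
  ring

theorem latY_add_div (he : 0 < e) (v t : ℝ) (n : ℕ) (q m : ℤ) :
    latY p e (v + t / e ^ 2) n q m = latY p e v n q m + t * latX p e n q := by
  unfold latX latY
  field_simp
  ring

theorem le_abs_latX_mul_latY (hp : 0 < p) (he : 0 < e) (hu : u ∈ uniformlyBadlyApproximable p c)
    (n : ℕ) {q : ℤ} (hq : q ≠ 0) (m : ℤ) : c ≤ |latX p e n q * latY p e u n q m| := by
  rw [latX_mul_latY hp he, abs_mul]
  exact hu n q m hq

theorem abs_latY_zero (he : 0 < e) (v : ℝ) (n : ℕ) (m : ℤ) :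
    |latY p e v n 0 m| = e * |(m : ℝ)| / (p : ℝ) ^ n := by
  simp only [latY, Int.cast_zero, mul_zero, zero_mul, zero_sub, abs_mul, abs_neg, abs_div,
    abs_of_pos he, abs_pow, Nat.abs_cast, mul_div_assoc]

theorem latGood_of_mem_uniformlyBadlyApproximable (hp : 0 < p) {R : ℕ}
    (he : R * (p : ℝ) ^ (n + R) < e) (hu : u ∈ uniformlyBadlyApproximable p c) :
    LatGood p R c e n u := by
  intro k hk q m hqm _ hy
  have he0 : 0 < e := lt_of_le_of_lt (by positivity) he
  refine le_abs_latX_mul_latY hp he0 hu _ (fun hq => hy.not_gt ?_) m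
  have hm : (1 : ℝ) ≤ |(m : ℝ)| := by exact_mod_cast Int.one_le_abs (hqm.resolve_left (· hq))
  have hp1 : (1 : ℝ) ≤ p := by exact_mod_cast hp
  rw [hq, abs_latY_zero he0, lt_div_iff₀ (by positivity)]
  calc (R : ℝ) * (p : ℝ) ^ (n + k) ≤ R * (p : ℝ) ^ (n + R) := by gcongr
    _ < e := he
    _ ≤ e * |(m : ℝ)| := le_mul_of_one_le_right he0.le hm

theorem exists_latX_le_abs_latY_le (hp : 0 < p) (he : (p : ℝ) ^ n ≤ e) {X : ℝ} (hX : 1 ≤ X)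
    (v : ℝ) : ∃ q m : ℤ, 0 < q ∧ latX p e n q ≤ X ∧ |latY p e v n q m| ≤ 1 / X := by
  have hpn : (0 : ℝ) < (p : ℝ) ^ n := by positivity
  have he0 : 0 < e := hpn.trans_le he
  have hQ : 0 < ⌊X * e / (p : ℝ) ^ n⌋₊ := by
    rw [Nat.floor_pos, le_div_iff₀ hpn, one_mul]
    exact he.trans (le_mul_of_one_le_left he0.le hX)
  obtain ⟨m, q, hq, hqQ, habs⟩ :=
    Real.exists_int_int_abs_mul_sub_le ((p : ℝ) ^ (2 * n) * v) hQ
  refine ⟨q, m, hq, ?_, ?_⟩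
  · have hqX : (q : ℝ) ≤ X * e / (p : ℝ) ^ n :=
      le_trans (by exact_mod_cast hqQ) (Nat.floor_le (by positivity))
    rw [le_div_iff₀ hpn] at hqX
    rw [latX, div_le_iff₀ he0]
    linarith
  · have hY : latY p e v n q m = e / (p : ℝ) ^ n * (q * ((p : ℝ) ^ (2 * n) * v) - m) := by
      unfold latY
      field_simp
      ring
    rw [hY, abs_mul, abs_of_pos (by positivity)]
    calc e / (p : ℝ) ^ n * |q * ((p : ℝ) ^ (2 * n) * v) - m|
        ≤ e / (p : ℝ) ^ n * (1 / (⌊X * e / (p : ℝ) ^ n⌋₊ + 1)) := by gcongr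
      _ ≤ e / (p : ℝ) ^ n * (1 / (X * e / (p : ℝ) ^ n)) := by
        gcongr
        exact (Nat.lt_floor_add_one _).le
      _ = 1 / X := by field_simp

theorem exists_le_latX_abs_latY_le (hp : 0 < p) (hc : 0 < c) (hc1 : c ≤ 1)
    (hu : u ∈ uniformlyBadlyApproximable p c) (he : (p : ℝ) ^ n ≤ e) {t₀ : ℝ}
    (ht₀ : |t₀| = 1 / 2) :
    ∃ q m : ℤ, q ≠ 0 ∧ c ≤ latX p e n q ∧ latX p e n q ≤ 4 / c ∧
      |latY p e (u + t₀ / e ^ 2) n q m| ≤ c / 4 := by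
  have he0 : 0 < e := lt_of_lt_of_le (by positivity) he
  have hX : 1 ≤ 4 / c := by rw [le_div_iff₀ hc]; linarith
  obtain ⟨q, m, hq, hx, hy⟩ := exists_latX_le_abs_latY_le hp he hX (u + t₀ / e ^ 2)
  have hy' : |latY p e (u + t₀ / e ^ 2) n q m| ≤ c / 4 := hy.trans_eq (by field_simp)
  have hx0 := latX_pos hp he0 n hq
  refine ⟨q, m, hq.ne', ?_, hx, hy'⟩
  have hbad := le_abs_latX_mul_latY hp he0 hu n hq.ne' m
  rw [← add_sub_cancel_right (latY p e u n q m) (t₀ * latX p e n q), ← latY_add_div he0, abs_mul,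
    abs_of_pos hx0] at hbad
  have hsub := abs_sub (latY p e (u + t₀ / e ^ 2) n q m) (t₀ * latX p e n q)
  rw [abs_mul, ht₀, abs_of_pos hx0] at hsub
  by_contra! hlt
  nlinarith

/-- By Dirichlet, some lattice vector at `u + t₀ / e ^ 2` is almost horizontal; moving the point
slightly makes it exactly horizontal. -/
theorem exists_gap (hp : 0 < p) (hc : 0 < c) (hc1 : c ≤ 1)
    (hu : u ∈ uniformlyBadlyApproximable p c) (he : (p : ℝ) ^ n ≤ e) {t₀ : ℝ}
    (ht₀ : |t₀| = 1 / 2) {R : ℕ} (hR : 4 / c ≤ R) {κ : ℝ} (hκ : c / 4 < κ) :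
    ∃ t₁, |t₁ - t₀| ≤ 1 / 4 ∧
      ∀ t, |t - t₁| < c ^ 3 / 64 → ¬ LatGood p R κ e n (u + t / e ^ 2) := by
  have he0 : 0 < e := lt_of_lt_of_le (by positivity) he
  obtain ⟨q, m, hq, hcx, hx, hy⟩ := exists_le_latX_abs_latY_le hp hc hc1 hu he ht₀
  have hx0 : 0 < latX p e n q := hc.trans_le hcx
  have hYt (t : ℝ) : latY p e (u + t / e ^ 2) n q m =
      (t - (t₀ - latY p e (u + t₀ / e ^ 2) n q m / latX p e n q)) * latX p e n q := by
    rw [latY_add_div he0, latY_add_div he0]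
    field_simp
    ring
  generalize latY p e (u + t₀ / e ^ 2) n q m = y at hy hYt
  refine ⟨t₀ - y / latX p e n q, ?_, fun t ht hgood => ?_⟩
  · rw [sub_sub_cancel_left, abs_neg, abs_div, abs_of_pos hx0, div_le_iff₀ hx0]
    linarith
  have hprod : |latX p e n q * latY p e (u + t / e ^ 2) n q m| ≤ c / 4 := by
    rw [hYt, abs_mul, abs_mul, abs_of_pos hx0]
    calc latX p e n q * (|t - (t₀ - y / latX p e n q)| * latX p e n q)
        ≤ 4 / c * (c ^ 3 / 64 * (4 / c)) := by gcongr
      _ = c / 4 := by field_simp; norm_num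
  have hyR : |latY p e (u + t / e ^ 2) n q m| ≤ 4 / c := by
    rw [abs_mul, abs_of_pos hx0] at hprod
    have : c * |latY p e (u + t / e ^ 2) n q m| ≤ c / 4 :=
      (mul_le_mul_of_nonneg_right hcx (abs_nonneg _)).trans hprod
    rw [le_div_iff₀' hc]
    linarith
  have := hgood 0 (Nat.zero_le _) q m (Or.inl hq) (by
    rw [add_zero, abs_of_pos hx0]; exact hx.trans hR) (by rw [add_zero]; exact hyR.trans hR)
  rw [add_zero] at this
  linarith

theorem exists_isCoprime_latX_le_abs_latY_le (hp : 0 < p) (he : (p : ℝ) ^ n ≤ e) (v : ℝ) :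
    ∃ q m : ℤ, 0 < q ∧ IsCoprime q m ∧ latX p e n q ≤ 1 ∧ |latY p e v n q m| ≤ 1 := by
  have he0 : 0 < e := lt_of_lt_of_le (by positivity) he
  obtain ⟨q, m, hq, hx, hy⟩ := exists_latX_le_abs_latY_le hp he le_rfl v
  have hgcd : 0 < Int.gcd q m := Int.gcd_pos_of_ne_zero_left m hq.ne'
  obtain ⟨a, b, hab, hqa, hmb⟩ := Int.exists_gcd_one hgcd
  generalize Int.gcd q m = g at hgcd hqa hmb
  have hg : (1 : ℝ) ≤ g := by exact_mod_cast hgcd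
  have ha : 0 < a := pos_of_mul_pos_left (hqa ▸ hq) (Int.natCast_nonneg g)
  have hX : latX p e n q = g * latX p e n a := by rw [hqa]; unfold latX; push_cast; ring
  have hY : latY p e v n q m = g * latY p e v n a b := by
    rw [hqa, hmb]; unfold latY; push_cast; ring
  rw [hX] at hx
  rw [hY, abs_mul, Nat.abs_cast, div_one] at hy
  exact ⟨a, b, ha, Int.isCoprime_iff_gcd_eq_one.2 hab,
    (le_mul_of_one_le_left (latX_pos hp he0 n ha).le hg).trans hx,
    (le_mul_of_one_le_left (abs_nonneg _) hg).trans hy⟩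

theorem exists_sub_eq_one_of_isCoprime {q₁ m₁ : ℤ} (hq₁ : 0 < q₁) (h : IsCoprime q₁ m₁) :
    ∃ q₂ m₂ : ℤ, 0 ≤ q₂ ∧ q₂ < q₁ ∧ q₂ * m₁ - q₁ * m₂ = 1 := by
  obtain ⟨a, b, hab⟩ := h
  refine ⟨b % q₁, -a - m₁ * (b / q₁), Int.emod_nonneg _ hq₁.ne', Int.emod_lt_of_pos _ hq₁, ?_⟩
  linear_combination hab + m₁ * Int.emod_add_mul_ediv b q₁

theorem exists_reduced_basis (hp : 0 < p) (hc : 0 < c)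
    (hu : u ∈ uniformlyBadlyApproximable p c) (he : (p : ℝ) ^ n ≤ e) :
    ∃ q₁ m₁ q₂ m₂ : ℤ, q₂ * m₁ - q₁ * m₂ = 1 ∧ |latX p e n q₁| ≤ 1 ∧ |latY p e u n q₁ m₁| ≤ 1 ∧
      |latX p e n q₂| ≤ 1 ∧ |latY p e u n q₂ m₂| ≤ 2 / c := by
  have he0 : 0 < e := lt_of_lt_of_le (by positivity) he
  obtain ⟨q₁, m₁, hq₁, hco, hx₁, hy₁⟩ := exists_isCoprime_latX_le_abs_latY_le hp he u
  obtain ⟨q₂, m₂, hq₂, hlt, hdet⟩ := exists_sub_eq_one_of_isCoprime hq₁ hco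
  have hx₁0 : 0 < latX p e n q₁ := latX_pos hp he0 n hq₁
  have hx₂0 : 0 ≤ latX p e n q₂ := by unfold latX; positivity
  have hx₂₁ : latX p e n q₂ ≤ latX p e n q₁ := by unfold latX; gcongr
  have hdetR : latX p e n q₁ * latY p e u n q₂ m₂ - latX p e n q₂ * latY p e u n q₁ m₁ = 1 := by
    rw [latX_mul_latY_sub_latX_mul_latY hp he0]
    exact_mod_cast hdet
  have hcx : c ≤ latX p e n q₁ := by
    have := le_abs_latX_mul_latY hp he0 hu n hq₁.ne' m₁
    rw [abs_mul, abs_of_pos hx₁0] at this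
    nlinarith
  refine ⟨q₁, m₁, q₂, m₂, hdet, by rwa [abs_of_pos hx₁0], hy₁,
    by rw [abs_of_nonneg hx₂0]; linarith, ?_⟩
  rw [le_div_iff₀' hc]
  calc c * |latY p e u n q₂ m₂| ≤ |latX p e n q₁ * latY p e u n q₂ m₂| := by
        rw [abs_mul, abs_of_pos hx₁0]
        gcongr
    _ = |1 + latX p e n q₂ * latY p e u n q₁ m₁| := by rw [← hdetR]; ring_nf
    _ ≤ 1 + |latX p e n q₂ * latY p e u n q₁ m₁| := (abs_add_le _ _).trans_eq (by rw [abs_one])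
    _ ≤ 2 := by
        rw [abs_mul, abs_of_nonneg hx₂0]
        linarith [mul_le_one₀ (hx₂₁.trans hx₁) (abs_nonneg _) hy₁]

end RenormalisedLattices

section Returns

open Matrix CongruenceSubgroup
open scoped MatrixGroups

/-- The real matrix comparing the lattices at times `n` and `n + d` when their bases differ by the
integral matrix `γ`. -/
noncomputable def returnMatrix (p n d : ℕ) (γ : SL(2, ℤ)) : Matrix (Fin 2) (Fin 2) ℝ :=
  !![γ 0 0 * (p : ℝ) ^ d, γ 0 1 / (p : ℝ) ^ (2 * n + d);
    γ 1 0 * (p : ℝ) ^ (2 * n + d), γ 1 1 / (p : ℝ) ^ d]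

/-- The displacement of `v` under `g`, at scale `e`: the upper right entry of `g` in the
renormalised coordinates at `v`. -/
def disp (g : Matrix (Fin 2) (Fin 2) ℝ) (e v : ℝ) : ℝ :=
  e ^ 2 * (g 1 0 * v ^ 2 + (g 0 0 - g 1 1) * v - g 0 1)

/-- The derivative of `v ↦ disp g e v / e ^ 2`. -/
def dispSlope (g : Matrix (Fin 2) (Fin 2) ℝ) (v : ℝ) : ℝ := g 0 0 - g 1 1 + 2 * v * g 1 0

/-- In the renormalised coordinates at `v`, where vectors are rows, the matrix `g` is
`!![1, disp g e v; 0, 1]` up to an error `η`. -/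
structure NearUnipotent (g : Matrix (Fin 2) (Fin 2) ℝ) (e v η : ℝ) : Prop where
  upperLeft : |g 0 0 + v * g 1 0 - 1| ≤ η
  lowerLeft : |g 1 0 / e ^ 2| ≤ η
  lowerRight : |g 1 1 - v * g 1 0 - 1| ≤ η

theorem det_returnMatrix {p : ℕ} (hp : 0 < p) (n d : ℕ) (γ : SL(2, ℤ)) :
    (returnMatrix p n d γ).det = 1 := by
  have h : (γ 0 0 : ℝ) * γ 1 1 - γ 0 1 * γ 1 0 = 1 := by
    exact_mod_cast (det_fin_two γ.1).symm.trans γ.2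
  rw [returnMatrix, det_fin_two_of, ← h]
  field_simp

variable {p : ℕ} {c e u : ℝ}

theorem latX_return (hp : 0 < p) (he : 0 < e) (v : ℝ) (n d k : ℕ) {γ : SL(2, ℤ)} {f : ℤ}
    (hf : γ 1 0 = (p : ℤ) ^ (2 * k) * f) (q m : ℤ) :
    latX p e (n + (d + k)) (q * γ 0 0 + m * f) =
      latX p e (n + k) q * (returnMatrix p n d γ 0 0 + v * returnMatrix p n d γ 1 0) -
        latY p e v (n + k) q m * (returnMatrix p n d γ 1 0 / e ^ 2) := by
  simp only [returnMatrix, latX, latY, hf, of_apply, cons_val', cons_val_zero, cons_val_one,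
    cons_val_fin_one, Int.cast_add, Int.cast_mul, Int.cast_pow, Int.cast_natCast, pow_add,
    two_mul]
  field_simp
  ring

theorem latY_return (hp : 0 < p) (he : 0 < e) (v : ℝ) (n d k : ℕ) {γ : SL(2, ℤ)} {f : ℤ}
    (hf : γ 1 0 = (p : ℤ) ^ (2 * k) * f) (q m : ℤ) :
    latY p e v (n + (d + k)) (q * γ 0 0 + m * f) (q * γ 0 1 * (p : ℤ) ^ (2 * k) + m * γ 1 1) =
      latX p e (n + k) q * disp (returnMatrix p n d γ) e v +
        latY p e v (n + k) q m *
          (returnMatrix p n d γ 1 1 - v * returnMatrix p n d γ 1 0) := by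
  simp only [returnMatrix, disp, latX, latY, hf, of_apply, cons_val', cons_val_zero,
    cons_val_one, cons_val_fin_one, Int.cast_add, Int.cast_mul, Int.cast_pow, Int.cast_natCast,
    pow_add, two_mul]
  field_simp
  ring

/-- The renormalised coordinates of the lattice vectors with integral coordinates the rows of
`σ`. -/
noncomputable def latMatrix (p : ℕ) (e v : ℝ) (n : ℕ) (σ : SL(2, ℤ)) :
    Matrix (Fin 2) (Fin 2) ℝ :=
  of fun i => ![latX p e n (σ i 0), latY p e v n (σ i 0) (σ i 1)]

theorem latMatrix_mul_apply_zero (hp : 0 < p) (he : 0 < e) (v : ℝ) (n d : ℕ) (σ γ : SL(2, ℤ))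
    (i : Fin 2) :
    latMatrix p e v (n + d) (σ * γ) i 0 =
      latMatrix p e v n σ i 0 * (returnMatrix p n d γ 0 0 + v * returnMatrix p n d γ 1 0) -
        latMatrix p e v n σ i 1 * (returnMatrix p n d γ 1 0 / e ^ 2) := by
  have h : (σ * γ) i 0 = σ i 0 * γ 0 0 + σ i 1 * γ 1 0 := by
    rw [Matrix.SpecialLinearGroup.coe_mul, mul_apply, Fin.sum_univ_two]
  exact (congrArg _ h).trans (latX_return hp he v n d 0 (by simp) _ _)

theorem latMatrix_mul_apply_one (hp : 0 < p) (he : 0 < e) (v : ℝ) (n d : ℕ) (σ γ : SL(2, ℤ))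
    (i : Fin 2) :
    latMatrix p e v (n + d) (σ * γ) i 1 =
      latMatrix p e v n σ i 0 * disp (returnMatrix p n d γ) e v +
        latMatrix p e v n σ i 1 *
          (returnMatrix p n d γ 1 1 - v * returnMatrix p n d γ 1 0) := by
  have h (j : Fin 2) : (σ * γ) i j = σ i 0 * γ 0 j + σ i 1 * γ 1 j := by
    rw [Matrix.SpecialLinearGroup.coe_mul, mul_apply, Fin.sum_univ_two]
  refine Eq.trans ?_ (latY_return hp he v n d 0 (f := γ 1 0) (by simp) (σ i 0) (σ i 1))
  rw [mul_zero, pow_zero, mul_one, ← h, ← h]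
  rfl

theorem abs_mul_sub_mul_le {a b x y ε A : ℝ} (hx : |x| ≤ ε) (hy : |y| ≤ ε) (ha : |a| ≤ A)
    (hb : |b| ≤ A) : |a * x - b * y| ≤ 2 * A * ε := by
  have hA : 0 ≤ A := (abs_nonneg a).trans ha
  calc |a * x - b * y| ≤ |a * x| + |b * y| := abs_sub _ _
    _ = |a| * |x| + |b| * |y| := by rw [abs_mul, abs_mul]
    _ ≤ A * ε + A * ε := by gcongr
    _ = 2 * A * ε := by ring

theorem nearUnipotent_returnMatrix (hp : 0 < p) (he : 0 < e) {n d : ℕ} {σ γ : SL(2, ℤ)}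
    {A ε : ℝ} (hA : ∀ i j, |latMatrix p e u n σ i j| ≤ A)
    (hε : ∀ i j, |latMatrix p e u (n + d) (σ * γ) i j - latMatrix p e u n σ i j| ≤ ε) :
    NearUnipotent (returnMatrix p n d γ) e u (2 * A * ε) ∧
      |disp (returnMatrix p n d γ) e u| ≤ 2 * A * ε := by
  have hdet : latMatrix p e u n σ 0 1 * latMatrix p e u n σ 1 0 -
      latMatrix p e u n σ 0 0 * latMatrix p e u n σ 1 1 = 1 := by
    have hσ : (σ 0 0 * σ 1 1 - σ 0 1 * σ 1 0 : ℝ) = 1 := by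
      exact_mod_cast (det_fin_two σ.1).symm.trans σ.2
    have := latX_mul_latY_sub_latX_mul_latY hp he u n (σ 1 0) (σ 1 1) (σ 0 0) (σ 0 1)
    simp only [latMatrix, of_apply, cons_val_zero, cons_val_one]
    linear_combination this + hσ
  have hX := latMatrix_mul_apply_zero hp he u n d σ γ
  have hY := latMatrix_mul_apply_one hp he u n d σ γ
  have hεX {a b : ℝ} := abs_mul_sub_mul_le (a := a) (b := b) (A := A) (hε 1 0) (hε 0 0)
  have hεY {a b : ℝ} := abs_mul_sub_mul_le (a := a) (b := b) (A := A) (hε 1 1) (hε 0 1)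
  generalize latMatrix p e u (n + d) (σ * γ) = M' at *
  generalize latMatrix p e u n σ = M at *
  refine ⟨⟨(hεX (hA 0 1) (hA 1 1)).trans_eq' (congrArg _ ?_),
    (hεX (hA 0 0) (hA 1 0)).trans_eq' (congrArg _ ?_), ?_⟩,
    (hεY (hA 0 1) (hA 1 1)).trans_eq' (congrArg _ ?_)⟩
  · linear_combination M 0 1 * hX 1 - M 1 1 * hX 0 +
      (returnMatrix p n d γ 0 0 + u * returnMatrix p n d γ 1 0 - 1) * hdet
  · linear_combination M 0 0 * hX 1 - M 1 0 * hX 0 + returnMatrix p n d γ 1 0 / e ^ 2 * hdet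
  · rw [abs_sub_comm]
    refine (hεY (hA 0 0) (hA 1 0)).trans_eq' (congrArg _ ?_)
    linear_combination M 0 0 * hY 1 - M 1 0 * hY 0 +
      (1 - (returnMatrix p n d γ 1 1 - u * returnMatrix p n d γ 1 0)) * hdet
  · linear_combination M 0 1 * hY 1 - M 1 1 * hY 0 + disp (returnMatrix p n d γ) e u * hdet

theorem exists_abs_latMatrix_le (hp : 0 < p) (hc : 0 < c) (hc1 : c ≤ 1)
    (hu : u ∈ uniformlyBadlyApproximable p c) {n : ℕ} (he : (p : ℝ) ^ n ≤ e) :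
    ∃ σ : SL(2, ℤ), ∀ i j, |latMatrix p e u n σ i j| ≤ 2 / c := by
  obtain ⟨q₁, m₁, q₂, m₂, hdet, hx₁, hy₁, hx₂, hy₂⟩ := exists_reduced_basis hp hc hu he
  have h1 : 1 ≤ 2 / c := by rw [le_div_iff₀ hc]; linarith
  refine ⟨⟨!![q₂, m₂; q₁, m₁], by rw [det_fin_two_of]; linarith⟩, fun i j => ?_⟩
  fin_cases i <;> fin_cases j
  exacts [hx₂.trans h1, hy₂, hx₁.trans h1, hy₁.trans h1]

theorem inv_mul_mem_Gamma0 {N : ℕ} {σ τ : SL(2, ℤ)} (h : ∀ i, (σ i 0 : ZMod N) = τ i 0) :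
    σ⁻¹ * τ ∈ Gamma0 N := by
  rw [Gamma0_mem, Matrix.SpecialLinearGroup.coe_mul, mul_apply, Fin.sum_univ_two,
    Matrix.SpecialLinearGroup.SL2_inv_expl]
  simp only [cons_val', cons_val_zero, cons_val_one, cons_val_fin_one]
  push_cast
  rw [h 0, h 1]
  ring

theorem abs_sub_le_of_floor_div_eq {x y δ : ℝ} (hδ : 0 < δ) (h : ⌊x / δ⌋ = ⌊y / δ⌋) :
    |x - y| ≤ δ := by
  have := (Int.abs_sub_lt_one_of_floor_eq_floor h).le
  rwa [← sub_div, abs_div, abs_of_pos hδ, div_le_one hδ] at this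

theorem floor_div_mem_Icc {x δ A : ℝ} (hδ : 0 < δ) (h : |x| ≤ A) :
    ⌊x / δ⌋ ∈ Finset.Icc ⌊-A / δ⌋ ⌊A / δ⌋ := by
  rw [abs_le] at h
  rw [Finset.mem_Icc]
  constructor <;> gcongr <;> linarith

/-- Bases of the lattices at two times are compared through their residues modulo `N` and their
coordinates rounded to precision `δ`. -/
noncomputable def basisColor (p N : ℕ) (e u δ : ℝ) (n : ℕ) (σ : SL(2, ℤ)) :
    (Fin 2 → ZMod N) × (Fin 2 → Fin 2 → ℤ) :=
  (fun i => (σ i 0 : ZMod N), fun i j => ⌊latMatrix p e u n σ i j / δ⌋)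

theorem exists_finset_basisColor_mem (p N : ℕ) [NeZero N] {δ : ℝ} (hδ : 0 < δ) (A : ℝ) :
    ∃ T : Finset ((Fin 2 → ZMod N) × (Fin 2 → Fin 2 → ℤ)), ∀ (e u : ℝ) (n : ℕ) (σ : SL(2, ℤ)),
      (∀ i j, |latMatrix p e u n σ i j| ≤ A) → basisColor p N e u δ n σ ∈ T := by
  refine ⟨Finset.univ ×ˢ Fintype.piFinset fun _ => Fintype.piFinset fun _ =>
    Finset.Icc ⌊-A / δ⌋ ⌊A / δ⌋, fun e u n σ h => ?_⟩
  simp only [basisColor, Finset.mem_product, Finset.mem_univ, true_and, Fintype.mem_piFinset]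
  exact fun i j => floor_div_mem_Icc hδ (h i j)

theorem exists_return (hp : 0 < p) (hc : 0 < c) (hc1 : c ≤ 1) (R : ℕ) {ε : ℝ} (hε : 0 < ε) :
    ∃ C : ℕ, 0 < C ∧ ∀ u ∈ uniformlyBadlyApproximable p c, ∀ (e : ℝ) (N : ℕ) (G : Finset ℕ),
      2 * C ∣ N → G ⊆ Finset.range N → N < 2 * G.card → (∀ n ∈ G, (p : ℝ) ^ n ≤ e) →
      ∃ n ∈ G, ∃ d, 1 ≤ d ∧ d ≤ 2 * C ∧ ∃ γ ∈ Gamma0 (p ^ (2 * R)),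
        NearUnipotent (returnMatrix p n d γ) e u ε ∧ |disp (returnMatrix p n d γ) e u| ≤ ε := by
  have : NeZero (p ^ (2 * R)) := ⟨(pow_pos hp _).ne'⟩
  have hδ : 0 < ε / (2 * (2 / c)) := by positivity
  obtain ⟨T, hT⟩ := exists_finset_basisColor_mem p (p ^ (2 * R)) hδ (2 / c)
  refine ⟨T.card + 1, Nat.succ_pos _, fun u hu e N G hN hG hcard he => ?_⟩
  choose! σ hσ using fun n hn => exists_abs_latMatrix_le hp hc hc1 hu (he n hn)
  obtain ⟨n, hn, m, -, hnm, hmn, heq⟩ := exists_near_same_color hN hG hcard T.card.le_succ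
    fun n hn => hT e u n (σ n) (hσ n hn)
  obtain ⟨d, rfl⟩ := Nat.exists_eq_add_of_le hnm.le
  rw [basisColor, basisColor, Prod.mk.injEq, funext_iff] at heq
  obtain ⟨hres, hfloor⟩ := heq
  refine ⟨n, hn, d, by lia, by lia, (σ n)⁻¹ * σ (n + d), inv_mul_mem_Gamma0 hres, ?_⟩
  have he0 : 0 < e := lt_of_lt_of_le (by positivity) (he n hn)
  have hnear := nearUnipotent_returnMatrix (d := d) (γ := (σ n)⁻¹ * σ (n + d)) hp he0 (hσ n hn)
    fun i j => by
      rw [mul_inv_cancel_left]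
      exact abs_sub_le_of_floor_div_eq hδ (congrFun₂ hfloor i j).symm
  rwa [mul_div_cancel₀ _ (by positivity)] at hnear

end Returns

section Transport

open CongruenceSubgroup
open scoped MatrixGroups

theorem exists_eq_pow_mul_of_mem_Gamma0 {p k R : ℕ} {γ : SL(2, ℤ)} (hγ : γ ∈ Gamma0 (p ^ (2 * R)))
    (hk : k ≤ R) : ∃ f : ℤ, γ 1 0 = (p : ℤ) ^ (2 * k) * f := by
  rw [Gamma0_mem, ZMod.intCast_zmod_eq_zero_iff_dvd, Nat.cast_pow] at hγ
  exact (pow_dvd_pow _ (by lia)).trans hγ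

theorem ne_zero_or_ne_zero_of_det_eq_one {a b c d q m : ℤ} (hdet : a * d - b * c = 1)
    (hqm : q ≠ 0 ∨ m ≠ 0) : q * a + m * c ≠ 0 ∨ q * b + m * d ≠ 0 := by
  by_contra! h
  refine hqm.elim (· ?_) (· ?_)
  · linear_combination d * h.1 - c * h.2 - q * hdet
  · linear_combination a * h.2 - b * h.1 - m * hdet

/-- The losses of quality allowed when good points are transported by a return of length `d` with
error `η`: points that are good for `(R', κ')` become good for `(R, κ)`. -/
structure ThresholdStep (η : ℝ) (d R R' : ℕ) (κ κ' : ℝ) : Prop where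
  one_le : 1 ≤ R
  add_lt : R + d < R'
  error_le : 3 * η * R ≤ 1
  add_error_le : κ + 7 * η * R ^ 2 ≤ κ'

theorem abs_sub_le_of_near_shear {x y a b d r η R : ℝ} (hx : |x| ≤ R) (hy : |y + r * x| ≤ R)
    (hr : |r| ≤ 1) (ha : |a - 1| ≤ η) (hb : |b| ≤ η) (hd : |d - 1| ≤ η) :
    |x * a - y * b - x| ≤ 3 * η * R ∧ |x * r + y * d - (y + r * x)| ≤ 2 * η * R := by
  have : 0 ≤ η := (abs_nonneg _).trans hb
  have hR : 0 ≤ R := (abs_nonneg _).trans hx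
  have hyR : |y| ≤ 2 * R := by
    calc |y| = |y + r * x - r * x| := by rw [add_sub_cancel_right]
      _ ≤ |y + r * x| + |r| * |x| := (abs_sub _ _).trans_eq (by rw [abs_mul])
      _ ≤ R + 1 * R := by gcongr
      _ = 2 * R := by ring
  constructor
  · calc |x * a - y * b - x| = |x * (a - 1) - y * b| := by ring_nf
      _ ≤ |x| * |a - 1| + |y| * |b| := (abs_sub _ _).trans_eq (by rw [abs_mul, abs_mul])
      _ ≤ R * η + 2 * R * η := by gcongr
      _ = 3 * η * R := by ring
  · calc |x * r + y * d - (y + r * x)| = |y| * |d - 1| := by rw [← abs_mul]; ring_nf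
      _ ≤ 2 * R * η := by gcongr
      _ = 2 * η * R := by ring

theorem abs_mul_le_add_of_abs_sub_le {x y x' y' η R : ℝ} (hR : 1 ≤ R) (hy : |y| ≤ R)
    (hx' : |x'| ≤ R + 1) (hdx : |x' - x| ≤ 3 * η * R) (hdy : |y' - y| ≤ 2 * η * R) :
    |x' * y'| ≤ |x * y| + 7 * η * R ^ 2 := by
  have : 0 ≤ η := by nlinarith [(abs_nonneg _).trans hdy]
  calc |x' * y'| = |x * y + (x' * (y' - y) + (x' - x) * y)| := by ring_nf
    _ ≤ |x * y| + (|x'| * |y' - y| + |x' - x| * |y|) := by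
        rw [← abs_mul, ← abs_mul]
        exact (abs_add_le _ _).trans (add_le_add_right (abs_add_le _ _) _)
    _ ≤ |x * y| + ((R + 1) * (2 * η * R) + 3 * η * R * R) := by gcongr
    _ ≤ |x * y| + ((R + R) * (2 * η * R) + 3 * η * R * R) := by gcongr
    _ = |x * y| + 7 * η * R ^ 2 := by ring

theorem LatGood.of_return {p n d R R' : ℕ} {e v η κ κ' : ℝ} (hp : 0 < p) (he : 0 < e)
    {γ : SL(2, ℤ)} (hγ : γ ∈ Gamma0 (p ^ (2 * R)))
    (hnear : NearUnipotent (returnMatrix p n d γ) e v η)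
    (hdisp : |disp (returnMatrix p n d γ) e v| ≤ 1) (hstep : ThresholdStep η d R R' κ κ')
    (hgood : LatGood p R' κ' e n v) :
    LatGood p R κ e n (v + disp (returnMatrix p n d γ) e v / e ^ 2) := by
  intro k hk q m hqm hx hy
  obtain ⟨f, hf⟩ := exists_eq_pow_mul_of_mem_Gamma0 hγ hk
  have hdet : γ 0 0 * γ 1 1 - γ 0 1 * (p : ℤ) ^ (2 * k) * f = 1 := by
    rw [mul_assoc, ← hf, ← Matrix.det_fin_two, γ.2]
  have hX := latX_return hp he v n d k hf q m
  have hY := latY_return hp he v n d k hf q m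
  rw [latY_add_div he] at hy ⊢
  obtain ⟨hdx, hdy⟩ := abs_sub_le_of_near_shear hx hy hdisp hnear.upperLeft hnear.lowerLeft
    hnear.lowerRight
  rw [← hX] at hdx
  rw [← hY] at hdy
  have hηR : 3 * η * R ≤ 1 := hstep.error_le
  have hRR : (R : ℝ) + 1 ≤ R' := by exact_mod_cast (Nat.le_add_right R d).trans_lt hstep.add_lt
  have hX' := (abs_sub_abs_le_abs_sub _ _).trans hdx
  have hY' := (abs_sub_abs_le_abs_sub _ _).trans hdy
  have hne := ne_zero_or_ne_zero_of_det_eq_one hdet hqm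
  rw [← mul_assoc q] at hne
  have hprod := hgood (d + k) (by have := hstep.add_lt; lia) _ _ hne (by linarith) (by linarith)
  have hloss := abs_mul_le_add_of_abs_sub_le (by exact_mod_cast hstep.one_le) hy (by linarith)
    hdx hdy
  linarith [hstep.add_error_le]

/-- Were the discriminant zero, the lower right entry of `γ`, which is prime to `p`, would be
divisible by `p`. -/
theorem discriminant_ne_zero {p d : ℕ} (hp : 2 ≤ p) (hd : 1 ≤ d) {γ : SL(2, ℤ)}
    (hγ : (p : ℤ) ∣ γ 1 0) :
    (γ 0 0 * (p : ℤ) ^ (2 * d) + γ 1 1) ^ 2 - 4 * (p : ℤ) ^ (2 * d) ≠ 0 := by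
  intro h
  obtain ⟨f, hf⟩ := hγ
  have hdet : γ 0 0 * γ 1 1 - γ 0 1 * γ 1 0 = 1 := by rw [← Matrix.det_fin_two, γ.2]
  have hsq : (p : ℤ) ∣ γ 1 1 ^ 2 := by
    have hpow : γ 1 1 ^ 2 = (p : ℤ) ^ (2 * d) *
        (4 - γ 0 0 ^ 2 * (p : ℤ) ^ (2 * d) - 2 * γ 0 0 * γ 1 1) := by linear_combination h
    exact hpow ▸ (dvd_pow_self _ (by lia)).mul_right _
  have hco : IsCoprime (γ 1 1) (p : ℤ) := ⟨γ 0 0, -γ 0 1 * f, by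
    rw [hf] at hdet
    linear_combination hdet⟩
  have hunit := (hco.pow_left (m := 2)).symm.isUnit_of_dvd' dvd_rfl hsq
  rw [Int.isUnit_iff] at hunit
  lia

theorem dispSlope_sq_sub {g : Matrix (Fin 2) (Fin 2) ℝ} (hg : g.det = 1) {e : ℝ} (he : e ≠ 0)
    (v : ℝ) : dispSlope g v ^ 2 - 4 * disp g e v * (g 1 0 / e ^ 2) = (g 0 0 + g 1 1) ^ 2 - 4 := by
  rw [Matrix.det_fin_two] at hg
  unfold dispSlope disp
  field_simp
  linear_combination -4 * hg

theorem trace_sq_sub_returnMatrix {p : ℕ} (hp : 0 < p) (n d : ℕ) (γ : SL(2, ℤ)) :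
    (returnMatrix p n d γ 0 0 + returnMatrix p n d γ 1 1) ^ 2 - 4 =
      (((γ 0 0 * (p : ℤ) ^ (2 * d) + γ 1 1) ^ 2 - 4 * (p : ℤ) ^ (2 * d) : ℤ) : ℝ) *
        ((p : ℝ) ^ (2 * d))⁻¹ := by
  simp only [returnMatrix, Matrix.of_apply, Matrix.cons_val', Matrix.cons_val_zero,
    Matrix.cons_val_one, Matrix.cons_val_fin_one]
  push_cast
  field_simp
  ring

theorem NearUnipotent.abs_dispSlope_le {g : Matrix (Fin 2) (Fin 2) ℝ} {e v η : ℝ}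
    (h : NearUnipotent g e v η) : |dispSlope g v| ≤ 2 * η := by
  calc |dispSlope g v| = |(g 0 0 + v * g 1 0 - 1) - (g 1 1 - v * g 1 0 - 1)| := by
        rw [dispSlope]; ring_nf
    _ ≤ η + η := (abs_sub _ _).trans (add_le_add h.upperLeft h.lowerRight)
    _ = 2 * η := by ring

/-- A return is not parabolic, hence its displacement is not nearly constant. -/
theorem le_abs_dispSlope_add_abs {p n d R : ℕ} {e u ε : ℝ} (hp : 2 ≤ p) (he : 0 < e) (hR : 1 ≤ R)
    (hd : 1 ≤ d) (hε : ε ≤ 1 / 4) {γ : SL(2, ℤ)} (hγ : γ ∈ Gamma0 (p ^ (2 * R)))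
    (hnear : NearUnipotent (returnMatrix p n d γ) e u ε)
    (hdisp : |disp (returnMatrix p n d γ) e u| ≤ ε) :
    ((p : ℝ) ^ (2 * d))⁻¹ ≤
      |dispSlope (returnMatrix p n d γ) u| + |returnMatrix p n d γ 1 0 / e ^ 2| := by
  have hp0 : 0 < p := by lia
  obtain ⟨f, hf⟩ := exists_eq_pow_mul_of_mem_Gamma0 hγ hR
  have hdisc : (1 : ℝ) ≤
      |(((γ 0 0 * (p : ℤ) ^ (2 * d) + γ 1 1) ^ 2 - 4 * (p : ℤ) ^ (2 * d) : ℤ) : ℝ)| := by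
    exact_mod_cast Int.one_le_abs
      (discriminant_ne_zero hp hd (hf ▸ (dvd_pow_self _ (by lia)).mul_right f))
  have hslope := hnear.abs_dispSlope_le
  calc ((p : ℝ) ^ (2 * d))⁻¹
      ≤ |dispSlope (returnMatrix p n d γ) u ^ 2 -
          4 * disp (returnMatrix p n d γ) e u * (returnMatrix p n d γ 1 0 / e ^ 2)| := by
        rw [dispSlope_sq_sub (det_returnMatrix hp0 n d γ) he.ne', trace_sq_sub_returnMatrix hp0,
          abs_mul, abs_of_pos (a := ((p : ℝ) ^ (2 * d))⁻¹) (by positivity)]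
        exact le_mul_of_one_le_left (by positivity) hdisc
    _ ≤ |dispSlope (returnMatrix p n d γ) u| * |dispSlope (returnMatrix p n d γ) u| +
          4 * |disp (returnMatrix p n d γ) e u| * |returnMatrix p n d γ 1 0 / e ^ 2| := by
        refine (abs_sub _ _).trans_eq ?_
        rw [abs_pow, abs_mul, abs_mul, abs_of_pos (four_pos (α := ℝ)), sq]
    _ ≤ 1 * |dispSlope (returnMatrix p n d γ) u| + 1 * |returnMatrix p n d γ 1 0 / e ^ 2| := by
        gcongr <;> linarith
    _ = _ := by rw [one_mul, one_mul]

end Transport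

section Stepping

open CongruenceSubgroup
open scoped MatrixGroups

theorem exists_half_lt_abs_sub_sub_of_gap_of_pos {G : ℝ → Prop} {r h t₁ : ℝ} (h0 : G 0)
    (hr : 0 < r) (hrh : r ≤ h) (ht₁ : h ≤ t₁) (hgap : ∀ t, |t - t₁| < h → ¬ G t) :
    ∃ t, 0 ≤ t ∧ t ≤ t₁ - h ∧ G t ∧ ∀ t', G t' → r / 2 < |t' - t - r| := by
  by_contra! hstep
  have hwalk : ∀ n : ℕ, ∃ t, G t ∧ n * (r / 2) ≤ t ∧ t ≤ t₁ - h := by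
    intro n
    induction n with
    | zero => exact ⟨0, h0, by simp, sub_nonneg.2 ht₁⟩
    | succ n ih =>
      obtain ⟨t, hG, hnt, hth⟩ := ih
      obtain ⟨t', hG', htt'⟩ := hstep t (le_trans (by positivity) hnt) hth hG
      rw [abs_le] at htt'
      refine ⟨t', hG', by push_cast; linarith, ?_⟩
      by_contra! hlt
      exact hgap t' (abs_lt.2 ⟨by linarith, by linarith⟩) hG'
  obtain ⟨n, hn⟩ := exists_nat_gt ((t₁ - h) / (r / 2))
  obtain ⟨t, -, hnt, hth⟩ := hwalk n
  rw [div_lt_iff₀ (by positivity)] at hn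
  linarith

theorem exists_half_lt_abs_sub_sub_of_gaps {G : ℝ → Prop} {r h : ℝ} (h0 : G 0) (hr : r ≠ 0)
    (hrh : |r| ≤ h) (hh : h ≤ 1 / 4)
    (hgap : ∀ t₀ : ℝ, |t₀| = 1 / 2 → ∃ t₁, |t₁ - t₀| ≤ 1 / 4 ∧ ∀ t, |t - t₁| < h → ¬ G t) :
    ∃ t, |t| ≤ 3 / 4 ∧ G t ∧ ∀ t', G t' → |r| / 2 < |t' - t - r| := by
  wlog hpos : 0 < r generalizing G r
  · obtain ⟨t, ht, hG, hfar⟩ := this (G := fun t => G (-t)) (r := -r) (by simpa using h0)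
      (neg_ne_zero.2 hr) (by rwa [abs_neg]) (fun t₀ ht₀ => by
        obtain ⟨t₁, ht₁, hgap₁⟩ := hgap (-t₀) (by rwa [abs_neg])
        refine ⟨-t₁, by rw [← abs_neg]; convert ht₁ using 2; ring, fun t ht => hgap₁ (-t) ?_⟩
        rw [← abs_neg]
        convert ht using 2
        ring) (neg_pos.2 (hr.lt_of_le (not_lt.1 hpos)))
    refine ⟨-t, by rwa [abs_neg], hG, fun t' ht' => ?_⟩
    convert hfar (-t') (by rwa [neg_neg]) using 1
    · rw [abs_neg]
    · rw [← abs_neg]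
      ring_nf
  · obtain ⟨t₁, ht₁, hgap₁⟩ := hgap (1 / 2) (by norm_num)
    rw [abs_le] at ht₁
    rw [abs_of_pos hpos] at hrh ⊢
    obtain ⟨t, ht0, hth, hG, hfar⟩ :=
      exists_half_lt_abs_sub_sub_of_gap_of_pos h0 hpos hrh (by linarith) hgap₁
    exact ⟨t, abs_le.2 ⟨by linarith, by linarith⟩, hG, hfar⟩

/-- Around `u`, at scale `e` and time `n`, every point that is good for `(R, κ)` is, in units of
`e⁻²`, `α`-close to a point that is good for the weaker threshold `(R', κ')`. -/
def IsStableAt (p R R' : ℕ) (κ κ' α e : ℝ) (n : ℕ) (u : ℝ) : Prop :=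
  ∀ t, |t| < 1 → LatGood p R κ e n (u + t / e ^ 2) →
    ∃ t', |t' - t| ≤ α ∧ LatGood p R' κ' e n (u + t' / e ^ 2)

/-- The thresholds for which all points of `uniformlyBadlyApproximable p c` are good, while the
good points have gaps. -/
structure AdmissibleThreshold (c : ℝ) (R : ℕ) (κ : ℝ) : Prop where
  div_le : 4 / c ≤ R
  div_lt : c / 4 < κ
  le : κ ≤ c

theorem disp_eq {g : Matrix (Fin 2) (Fin 2) ℝ} {E : ℝ} (hE : E ≠ 0) (e s v : ℝ) :
    disp g e v =
      e ^ 2 * (disp g E s / E ^ 2 + dispSlope g s * (v - s) + g 1 0 * (v - s) ^ 2) := by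
  simp only [disp, dispSlope]
  field_simp
  ring

theorem NearUnipotent.abs_disp_add_sub_le {g : Matrix (Fin 2) (Fin 2) ℝ} {e v η t : ℝ}
    (h : NearUnipotent g e v η) (he : e ≠ 0) (ht : |t| ≤ 1) :
    |disp g e (v + t / e ^ 2) - disp g e v| ≤ 3 * η := by
  have hη : 0 ≤ η := (abs_nonneg _).trans h.lowerLeft
  calc |disp g e (v + t / e ^ 2) - disp g e v|
      = |dispSlope g v * t + g 1 0 / e ^ 2 * t ^ 2| := by
        rw [disp_eq he e v (v + t / e ^ 2)]
        congr 1
        field_simp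
        ring
    _ ≤ |dispSlope g v| * |t| + |g 1 0 / e ^ 2| * |t| ^ 2 :=
        (abs_add_le _ _).trans_eq (by rw [abs_mul, abs_mul, abs_pow])
    _ ≤ 2 * η * 1 + η * 1 ^ 2 := by
        gcongr
        exacts [h.abs_dispSlope_le, h.lowerLeft]
    _ = 3 * η := by ring

theorem NearUnipotent.of_scale {g : Matrix (Fin 2) (Fin 2) ℝ} {E e f s v ε θ η : ℝ}
    (h : NearUnipotent g E s ε) (hf : 0 < f) (hfe : f ≤ e) (hv : |v - s| ≤ 2 / f ^ 2)
    (hθ : |g 1 0 / f ^ 2| ≤ θ) (hη : ε + 2 * θ ≤ η) : NearUnipotent g e v η := by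
  have hε : 0 ≤ ε := (abs_nonneg _).trans h.lowerLeft
  have hθ0 : 0 ≤ θ := (abs_nonneg _).trans hθ
  have hshift : |g 1 0 * (v - s)| ≤ 2 * θ := by
    calc |g 1 0 * (v - s)| = |g 1 0 / f ^ 2| * (f ^ 2 * |v - s|) := by
          rw [abs_mul, abs_div, abs_of_pos (pow_pos hf 2)]
          field_simp
      _ ≤ θ * (f ^ 2 * (2 / f ^ 2)) := by gcongr
      _ = 2 * θ := by field_simp
  refine ⟨le_trans ?_ hη, le_trans ?_ hη, le_trans ?_ hη⟩
  · calc |g 0 0 + v * g 1 0 - 1| = |(g 0 0 + s * g 1 0 - 1) + g 1 0 * (v - s)| := by ring_nf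
      _ ≤ ε + 2 * θ := (abs_add_le _ _).trans (add_le_add h.upperLeft hshift)
  · calc |g 1 0 / e ^ 2| = |g 1 0| / e ^ 2 := by rw [abs_div, abs_of_nonneg (sq_nonneg e)]
      _ ≤ |g 1 0| / f ^ 2 := by gcongr
      _ = |g 1 0 / f ^ 2| := by rw [abs_div, abs_of_nonneg (sq_nonneg f)]
      _ ≤ ε + 2 * θ := by linarith
  · calc |g 1 1 - v * g 1 0 - 1| = |(g 1 1 - s * g 1 0 - 1) - g 1 0 * (v - s)| := by ring_nf
      _ ≤ ε + 2 * θ := (abs_sub _ _).trans (add_le_add h.lowerRight hshift)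

theorem pow_le_of_mul_pow_add_lt {p n R : ℕ} {e : ℝ} (hp : 0 < p) (hR : 1 ≤ R)
    (he : R * (p : ℝ) ^ (n + R) < e) : (p : ℝ) ^ n ≤ e := by
  have hp1 : (1 : ℝ) ≤ p := mod_cast hp
  have hR1 : (1 : ℝ) ≤ R := mod_cast hR
  calc (p : ℝ) ^ n ≤ 1 * (p : ℝ) ^ (n + R) := by
        rw [one_mul]
        exact pow_le_pow_right₀ hp1 (n.le_add_right R)
    _ ≤ R * (p : ℝ) ^ (n + R) := by gcongr
    _ ≤ e := he.le

/-- Stability would let a return step through the good points across one of their gaps. -/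
theorem not_isStableAt_of_return {p R R' n d : ℕ} {c κ κ' e u η ρ α : ℝ} {γ : SL(2, ℤ)}
    (hp : 0 < p) (hc : 0 < c) (hc1 : c ≤ 1) (hu : u ∈ uniformlyBadlyApproximable p c)
    (hγ : γ ∈ Gamma0 (p ^ (2 * R))) (he : R' * (p : ℝ) ^ (n + R') < e)
    (hstep : ThresholdStep η d R R' κ κ') (hadm : AdmissibleThreshold c R' κ')
    (hnear : ∀ t, |t| ≤ 1 → NearUnipotent (returnMatrix p n d γ) e (u + t / e ^ 2) η)
    (hρ : 0 < ρ) (hη : 12 * η ≤ ρ) (hα : α ≤ ρ / 4)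
    (hdisp : ρ ≤ |disp (returnMatrix p n d γ) e u|)
    (hdisp' : |disp (returnMatrix p n d γ) e u| ≤ c ^ 3 / 64) :
    ¬ IsStableAt p R R' κ κ' α e n u := by
  intro hstable
  set g := returnMatrix p n d γ
  set r := disp g e u
  have hpe : (p : ℝ) ^ n ≤ e :=
    pow_le_of_mul_pow_add_lt hp (hstep.one_le.trans (by have := hstep.add_lt; lia)) he
  have he0 : 0 < e := lt_of_lt_of_le (by positivity) hpe
  have hc3 : c ^ 3 ≤ 1 := pow_le_one₀ hc.le hc1
  obtain ⟨t, ht, hgood, hfar⟩ := exists_half_lt_abs_sub_sub_of_gaps (r := r) (h := c ^ 3 / 64)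
    (G := fun t => LatGood p R' κ' e n (u + t / e ^ 2))
    (by simpa using (latGood_of_mem_uniformlyBadlyApproximable hp he hu).mono le_rfl hadm.le)
    (abs_pos.1 (hρ.trans_le hdisp)) hdisp' (by linarith)
    fun t₀ ht₀ => exists_gap hp hc hc1 hu hpe ht₀ hadm.div_le hadm.div_lt
  have ht1 : |t| ≤ 1 := by linarith
  set rt := disp g e (u + t / e ^ 2)
  have hrt : |rt - r| ≤ ρ / 4 := by
    have hnear0 : NearUnipotent g e u η := by simpa using hnear 0 (by simp)
    exact (hnear0.abs_disp_add_sub_le he0.ne' ht1).trans (by linarith)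
  have hrt8 : |rt| ≤ 1 / 8 := by linarith [abs_sub_abs_le_abs_sub rt r]
  have hreturn := hgood.of_return hp he0 hγ (hnear t ht1) (by linarith) hstep
  rw [add_assoc, ← add_div] at hreturn
  obtain ⟨t', htt', hgood'⟩ := hstable (t + rt) (by linarith [abs_add_le t rt]) hreturn
  have hclose : |t' - t - r| ≤ |t' - (t + rt)| + |rt - r| :=
    (abs_add_le _ _).trans_eq' (congrArg _ (by ring))
  linarith [hfar t' hgood']

end Stepping

section SeparatedPoints

open Finset

theorem exists_three_separated {I : Finset ℤ} (hI : 5 ≤ #I) :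
    ∃ a ∈ I, ∃ b ∈ I, ∃ c ∈ I, a + 2 ≤ b ∧ b + 2 ≤ c := by
  have hne : I.Nonempty := card_pos.1 (by lia)
  set a := I.min' hne
  set c := I.max' hne
  obtain ⟨b, hb⟩ : (I \ {a, a + 1, c - 1, c}).Nonempty := by
    have hsdiff := le_card_sdiff {a, a + 1, c - 1, c} I
    have hfour : #{a, a + 1, c - 1, c} ≤ 4 := card_le_four
    exact card_pos.1 (by lia)
  simp only [mem_sdiff, mem_insert, mem_singleton, not_or] at hb
  have hab := I.min'_le b hb.1
  have hbc := I.le_max' b hb.1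
  exact ⟨a, I.min'_mem hne, b, hb.1, c, I.max'_mem hne, by lia, by lia⟩

theorem five_le_card_image_of_not_cellConcentrated {α β : Type*} [DecidableEq α] [DecidableEq β]
    {π : ℕ → α → β} {S E : Finset α} {k L : ℕ} {s : α}
    (hs : ¬ CellConcentrated π S k L s) (hE : ¬ CellDenseAt 8 π S E k s) :
    5 ≤ #((cell π S k s \ E).image (π (k + L))) := by
  by_contra! hcard
  refine hs ⟨_, Nat.le_of_lt_succ hcard, ?_⟩
  have hsub : cell π S k s \ E ⊆
      {u ∈ cell π S k s | π (k + L) u ∈ (cell π S k s \ E).image (π (k + L))} :=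
    fun u hu => mem_filter.2 ⟨(mem_sdiff.1 hu).1, mem_image_of_mem _ hu⟩
  have hinter : cell π S k s ∩ E ⊆ cell π E k s := fun u hu =>
    mem_cell.2 ⟨(mem_inter.1 hu).2, (mem_cell.1 (mem_inter.1 hu).1).2⟩
  have hsplit := card_sdiff_add_card_inter (cell π S k s) E
  have hsub' := card_le_card hsub
  have hinter' := card_le_card hinter
  rw [CellDenseAt, not_lt] at hE
  lia

theorem exists_three_separated_of_not_cellConcentrated {S E : Finset ℝ} {k L : ℕ} {s : ℝ}
    (hs : ¬ CellConcentrated quadCell S k L s) (hE : ¬ CellDenseAt 8 quadCell S E k s) :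
    ∃ x₁ x₂ x₃, (∀ x ∈ ({x₁, x₂, x₃} : Set ℝ), x ∈ cell quadCell S k s ∧ x ∉ E) ∧
      x₁ + ((4 : ℝ) ^ (k + L))⁻¹ ≤ x₂ ∧ x₂ + ((4 : ℝ) ^ (k + L))⁻¹ ≤ x₃ := by
  classical
  obtain ⟨a, ha, b, hb, c, hc, hab, hbc⟩ :=
    exists_three_separated (five_le_card_image_of_not_cellConcentrated hs hE)
  obtain ⟨x₁, hx₁, rfl⟩ := mem_image.1 ha
  obtain ⟨x₂, hx₂, rfl⟩ := mem_image.1 hb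
  obtain ⟨x₃, hx₃, rfl⟩ := mem_image.1 hc
  refine ⟨x₁, x₂, x₃, ?_, add_inv_le_of_quadCell_add_two_le hab,
    add_inv_le_of_quadCell_add_two_le hbc⟩
  rintro x (rfl | rfl | rfl)
  exacts [mem_sdiff.1 hx₁, mem_sdiff.1 hx₂, mem_sdiff.1 hx₃]

theorem mul_abs_le_of_abs_mul_le {δ y D C : ℝ} (hy : δ ≤ y) (h : |y * D| ≤ C) : δ * |D| ≤ C :=
  (mul_le_mul_of_nonneg_right (hy.trans (le_abs_self y)) (abs_nonneg D)).trans
    ((abs_mul y D).symm.trans_le h)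

theorem abs_add_abs_mul_sq_le_of_separated {β A B δ ρ x₁ x₂ x₃ : ℝ} (hδ : 0 < δ) (hδ1 : δ ≤ 1)
    (hx₁ : |x₁| ≤ 1) (hx₂ : |x₂| ≤ 1) (h₁₂ : x₁ + δ ≤ x₂) (h₂₃ : x₂ + δ ≤ x₃)
    (h₁ : |β + A * x₁ + B * x₁ ^ 2| ≤ ρ) (h₂ : |β + A * x₂ + B * x₂ ^ 2| ≤ ρ)
    (h₃ : |β + A * x₃ + B * x₃ ^ 2| ≤ ρ) : (|A| + |B|) * δ ^ 2 ≤ 8 * ρ := by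
  set D₁₂ := A + B * (x₁ + x₂)
  set D₂₃ := A + B * (x₂ + x₃)
  have hD₁₂ : δ * |D₁₂| ≤ 2 * ρ := by
    refine mul_abs_le_of_abs_mul_le (le_sub_iff_add_le'.2 h₁₂) ?_
    calc |(x₂ - x₁) * D₁₂|
        = |(β + A * x₂ + B * x₂ ^ 2) - (β + A * x₁ + B * x₁ ^ 2)| := congrArg _ (by ring)
      _ ≤ 2 * ρ := (abs_sub _ _).trans (by linarith)
  have hD₂₃ : δ * |D₂₃| ≤ 2 * ρ := by
    refine mul_abs_le_of_abs_mul_le (le_sub_iff_add_le'.2 h₂₃) ?_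
    calc |(x₃ - x₂) * D₂₃|
        = |(β + A * x₃ + B * x₃ ^ 2) - (β + A * x₂ + B * x₂ ^ 2)| := congrArg _ (by ring)
      _ ≤ 2 * ρ := (abs_sub _ _).trans (by linarith)
  have hB : 2 * δ * |B| ≤ |D₂₃| + |D₁₂| := by
    refine mul_abs_le_of_abs_mul_le (y := x₃ - x₁) (by linarith) ?_
    calc |(x₃ - x₁) * B| = |D₂₃ - D₁₂| := congrArg _ (by ring)
      _ ≤ |D₂₃| + |D₁₂| := abs_sub _ _
  have hA : |A| ≤ |D₁₂| + |B| * 2 := by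
    calc |A| = |D₁₂ - B * (x₁ + x₂)| := congrArg _ (by ring)
      _ ≤ |D₁₂| + |B| * |x₁ + x₂| := (abs_sub _ _).trans_eq (by rw [abs_mul])
      _ ≤ |D₁₂| + |B| * (1 + 1) := by gcongr; exact (abs_add_le _ _).trans (add_le_add hx₁ hx₂)
      _ = |D₁₂| + |B| * 2 := by ring
  calc (|A| + |B|) * δ ^ 2 ≤ (|D₁₂| + |B| * 2 + |B|) * δ ^ 2 := by gcongr
    _ = δ * (δ * |D₁₂|) + 3 / 2 * (δ * (2 * δ * |B|)) := by ring
    _ ≤ δ * (δ * |D₁₂|) + 3 / 2 * (δ * (|D₂₃| + |D₁₂|)) := by gcongr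
    _ = δ * (δ * |D₁₂|) + 3 / 2 * (δ * |D₂₃| + δ * |D₁₂|) := by ring
    _ ≤ 1 * (2 * ρ) + 3 / 2 * (2 * ρ + 2 * ρ) := by gcongr
    _ = 8 * ρ := by ring

end SeparatedPoints

section ReturnAtSeparatedPoints

open CongruenceSubgroup
open scoped MatrixGroups

/-- The size of the variation of `disp g e` on the interval of radius `1 / f ^ 2` around `s`. -/
noncomputable def dispVariation (g : Matrix (Fin 2) (Fin 2) ℝ) (f e s : ℝ) : ℝ :=
  e ^ 2 / f ^ 2 * (|dispSlope g s| + |g 1 0 / f ^ 2|)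

theorem disp_eq_quadratic {g : Matrix (Fin 2) (Fin 2) ℝ} {E f : ℝ} (hE : E ≠ 0) (hf : f ≠ 0)
    (e s x : ℝ) :
    disp g e x = e ^ 2 / E ^ 2 * disp g E s + e ^ 2 / f ^ 2 * dispSlope g s * (f ^ 2 * (x - s)) +
      e ^ 2 / f ^ 2 * (g 1 0 / f ^ 2) * (f ^ 2 * (x - s)) ^ 2 := by
  rw [disp_eq hE e s x]
  field_simp

theorem dispVariation_eq (g : Matrix (Fin 2) (Fin 2) ℝ) (f e s : ℝ) :
    dispVariation g f e s =
      |e ^ 2 / f ^ 2 * dispSlope g s| + |e ^ 2 / f ^ 2 * (g 1 0 / f ^ 2)| := by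
  rw [dispVariation, mul_add, abs_mul, abs_mul, abs_of_nonneg (by positivity : 0 ≤ e ^ 2 / f ^ 2)]

theorem abs_disp_le_add_dispVariation {g : Matrix (Fin 2) (Fin 2) ℝ} {E f e s x : ℝ} (hf : 0 < f)
    (he : 0 < e) (heE : e ≤ E) (hx : f ^ 2 * |x - s| ≤ 1) :
    |disp g e x| ≤ |disp g E s| + dispVariation g f e s := by
  have hE : 0 < E := he.trans_le heE
  have hx' : |f ^ 2 * (x - s)| ≤ 1 := by rwa [abs_mul, abs_of_pos (pow_pos hf 2)]
  have hratio : |e ^ 2 / E ^ 2| ≤ 1 := by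
    rw [abs_of_nonneg (by positivity)]
    exact div_le_one_of_le₀ (by gcongr) (by positivity)
  rw [disp_eq_quadratic hE.ne' hf.ne', dispVariation_eq]
  calc _ ≤ |e ^ 2 / E ^ 2| * |disp g E s| +
          |e ^ 2 / f ^ 2 * dispSlope g s| * |f ^ 2 * (x - s)| +
          |e ^ 2 / f ^ 2 * (g 1 0 / f ^ 2)| * |f ^ 2 * (x - s)| ^ 2 :=
        (abs_add_three _ _ _).trans_eq (by rw [abs_mul, abs_mul, abs_mul _ ((_) ^ 2), abs_pow])
    _ ≤ 1 * |disp g E s| + |e ^ 2 / f ^ 2 * dispSlope g s| * 1 +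
          |e ^ 2 / f ^ 2 * (g 1 0 / f ^ 2)| * 1 ^ 2 := by gcongr
    _ = _ := by ring

theorem exists_lt_abs_disp_of_separated {g : Matrix (Fin 2) (Fin 2) ℝ}
    {E f e s b ρ x₁ x₂ x₃ : ℝ} (hE : E ≠ 0) (hf : f ≠ 0) (hb : 1 ≤ b)
    (hx : ∀ x ∈ ({x₁, x₂, x₃} : Set ℝ), f ^ 2 * |x - s| ≤ 1)
    (hx₁₂ : x₁ + (f ^ 2 * b)⁻¹ ≤ x₂) (hx₂₃ : x₂ + (f ^ 2 * b)⁻¹ ≤ x₃)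
    (hvar : 8 * ρ * b ^ 2 < dispVariation g f e s) :
    ∃ x ∈ ({x₁, x₂, x₃} : Set ℝ), ρ < |disp g e x| := by
  by_contra! hsmall
  have hf2 : 0 < f ^ 2 := by positivity
  have hb0 : 0 < b := by linarith
  have hsep : ∀ x y, x + (f ^ 2 * b)⁻¹ ≤ y → f ^ 2 * (x - s) + b⁻¹ ≤ f ^ 2 * (y - s) := by
    intro x y hxy
    calc f ^ 2 * (x - s) + b⁻¹ = f ^ 2 * (x + (f ^ 2 * b)⁻¹ - s) := by field_simp; ring
      _ ≤ f ^ 2 * (y - s) := by gcongr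
  have hle : ∀ x ∈ ({x₁, x₂, x₃} : Set ℝ), |f ^ 2 * (x - s)| ≤ 1 := fun x h => by
    rw [abs_mul, abs_of_pos hf2]
    exact hx x h
  simp only [disp_eq_quadratic hE hf e s] at hsmall
  have hquad := abs_add_abs_mul_sq_le_of_separated (inv_pos.2 hb0) (inv_le_one_of_one_le₀ hb)
    (hle x₁ (by simp)) (hle x₂ (by simp)) (hsep _ _ hx₁₂) (hsep _ _ hx₂₃)
    (hsmall x₁ (by simp)) (hsmall x₂ (by simp)) (hsmall x₃ (by simp))
  rw [← dispVariation_eq, inv_pow, ← div_eq_mul_inv, div_le_iff₀ (by positivity)] at hquad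
  linarith

theorem exists_not_isStableAt_of_separated {p R R' n d : ℕ}
    {c κ κ' E e f b s x₁ x₂ x₃ ρ η ε α : ℝ} {γ : SL(2, ℤ)} (hp : 0 < p) (hc : 0 < c) (hc1 : c ≤ 1)
    (hγ : γ ∈ Gamma0 (p ^ (2 * R))) (he : R' * (p : ℝ) ^ (n + R') < e)
    (hstep : ThresholdStep η d R R' κ κ') (hadm : AdmissibleThreshold c R' κ')
    (hb : 1 ≤ b) (hρ : 16 * ρ * b ^ 3 = c ^ 3 / 128) (hη : 12 * η ≤ ρ) (hε : ε ≤ η / 4)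
    (hα : α ≤ ρ / 4) (hf : 0 < f) (hfe : f ≤ e) (heE : e ≤ E)
    (hnear : NearUnipotent (returnMatrix p n d γ) E s ε)
    (hdisp : |disp (returnMatrix p n d γ) E s| ≤ ε)
    (hslope : |returnMatrix p n d γ 1 0 / f ^ 2| ≤ η / 4)
    (hvar : dispVariation (returnMatrix p n d γ) f e s < c ^ 3 / 128)
    (hvar' : c ^ 3 / 128 ≤ b * dispVariation (returnMatrix p n d γ) f e s)
    (hx : ∀ x ∈ ({x₁, x₂, x₃} : Set ℝ), x ∈ uniformlyBadlyApproximable p c ∧ f ^ 2 * |x - s| ≤ 1)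
    (hx₁₂ : x₁ + (f ^ 2 * b)⁻¹ ≤ x₂) (hx₂₃ : x₂ + (f ^ 2 * b)⁻¹ ≤ x₃) :
    ∃ x ∈ ({x₁, x₂, x₃} : Set ℝ), ¬ IsStableAt p R R' κ κ' α e n x := by
  have he0 : 0 < e := hf.trans_le hfe
  have hb0 : 0 < b := by linarith
  have hρ0 : 0 < ρ := by
    have hc3 : 0 < ρ * (16 * b ^ 3) := by rw [← mul_assoc, mul_comm ρ, hρ]; positivity
    exact pos_of_mul_pos_left hc3 (by positivity)
  have hρ_le : ρ ≤ 16 * ρ * b ^ 3 := by nlinarith [one_le_pow₀ (n := 3) hb]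
  obtain ⟨x, hxmem, hxdisp⟩ := exists_lt_abs_disp_of_separated (he0.trans_le heE).ne' hf.ne' hb
    (fun x h => (hx x h).2) hx₁₂ hx₂₃ (lt_of_mul_lt_mul_left (a := b) (by
      calc b * (8 * ρ * b ^ 2) < 16 * ρ * b ^ 3 := by nlinarith [pow_pos hb0 3]
        _ ≤ _ := hρ.trans_le hvar') hb0.le)
  obtain ⟨hxu, hxs⟩ := hx x hxmem
  refine ⟨x, hxmem, not_isStableAt_of_return hp hc hc1 hxu hγ he hstep hadm (fun t ht => ?_) hρ0
    hη hα hxdisp.le ?_⟩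
  · have hxt : |x + t / e ^ 2 - s| ≤ 2 / f ^ 2 := by
      calc |x + t / e ^ 2 - s| = |(x - s) + t / e ^ 2| := congrArg _ (by ring)
        _ ≤ |x - s| + |t| / e ^ 2 :=
          (abs_add_le _ _).trans_eq (by rw [abs_div, abs_of_pos (pow_pos he0 2)])
        _ ≤ 1 / f ^ 2 + 1 / f ^ 2 := by
          gcongr
          rwa [le_div_iff₀' (by positivity)]
        _ = 2 / f ^ 2 := by ring
    exact hnear.of_scale hf hfe hxt hslope (by linarith [(abs_nonneg _).trans hslope])
  · linarith [abs_disp_le_add_dispVariation (g := returnMatrix p n d γ) hf he0 heE hxs]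

end ReturnAtSeparatedPoints

section GoodScale

open Finset

/-- `b ^ ι` times the variation of a displacement with slope `k` and curvature `g` at scale `E`,
on the interval of radius `b ^ σ / E ^ 2` and renormalised at the scale `e` with
`E ^ 2 = b ^ ι * e ^ 2`. -/
def scaleVariation (b k g : ℝ) (σ : ℕ) : ℝ := k * b ^ σ + g * b ^ (2 * σ)

variable {b r k g : ℝ}

theorem monotone_scaleVariation (hb : 1 ≤ b) (hk : 0 ≤ k) (hg : 0 ≤ g) :
    Monotone (scaleVariation b k g) := by
  intro σ τ h
  unfold scaleVariation
  gcongr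

theorem mul_scaleVariation_le_succ (hb : 1 ≤ b) (hg : 0 ≤ g) (σ : ℕ) :
    b * scaleVariation b k g σ ≤ scaleVariation b k g (σ + 1) := by
  calc b * scaleVariation b k g σ = k * b ^ (σ + 1) + g * b ^ (2 * σ + 1) := by
        rw [scaleVariation]; ring
    _ ≤ k * b ^ (σ + 1) + g * b ^ (2 * (σ + 1)) := by gcongr; lia

theorem scaleVariation_add_le (hb : 1 ≤ b) (hk : 0 ≤ k) (σ n : ℕ) :
    scaleVariation b k g (σ + n) ≤ scaleVariation b k g σ * b ^ (2 * n) := by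
  calc scaleVariation b k g (σ + n) = k * b ^ (σ + n) + g * b ^ (2 * (σ + n)) := rfl
    _ ≤ k * b ^ (σ + 2 * n) + g * b ^ (2 * (σ + n)) := by gcongr; lia
    _ = scaleVariation b k g σ * b ^ (2 * n) := by rw [scaleVariation]; ring

theorem exists_matching_exponent {F : ℕ → ℝ} {m : ℕ} (hb : 1 < b) (hr : 0 < r)
    (hsucc : ∀ σ, b * F σ ≤ F (σ + 1)) (hadd : ∀ σ n, F (σ + n) ≤ F σ * b ^ (2 * n))
    (hm : F m < r) (hm' : ∀ σ > m, r ≤ F σ) :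
    ∃ ι : ℕ → ℕ, StrictMonoOn ι (Set.Ioi m) ∧ ∀ σ > m, ι σ ≤ 2 * (σ - m) ∧
      F σ < r * b ^ ι σ ∧ r * b ^ ι σ ≤ b * F σ := by
  have hexists : ∀ σ, ∃ n : ℕ, σ > m → r * b ^ n ≤ F σ ∧ F σ < r * b ^ (n + 1) := by
    intro σ
    by_cases hσ : σ > m
    · obtain ⟨n, hn, hn'⟩ := exists_nat_pow_near ((one_le_div hr).2 (hm' σ hσ)) hb
      exact ⟨n, fun _ => ⟨(le_div_iff₀' hr).1 hn, (div_lt_iff₀' hr).1 hn'⟩⟩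
    · exact ⟨0, fun h => absurd h hσ⟩
  choose n hn using hexists
  have hle : ∀ σ > m, r * b ^ (n σ + 1) ≤ b * F σ := fun σ hσ => by
    calc r * b ^ (n σ + 1) = b * (r * b ^ n σ) := by ring
      _ ≤ b * F σ := mul_le_mul_of_nonneg_left (hn σ hσ).1 (by linarith)
  have hexp : ∀ {i j : ℕ}, r * b ^ i < r * b ^ j → i < j := fun h =>
    (pow_lt_pow_iff_right₀ hb).1 (lt_of_mul_lt_mul_left h hr.le)
  refine ⟨fun σ => n σ + 1, strictMonoOn_of_lt_succ Set.ordConnected_Ioi fun σ _ hσ hσ' => ?_,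
    fun σ hσ => ⟨?_, (hn σ hσ).2, hle σ hσ⟩⟩
  · exact hexp (((hle σ hσ).trans (hsucc σ)).trans_lt (hn (σ + 1) hσ').2)
  · refine hexp ((hn σ hσ).1.trans_lt ?_)
    calc F σ = F (m + (σ - m)) := by rw [Nat.add_sub_cancel' hσ.le]
      _ ≤ F m * b ^ (2 * (σ - m)) := hadd m _
      _ < r * b ^ (2 * (σ - m)) := by gcongr

theorem exists_mem_Icc_not_and_not {P Q : ℕ → Prop} {i m : ℕ} {ι : ℕ → ℕ}
    (hP : SparseBackward 100 P i) (hQ : SparseBackward 100 Q i) (hι : StrictMonoOn ι (Set.Ioi m))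
    (hι' : ∀ σ > m, ι σ ≤ 2 * (σ - m)) (hi : 2 * m + 4 ≤ i) :
    ∃ σ ∈ Icc (m + 1) (m + 1 + (m + 1) / 2), ¬ P (i - σ) ∧ ¬ Q (i - ι σ) := by
  classical
  by_contra! h
  set w := (m + 1) / 2
  have hcover : Icc (m + 1) (m + 1 + w) ⊆ {σ ∈ range (m + w + 2) | P (i - σ)} ∪
      {σ ∈ Icc (m + 1) (m + 1 + w) | Q (i - ι σ)} := by
    intro σ hσ
    have hσ' := mem_Icc.1 hσ
    by_cases hPσ : P (i - σ)
    · exact mem_union_left _ (mem_filter.2 ⟨mem_range.2 (by lia), hPσ⟩)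
    · exact mem_union_right _ (mem_filter.2 ⟨hσ, h σ hσ hPσ⟩)
  have hinj : #{σ ∈ Icc (m + 1) (m + 1 + w) | Q (i - ι σ)} ≤
      #{σ ∈ range (2 * w + 3) | Q (i - σ)} := by
    refine card_le_card_of_injOn ι (fun σ hσ => ?_) (hι.injOn.mono fun σ hσ => ?_) <;>
      obtain ⟨hσ, hQσ⟩ := mem_filter.1 (mem_coe.1 hσ) <;> have hσ' := mem_Icc.1 hσ
    · have := hι' σ (by lia)
      exact mem_coe.2 (mem_filter.2 ⟨mem_range.2 (by lia), hQσ⟩)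
    · exact Set.mem_Ioi.2 (by lia)
  have hcard := (card_le_card hcover).trans (card_union_le _ _)
  rw [Nat.card_Icc] at hcard
  have hPcard := hP (m + w + 2) (by lia)
  have hQcard := hQ (2 * w + 3) (by lia)
  convert_to 100 * #{σ ∈ range (m + w + 2) | P (i - σ)} ≤ _ at hPcard
  convert_to 100 * #{σ ∈ range (2 * w + 3) | Q (i - σ)} ≤ _ at hQcard
  lia

theorem exists_good_scale {P Q : ℕ → Prop} {i W V : ℕ} (hb : 1 < b) (hr : 0 < r) (hk : 0 ≤ k)
    (hg : 0 ≤ g) (hW : 2 ≤ W) (hlo : scaleVariation b k g (2 * W) < r)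
    (hhi : r ≤ scaleVariation b k g V) (hP : SparseBackward 100 P i)
    (hQ : SparseBackward 100 Q i) (hi : 2 * V + 2 ≤ i) :
    ∃ σ ι : ℕ, ι ≤ σ ∧ σ ≤ i ∧ ¬ P (i - σ) ∧ ¬ Q (i - ι) ∧
      scaleVariation b k g σ < r * b ^ ι ∧ r * b ^ ι ≤ b * scaleVariation b k g σ ∧
      g * b ^ σ * b ^ W ≤ r * b ^ 2 := by
  have hmono := monotone_scaleVariation hb.le hk hg
  obtain ⟨m, hm, hm'⟩ : ∃ m, scaleVariation b k g m < r ∧ r ≤ scaleVariation b k g (m + 1) := by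
    simpa using Nat.exists_not_and_succ_of_not_zero_of_exists
      (p := fun σ => r ≤ scaleVariation b k g σ)
      (not_le.2 ((hmono (Nat.zero_le _)).trans_lt hlo)) ⟨V, hhi⟩
  have hWm : 2 * W ≤ m := Nat.le_of_lt_succ (hmono.reflect_lt (hlo.trans_le hm'))
  have hmV : m < V := hmono.reflect_lt (hm.trans_le hhi)
  obtain ⟨ι, hι, hmatch⟩ := exists_matching_exponent hb hr (mul_scaleVariation_le_succ hb.le hg)
    (scaleVariation_add_le hb.le hk) hm fun σ hσ => hm'.trans (hmono hσ)
  obtain ⟨σ, hσ, hPσ, hQσ⟩ :=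
    exists_mem_Icc_not_and_not hP hQ hι (fun σ hσ => (hmatch σ hσ).1) (by lia)
  have hσ' := mem_Icc.1 hσ
  obtain ⟨hιle, hlt, hle⟩ := hmatch σ (by lia)
  refine ⟨σ, ι σ, by lia, by lia, hPσ, hQσ, hlt, hle, ?_⟩
  calc g * b ^ σ * b ^ W = g * b ^ (σ + W) := by ring
    _ ≤ g * b ^ (2 * m + 2) :=
      mul_le_mul_of_nonneg_left (pow_le_pow_right₀ hb.le (by lia)) hg
    _ ≤ scaleVariation b k g m * b ^ 2 := by
      rw [pow_add, ← mul_assoc]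
      gcongr
      exact le_add_of_nonneg_left (by positivity)
    _ ≤ r * b ^ 2 := by gcongr

end GoodScale

section ReturnBound

open Finset CongruenceSubgroup
open scoped MatrixGroups

theorem two_pow_sq (k : ℕ) : ((2 : ℝ) ^ k) ^ 2 = 4 ^ k := by
  rw [pow_right_comm]
  norm_num

theorem two_pow_sq_eq_mul (k L : ℕ) {i σ : ℕ} (h : σ ≤ i) :
    ((2 : ℝ) ^ (k + L * i)) ^ 2 = ((2 : ℝ) ^ (k + L * (i - σ))) ^ 2 * ((4 : ℝ) ^ L) ^ σ := by
  rw [two_pow_sq, two_pow_sq, ← pow_mul, ← pow_add, add_assoc, ← mul_add, Nat.sub_add_cancel h]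

theorem dispVariation_mul_pow {g : Matrix (Fin 2) (Fin 2) ℝ} {E f e b : ℝ} {σ ι : ℕ} (hE : E ≠ 0)
    (hf : f ≠ 0) (hfE : E ^ 2 = f ^ 2 * b ^ σ) (heE : E ^ 2 = e ^ 2 * b ^ ι) (s : ℝ) :
    dispVariation g f e s * b ^ ι = scaleVariation b |dispSlope g s| |g 1 0 / E ^ 2| σ := by
  have hbσ : b ^ σ = E ^ 2 / f ^ 2 := by rw [hfE]; field_simp
  have hb2σ : b ^ (2 * σ) = (E ^ 2 / f ^ 2) ^ 2 := by rw [mul_comm, pow_mul, hbσ]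
  have hslope : |g 1 0 / E ^ 2| * (E ^ 2 / f ^ 2) = |g 1 0 / f ^ 2| := by
    rw [← abs_of_nonneg (by positivity : 0 ≤ E ^ 2 / f ^ 2), ← abs_mul]
    field_simp
  calc dispVariation g f e s * b ^ ι
      = e ^ 2 * b ^ ι / f ^ 2 * (|dispSlope g s| + |g 1 0 / f ^ 2|) := by
        rw [dispVariation]; ring
    _ = |dispSlope g s| * (E ^ 2 / f ^ 2) +
          |g 1 0 / E ^ 2| * (E ^ 2 / f ^ 2) * (E ^ 2 / f ^ 2) := by rw [← heE, hslope]; ring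
    _ = scaleVariation b |dispSlope g s| |g 1 0 / E ^ 2| σ := by
        rw [scaleVariation, hbσ, hb2σ]; ring

/-- The small parameters of the stepping argument: `ρ` is the size of a step, `η` and `ε` bound
the errors of a return at the stepping scale and at its original scale, and `b ^ W` is a lower
bound for the ratio of these scales. -/
structure ReturnPrecision (c b Δ : ℝ) (R W : ℕ) (ρ η ε : ℝ) : Prop where
  step_eq : 16 * ρ * b ^ 3 = c ^ 3 / 128
  error_le_step : 12 * η ≤ ρ
  error_mul_le : 3 * η * R ≤ 1
  error_mul_sq_le : 7 * η * R ^ 2 ≤ Δ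
  pos : 0 < ε
  le_error : ε ≤ η / 4
  le_quarter : ε ≤ 1 / 4
  two_le : 2 ≤ W
  le_error_mul_pow : c ^ 3 / 128 * b ^ 2 ≤ η / 4 * b ^ W
  mul_pow_lt : 3 * ε * b ^ (2 * (2 * W)) < c ^ 3 / 128

theorem exists_returnPrecision {c b Δ : ℝ} (hc : 0 < c) (hb : 1 < b) (hΔ : 0 < Δ) (R : ℕ) :
    ∃ (W : ℕ) (η ε : ℝ), ReturnPrecision c b Δ R W (c ^ 3 / (2048 * b ^ 3)) η ε := by
  have : 0 < b := one_pos.trans hb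
  set ρ := c ^ 3 / (2048 * b ^ 3) with hρ
  obtain ⟨η, hη0, hηρ, hηR, hηΔ⟩ : ∃ η > 0, 12 * η ≤ ρ ∧ 3 * η * R ≤ 1 ∧ 7 * η * R ^ 2 ≤ Δ := by
    refine ⟨min (ρ / 12) (min (1 / (3 * (R + 1))) (Δ / (7 * (R + 1) ^ 2))), by positivity, ?_, ?_,
      ?_⟩
    · linarith [min_le_left (ρ / 12) (min (1 / (3 * ((R : ℝ) + 1))) (Δ / (7 * (R + 1) ^ 2)))]
    · calc _ ≤ 3 * (1 / (3 * ((R : ℝ) + 1))) * (R + 1) := by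
            gcongr
            · exact (min_le_right _ _).trans (min_le_left _ _)
            · linarith
        _ = 1 := by field_simp
    · calc _ ≤ 7 * (Δ / (7 * ((R : ℝ) + 1) ^ 2)) * (R + 1) ^ 2 := by
            gcongr
            · exact (min_le_right _ _).trans (min_le_right _ _)
            · linarith
        _ = Δ := by field_simp
  obtain ⟨W, hW⟩ := pow_unbounded_of_one_lt (c ^ 3 / 128 / (η / 4)) hb
  set ε := min (min (η / 4) (1 / 4)) (c ^ 3 / (512 * b ^ (2 * (2 * (W + 2))))) with hε
  refine ⟨W + 2, η, ε, by rw [hρ]; field_simp; norm_num, hηρ, hηR, hηΔ, by positivity,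
    (min_le_left _ _).trans (min_le_left _ _), (min_le_left _ _).trans (min_le_right _ _), by lia,
    ?_, ?_⟩
  · rw [div_lt_iff₀' (by positivity)] at hW
    calc c ^ 3 / 128 * b ^ 2 ≤ η / 4 * b ^ W * b ^ 2 := by gcongr
      _ = η / 4 * b ^ (W + 2) := by ring
  · calc 3 * ε * b ^ (2 * (2 * (W + 2)))
        ≤ 3 * (c ^ 3 / (512 * b ^ (2 * (2 * (W + 2))))) * b ^ (2 * (2 * (W + 2))) := by
          gcongr
          exact min_le_right _ _
      _ = 3 / 512 * c ^ 3 := by field_simp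
      _ < c ^ 3 / 128 := by linarith [pow_pos hc 3]

theorem scaleVariation_lt_of_nearUnipotent {g : Matrix (Fin 2) (Fin 2) ℝ} {E s b r ε : ℝ} {W : ℕ}
    (hb : 1 ≤ b) (h : NearUnipotent g E s ε) (hε : 3 * ε * b ^ (2 * W) < r) :
    scaleVariation b |dispSlope g s| |g 1 0 / E ^ 2| W < r := by
  have hε0 : 0 ≤ ε := (abs_nonneg _).trans h.lowerLeft
  refine lt_of_le_of_lt ?_ hε
  calc scaleVariation b |dispSlope g s| |g 1 0 / E ^ 2| W
      ≤ 2 * ε * b ^ (2 * W) + ε * b ^ (2 * W) := by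
        unfold scaleVariation
        gcongr
        exacts [h.abs_dispSlope_le, by lia, h.lowerLeft]
    _ = 3 * ε * b ^ (2 * W) := by ring

theorem one_le_scaleVariation {b k g : ℝ} {p m V : ℕ} (hp : 0 < p) (hb : 2 ≤ b) (hg : 0 ≤ g)
    (hkg : ((p : ℝ) ^ m)⁻¹ ≤ k + g) (hV : p * m ≤ V) : 1 ≤ scaleVariation b k g V := by
  have hb1 : 1 ≤ b := by linarith
  have hpb : (p : ℝ) ≤ b ^ p := by
    calc (p : ℝ) ≤ 2 ^ p := mod_cast p.lt_two_pow_self.le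
      _ ≤ b ^ p := by gcongr
  have hpow : (p : ℝ) ^ m ≤ b ^ V := by
    calc (p : ℝ) ^ m ≤ (b ^ p) ^ m := by gcongr
      _ ≤ b ^ V := by rw [← pow_mul]; exact pow_le_pow_right₀ hb1 hV
  calc (1 : ℝ) = ((p : ℝ) ^ m)⁻¹ * (p : ℝ) ^ m := by field_simp
    _ ≤ (k + g) * b ^ V := by
        gcongr
        exact (by positivity : (0 : ℝ) ≤ ((p : ℝ) ^ m)⁻¹).trans hkg
    _ = k * b ^ V + g * b ^ V := add_mul _ _ _
    _ ≤ scaleVariation b k g V := by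
        unfold scaleVariation
        gcongr
        lia

theorem exists_scale_dispVariation {P Q : ℕ → Prop} {g : Matrix (Fin 2) (Fin 2) ℝ}
    {k L i W V : ℕ} {s r : ℝ} (hL : 0 < L) (hr : 0 < r) (hW : 2 ≤ W)
    (hlo : scaleVariation (4 ^ L) |dispSlope g s| |g 1 0 / (2 ^ (k + L * i)) ^ 2| (2 * W) < r)
    (hhi : r ≤ scaleVariation (4 ^ L) |dispSlope g s| |g 1 0 / (2 ^ (k + L * i)) ^ 2| V)
    (hP : SparseBackward 100 P i) (hQ : SparseBackward 100 Q i) (hi : 2 * V + 2 ≤ i) :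
    ∃ σ ι : ℕ, ι ≤ σ ∧ ¬ P (i - σ) ∧ ¬ Q (i - ι) ∧
      dispVariation g (2 ^ (k + L * (i - σ))) (2 ^ (k + L * (i - ι))) s < r ∧
      r ≤ 4 ^ L * dispVariation g (2 ^ (k + L * (i - σ))) (2 ^ (k + L * (i - ι))) s ∧
      |g 1 0 / (2 ^ (k + L * (i - σ))) ^ 2| * (4 ^ L) ^ W ≤ r * (4 ^ L) ^ 2 := by
  obtain ⟨σ, ι, hισ, hσi, hPσ, hQι, hvar, hvar', hslope⟩ := exists_good_scale
    (one_lt_pow₀ (by norm_num) hL.ne') hr (abs_nonneg _) (abs_nonneg _) hW hlo hhi hP hQ hi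
  have hfE := two_pow_sq_eq_mul k L hσi
  have hpow : ∀ m : ℕ, (0 : ℝ) < (4 ^ L) ^ m := fun m => by positivity
  rw [← dispVariation_mul_pow (by positivity) (by positivity) hfE
    (two_pow_sq_eq_mul k L (hισ.trans hσi))] at hvar hvar'
  have hscale : |g 1 0 / (2 ^ (k + L * (i - σ))) ^ 2| =
      |g 1 0 / (2 ^ (k + L * i)) ^ 2| * (4 ^ L) ^ σ := by
    rw [← abs_of_pos (hpow σ), ← abs_mul, hfE]
    congr 1
    field_simp
  exact ⟨σ, ι, hισ, hPσ, hQι, lt_of_mul_lt_mul_right hvar (hpow ι).le,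
    le_of_mul_le_mul_right (by rwa [mul_assoc]) (hpow ι), hscale ▸ hslope⟩

open scoped Classical in
theorem false_of_return {p R R' n d k₀ L i W V : ℕ} {c Δ κ κ' s ρ η ε α : ℝ} {γ : SL(2, ℤ)}
    {S : Finset ℝ} (hp : 2 ≤ p) (hc : 0 < c) (hc1 : c ≤ 1) (hL : 0 < L) (hd : 1 ≤ d)
    (hγ : γ ∈ Gamma0 (p ^ (2 * R))) (hprec : ReturnPrecision c (4 ^ L) Δ R W ρ η ε)
    (hstep : ThresholdStep η d R R' κ κ') (hadm : AdmissibleThreshold c R' κ') (hα : α ≤ ρ / 4)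
    (hS : (S : Set ℝ) ⊆ uniformlyBadlyApproximable p c) (he : R' * (p : ℝ) ^ (n + R') < 2 ^ k₀)
    (hnear : NearUnipotent (returnMatrix p n d γ) (2 ^ (k₀ + L * i)) s ε)
    (hdisp : |disp (returnMatrix p n d γ) (2 ^ (k₀ + L * i)) s| ≤ ε)
    (hV : p * (2 * d) ≤ V) (hi : 2 * V + 2 ≤ i)
    (hconc : SparseBackward 100 (fun j => CellConcentrated quadCell S (k₀ + L * j) L s) i)
    (hdense : SparseBackward 100 (fun j => CellDense 8 quadCell S
      {u ∈ S | ¬ IsStableAt p R R' κ κ' α (2 ^ (k₀ + L * j)) n u} s) i) : False := by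
  have hp0 : 0 < p := by lia
  have hb : (4 : ℝ) ≤ 4 ^ L := le_self_pow₀ (by norm_num) hL.ne'
  have hhi := one_le_scaleVariation (b := 4 ^ L) hp0 (by linarith) (abs_nonneg _)
    (le_abs_dispSlope_add_abs hp (by positivity) hstep.one_le hd hprec.le_quarter hγ hnear hdisp)
    hV
  obtain ⟨σ, ι, hισ, hPσ, hQι, hvar, hvar', hslope⟩ := exists_scale_dispVariation
    (r := c ^ 3 / 128) hL (by positivity) hprec.two_le
    (scaleVariation_lt_of_nearUnipotent (by linarith) hnear hprec.mul_pow_lt)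
    (le_trans (by linarith [pow_le_one₀ hc.le hc1 (n := 3)]) hhi) hconc hdense hi
  obtain ⟨x₁, x₂, x₃, hx, hx₁₂, hx₂₃⟩ := exists_three_separated_of_not_cellConcentrated hPσ
    (not_exists.1 hQι (k₀ + L * (i - σ)))
  have hxmem : ∀ x ∈ ({x₁, x₂, x₃} : Set ℝ), x ∈ uniformlyBadlyApproximable p c ∧
      ((2 : ℝ) ^ (k₀ + L * (i - σ))) ^ 2 * |x - s| ≤ 1 := fun x h => by
    obtain ⟨hxS, hxs⟩ := mem_cell.1 (hx x h).1
    refine ⟨hS hxS, ?_⟩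
    rw [← le_inv_mul_iff₀ (by positivity), mul_one, two_pow_sq]
    exact abs_sub_le_of_quadCell_eq hxs
  rw [pow_add 4 _ L, ← two_pow_sq] at hx₁₂ hx₂₃
  obtain ⟨x, hx', hunstable⟩ := exists_not_isStableAt_of_separated hp0 hc hc1 hγ
    (he.trans_le (pow_le_pow_right₀ one_le_two (Nat.le_add_right _ (L * (i - ι))))) hstep hadm
    (by linarith) hprec.step_eq hprec.error_le_step hprec.le_error hα (by positivity)
    (pow_le_pow_right₀ one_le_two (by gcongr)) (pow_le_pow_right₀ one_le_two (by gcongr; lia))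
    hnear hdisp (le_of_mul_le_mul_right (hslope.trans hprec.le_error_mul_pow) (by positivity))
    hvar hvar' hxmem hx₁₂ hx₂₃
  exact (hx x hx').2 (mem_filter.2 ⟨(mem_cell.1 (hx x hx').1).1, hunstable⟩)

open scoped Classical in
theorem exists_two_mul_card_sparseBackward_le {p L R : ℕ} {c α Δ : ℝ} (hp : 2 ≤ p) (hc : 0 < c)
    (hc1 : c ≤ 1) (hL : 0 < L) (hα : α ≤ c ^ 3 / (2048 * (4 ^ L) ^ 3) / 4) (hΔ : 0 < Δ)
    (hR : 1 ≤ R) :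
    ∃ C : ℕ, 0 < C ∧ ∀ (S : Finset ℝ) (k₀ j N R' : ℕ) (κ κ' : ℝ),
      (S : Set ℝ) ⊆ uniformlyBadlyApproximable p c → 2 * C ∣ N →
      R' * (p : ℝ) ^ (N + R') < 2 ^ k₀ → R + 2 * C < R' → κ + Δ ≤ κ' →
      AdmissibleThreshold c R' κ' → 8 * p * C + 2 ≤ j → ∀ s ∈ S,
      SparseBackward 100 (fun i => CellConcentrated quadCell S (k₀ + L * i) L s) j →
      2 * #{n ∈ range N | SparseBackward 100 (fun i => CellDense 8 quadCell S
        {u ∈ S | ¬ IsStableAt p R R' κ κ' α (2 ^ (k₀ + L * i)) n u} s) j} ≤ N := by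
  have hp0 : 0 < p := by lia
  have hp1 : (1 : ℝ) ≤ p := mod_cast hp0
  obtain ⟨W, η, ε, hprec⟩ :=
    exists_returnPrecision hc (one_lt_pow₀ (by norm_num : (1 : ℝ) < 4) hL.ne') hΔ R
  obtain ⟨C, hC, hreturn⟩ := exists_return hp0 hc hc1 R hprec.pos
  refine ⟨C, hC, fun S k₀ j N R' κ κ' hS hN he hR' hκ hadm hj s hs hconc => ?_⟩
  by_contra! hG
  have he' : ∀ n ∈ range N, R' * (p : ℝ) ^ (n + R') < 2 ^ k₀ := fun n hn => by
    refine he.trans_le' ?_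
    gcongr
    exact (mem_range.1 hn).le
  obtain ⟨n, hn, d, hd, hdC, γ, hγ, hnear, hdisp⟩ := hreturn s (hS hs) (2 ^ (k₀ + L * j)) N _ hN
    (filter_subset _ _) hG fun n hn =>
      (pow_le_of_mul_pow_add_lt hp0 (by lia) (he' n (mem_filter.1 hn).1)).trans
        (pow_le_pow_right₀ one_le_two (Nat.le_add_right _ _))
  obtain ⟨hnN, hdense⟩ := mem_filter.1 hn
  have hstep : ThresholdStep η d R R' κ κ' :=
    ⟨hR, by lia, hprec.error_mul_le, by linarith [hprec.error_mul_sq_le]⟩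
  exact false_of_return hp hc hc1 hL hd hγ hprec hstep hadm hα hS (he' n hnN) hnear hdisp
    (V := 4 * p * C) (by nlinarith) (by lia) hconc hdense

end ReturnBound

section StableThresholds

open Finset

open scoped Classical in
/-- The cells of length `1 / A` of `[-1, 1)` that contain a good point in the coordinate `t`
of `u + t / e ^ 2`; the cell `[a / A, (a + 1) / A)` is encoded by `a`. -/
noncomputable def goodCells (p A R : ℕ) (κ e : ℝ) (n : ℕ) (u : ℝ) : Finset ℤ :=
  {a ∈ Ico (-(A : ℤ)) A | ∃ t : ℝ, ⌊A * t⌋ = a ∧ LatGood p R κ e n (u + t / e ^ 2)}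

variable {p A R R' : ℕ} {c κ κ' e u : ℝ} {n : ℕ}

theorem mem_goodCells {a : ℤ} : a ∈ goodCells p A R κ e n u ↔
    a ∈ Ico (-(A : ℤ)) A ∧ ∃ t : ℝ, ⌊A * t⌋ = a ∧ LatGood p R κ e n (u + t / e ^ 2) := by
  simp only [goodCells, mem_filter]

theorem goodCells_anti (hR : R ≤ R') (hκ : κ ≤ κ') :
    goodCells p A R' κ' e n u ⊆ goodCells p A R κ e n u := fun a ha => by
  obtain ⟨hI, t, ht, hgood⟩ := mem_goodCells.1 ha
  exact mem_goodCells.2 ⟨hI, t, ht, hgood.mono hR hκ⟩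

theorem card_goodCells_le : #(goodCells p A R κ e n u) ≤ 2 * A := by
  refine (card_le_card fun _ ha => (mem_goodCells.1 ha).1).trans ?_
  rw [Int.card_Ico]
  lia

theorem isStableAt_of_goodCells_eq (hA : 0 < A)
    (h : goodCells p A R κ e n u = goodCells p A R' κ' e n u) :
    IsStableAt p R R' κ κ' (1 / A) e n u := by
  intro t ht hgood
  have hA0 : (0 : ℝ) < A := mod_cast hA
  rw [abs_lt] at ht
  have hmem : ⌊A * t⌋ ∈ goodCells p A R κ e n u := by
    refine mem_goodCells.2 ⟨mem_Ico.2 ⟨Int.le_floor.2 ?_, Int.floor_lt.2 ?_⟩, t, rfl, hgood⟩ <;>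
      push_cast <;> nlinarith
  obtain ⟨-, t', hfloor, hgood'⟩ := mem_goodCells.1 (h ▸ hmem)
  have hlt := (Int.abs_sub_lt_one_of_floor_eq_floor hfloor).le
  rw [← mul_sub, abs_mul, abs_of_pos hA0, mul_comm, ← le_div_iff₀ hA0] at hlt
  exact ⟨t', hlt, hgood'⟩

open scoped Classical in
theorem exists_lt_mul_card_not_isStableAt_le {R : ℕ → ℕ} {κ : ℕ → ℝ} {I : ℕ} (hA : 0 < A)
    (hR : Monotone R) (hκ : Monotone κ) (hI : 0 < I) (X : Finset (ℕ × ℝ × ℕ)) (e : ℕ → ℝ) :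
    ∃ i < I, I * #{x ∈ X | ¬ IsStableAt p (R i) (R (i + 1)) (κ i) (κ (i + 1)) (1 / A) (e x.2.2)
      x.1 x.2.1} ≤ 2 * A * #X := by
  obtain ⟨i, hi, hcard⟩ := exists_lt_mul_card_ne_succ_le X
    (Φ := fun i x => goodCells p A (R i) (κ i) (e x.2.2) x.1 x.2.1)
    (fun i _ => goodCells_anti (hR i.le_succ) (hκ i.le_succ)) (fun _ => card_goodCells_le) hI
  refine ⟨i, hi, hcard.trans' ?_⟩
  gcongr with x _
  exact isStableAt_of_goodCells_eq hA

theorem exists_strictMono_add_mul_lt_succ (C : ℕ → ℕ) (R₀ : ℕ) :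
    ∃ R : ℕ → ℕ, StrictMono R ∧ R₀ ≤ R 0 ∧ ∀ i, R i + 2 * C (R i) < R (i + 1) := by
  have hsucc : ∀ i, (fun r => r + 2 * C r + 1)^[i] R₀ + 2 * C ((fun r => r + 2 * C r + 1)^[i] R₀) <
      (fun r => r + 2 * C r + 1)^[i + 1] R₀ := fun i => by
    rw [Function.iterate_succ_apply']
    exact Nat.lt_succ_self _
  exact ⟨_, strictMono_nat_of_lt_succ fun i => (Nat.le_add_right _ _).trans_lt (hsucc i), le_rfl,
    hsucc⟩

theorem admissibleThreshold_of_linear {I i : ℕ} (hc : 0 < c) (hi : i ≤ I) (hR : 4 / c ≤ R) :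
    AdmissibleThreshold c R (c / 2 + i * (c / (2 * I))) := by
  refine ⟨hR, ?_, ?_⟩
  · have : 0 ≤ i * (c / (2 * I)) := by positivity
    linarith
  · calc c / 2 + i * (c / (2 * I)) = c / 2 + i / I * (c / 2) := by ring
      _ ≤ c / 2 + 1 * (c / 2) := by
          gcongr
          exact div_le_one_of_le₀ (mod_cast hi) (by positivity)
      _ = c := by ring

open scoped Classical in
theorem exists_thresholds_two_mul_card_sparseBackward_le {L m : ℕ} (hp : 2 ≤ p) (hc : 0 < c)
    (hc1 : c ≤ 1) (hL : 0 < L) (hm : 0 < m) :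
    ∃ (A N J : ℕ) (R : ℕ → ℕ) (κ : ℕ → ℝ), 0 < A ∧ 0 < N ∧ Monotone R ∧ Monotone κ ∧
      ∀ i < 2 * A * m, ∀ (S : Finset ℝ) (k₀ j : ℕ),
      (S : Set ℝ) ⊆ uniformlyBadlyApproximable p c → J ≤ k₀ → J ≤ j → ∀ s ∈ S,
      SparseBackward 100 (fun l => CellConcentrated quadCell S (k₀ + L * l) L s) j →
      2 * #{n ∈ range N | SparseBackward 100 (fun l => CellDense 8 quadCell S
        {u ∈ S | ¬ IsStableAt p (R i) (R (i + 1)) (κ i) (κ (i + 1)) (1 / A) (2 ^ (k₀ + L * l)) n u}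
        s) j} ≤ N := by
  obtain ⟨A, hA, hα⟩ := Real.exists_nat_pos_inv_lt
    (show 0 < c ^ 3 / (2048 * (4 ^ L) ^ 3) / 4 by positivity)
  set I := 2 * A * m
  have : 0 < I := by positivity
  choose! C hC hbound using fun R => exists_two_mul_card_sparseBackward_le (R := R) hp hc hc1 hL
    ((one_div (A : ℝ)).trans_le hα.le) (show 0 < c / (2 * I) by positivity)
  obtain ⟨R, hR, hR₀, hsucc⟩ := exists_strictMono_add_mul_lt_succ C (max 1 ⌈4 / c⌉₊)
  have hR1 : ∀ i, 1 ≤ R i := fun i => (le_max_left _ _).trans (hR₀.trans (hR.monotone i.zero_le))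
  have hRc : ∀ i, 4 / c ≤ R i := fun i => (Nat.le_ceil _).trans
    (mod_cast (le_max_right _ _).trans (hR₀.trans (hR.monotone i.zero_le)))
  set N := ∏ i ∈ range I, 2 * C (R i)
  have hN : 0 < N := prod_pos fun i _ => by have := hC _ (hR1 i); lia
  obtain ⟨J, hJ⟩ := pow_unbounded_of_one_lt (R I * (p : ℝ) ^ (N + R I)) one_lt_two
  refine ⟨A, N, max J (8 * p * N + 2), R, fun i => c / 2 + i * (c / (2 * I)), hA, hN, hR.monotone,
    fun i i' hi => by dsimp only; gcongr, fun i hi S k₀ j hS hk₀ hj => ?_⟩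
  have hdvd : 2 * C (R i) ∣ N := dvd_prod_of_mem (fun i => 2 * C (R i)) (mem_range.2 hi)
  have hCN : 8 * p * C (R i) ≤ 8 * p * N :=
    Nat.mul_le_mul_left _ ((Nat.le_mul_of_pos_left _ two_pos).trans (Nat.le_of_dvd hN hdvd))
  refine hbound (R i) (hR1 i) S k₀ j N (R (i + 1)) _ _ hS hdvd ?_ (hsucc i) ?_
    (admissibleThreshold_of_linear hc hi (hRc _)) (by lia)
  · have hRI : R (i + 1) ≤ R I := hR.monotone hi
    calc R (i + 1) * (p : ℝ) ^ (N + R (i + 1)) ≤ R I * (p : ℝ) ^ (N + R I) := by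
          gcongr
          exact mod_cast by lia
      _ < 2 ^ J := hJ
      _ ≤ 2 ^ k₀ := pow_le_pow_right₀ one_le_two ((le_max_left _ _).trans hk₀)
  · push_cast
    linarith

theorem dimH_uniformlyBadlyApproximable (hp : 2 ≤ p) (hc : 0 < c) (hc1 : c ≤ 1) :
    dimH (uniformlyBadlyApproximable p c) = 0 := by
  classical
  by_contra hdim
  obtain ⟨L, hL, hsample⟩ := exists_branching_sample hdim
  obtain ⟨A, N, J, R, κ, hA, hN, hR, hκ, hbound⟩ :=
    exists_thresholds_two_mul_card_sparseBackward_le hp hc hc1 hL (m := 6400) (by norm_num)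
  have hH : 0 < 4 * J + 1 := by lia
  obtain ⟨k₀, hk₀, S, hSne, hS, hconc⟩ := hsample J (4 * J + 1) hH
  obtain ⟨i, hi, hstable⟩ := exists_lt_mul_card_not_isStableAt_le (p := p) hA hR hκ
    (show 0 < 2 * A * 6400 by positivity) (range N ×ˢ S ×ˢ range (4 * J + 1))
    fun l => 2 ^ (k₀ + L * l)
  rw [mul_assoc, card_product, card_product, card_range, card_range] at hstable
  replace hstable := Nat.le_of_mul_le_mul_left hstable (show 0 < 2 * A by positivity)
  obtain ⟨s, hs, j, hj, hsparse, hcard⟩ := exists_uniformly_sparse (J := J) hSne isRefining_quadCell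
    hH hN (by lia) (P := fun s l => CellConcentrated quadCell S (k₀ + L * l) L s)
    (Q := fun n u l =>
      ¬ IsStableAt p (R i) (R (i + 1)) (κ i) (κ (i + 1)) (1 / A) (2 ^ (k₀ + L * l)) n u)
    (by convert hconc) (by convert hstable)
  refine Nat.not_lt.2 (hbound i hi S k₀ j hS hk₀ (mem_Ico.1 hj).1 s hs hsparse) ?_
  convert hcard

end StableThresholds

section PadicNorm

variable {p : ℕ}

theorem padicNorm_natCast_le_of_pow_dvd (hp : 2 ≤ p) {n m : ℕ} (hm : m ≠ 0) (h : p ^ n ∣ m) :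
    padicNorm p (m : ℚ) ≤ ((p : ℚ) ^ n)⁻¹ := by
  have hp1 : (1 : ℚ) ≤ p := mod_cast one_le_two.trans hp
  have hfin : FiniteMultiplicity p m := Nat.finiteMultiplicity_iff.2 ⟨by lia, by lia⟩
  have hval : n ≤ padicValNat p m := by
    rw [padicValNat_def' (by lia) hm]
    exact hfin.le_multiplicity_of_pow_dvd h
  rw [padicNorm, if_neg (mod_cast hm), padicValRat.of_nat, zpow_neg, zpow_natCast]
  gcongr

theorem nearestIntDist_nonneg (z : ℝ) : 0 ≤ nearestIntDist z :=
  Real.iInf_nonneg fun _ => abs_nonneg _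

theorem nearestIntDist_le (z : ℝ) (k : ℤ) : nearestIntDist z ≤ |z - k| :=
  ciInf_le ⟨0, Set.forall_mem_range.2 fun _ => abs_nonneg _⟩ k

theorem nearestIntDist_natAbs_mul_le (q m : ℤ) (x : ℝ) :
    nearestIntDist (q.natAbs * x) ≤ |q * x - m| := by
  rw [Nat.cast_natAbs, Int.cast_abs]
  rcases abs_choice (q : ℝ) with hq | hq <;> rw [hq]
  · exact nearestIntDist_le _ m
  · refine (nearestIntDist_le _ (-m)).trans_eq ?_
    rw [← abs_neg]
    push_cast
    ring_nf

theorem uniformlyBadlyApproximable_anti {c c' : ℝ} (h : c ≤ c') :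
    uniformlyBadlyApproximable p c' ⊆ uniformlyBadlyApproximable p c :=
  fun _ hu n q m hq => h.trans (hu n q m hq)

theorem mem_uniformlyBadlyApproximable_of_le (hp : 2 ≤ p) {u a : ℝ} {N : ℕ} (hN : 1 ≤ N)
    (h : ∀ q : ℕ, N ≤ q →
      a ≤ (q : ℝ) * (padicNorm p (q : ℚ) : ℝ) * nearestIntDist ((q : ℝ) * u)) :
    u ∈ uniformlyBadlyApproximable p (a / N ^ 2) := by
  intro n q m hq
  have : 0 < p := by lia
  have hN0 : (0 : ℝ) < N := mod_cast hN
  set Q := N * p ^ (2 * n) * q.natAbs with hQ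
  have hNQ : N ≤ Q := (Nat.le_mul_of_pos_right _ (by positivity)).trans
    (Nat.le_mul_of_pos_right _ (Int.natAbs_pos.2 hq))
  have hcast : (Q : ℝ) = N * p ^ (2 * n) * |(q : ℝ)| := by
    rw [hQ]
    push_cast [Nat.cast_natAbs]
    rfl
  have hnorm : (padicNorm p (Q : ℚ) : ℝ) ≤ ((p : ℝ) ^ (2 * n))⁻¹ := by
    simpa using (Rat.cast_le (K := ℝ)).2 (padicNorm_natCast_le_of_pow_dvd hp
      (by lia : Q ≠ 0) (Dvd.intro_left _ rfl |>.mul_right _))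
  have hdist : nearestIntDist (Q * u) ≤ N * |(p : ℝ) ^ (2 * n) * q * u - m| := by
    calc nearestIntDist (Q * u)
        = nearestIntDist (q.natAbs * (N * p ^ (2 * n) * u)) := by rw [hQ]; push_cast; ring_nf
      _ ≤ |q * (N * p ^ (2 * n) * u) - (N * m : ℤ)| := nearestIntDist_natAbs_mul_le _ _ _
      _ = |N * ((p : ℝ) ^ (2 * n) * q * u - m)| := by push_cast; ring_nf
      _ = N * |(p : ℝ) ^ (2 * n) * q * u - m| := by rw [abs_mul, abs_of_pos hN0]
  rw [div_le_iff₀ (by positivity)]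
  calc a ≤ Q * (padicNorm p (Q : ℚ) : ℝ) * nearestIntDist (Q * u) := h Q hNQ
    _ ≤ Q * ((p : ℝ) ^ (2 * n))⁻¹ * (N * |(p : ℝ) ^ (2 * n) * q * u - m|) := by
        gcongr
        exact nearestIntDist_nonneg _
    _ = |(q : ℝ)| * |(p : ℝ) ^ (2 * n) * q * u - m| * N ^ 2 := by
        rw [hcast]
        field_simp

theorem exists_mem_uniformlyBadlyApproximable (hp : 2 ≤ p) {u : ℝ}
    (hu : 0 < Filter.liminf
      (fun q : ℕ => (q : ℝ) * (padicNorm p (q : ℚ) : ℝ) * nearestIntDist ((q : ℝ) * u))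
      Filter.atTop) :
    ∃ c > 0, u ∈ uniformlyBadlyApproximable p c := by
  obtain ⟨a, ha, hau⟩ := exists_between hu
  have hbdd : Filter.IsBoundedUnder (· ≥ ·) Filter.atTop
      (fun q : ℕ => (q : ℝ) * (padicNorm p (q : ℚ) : ℝ) * nearestIntDist ((q : ℝ) * u)) := by
    refine Filter.isBoundedUnder_of ⟨0, fun q => ?_⟩
    have hnorm : (0 : ℝ) ≤ padicNorm p (q : ℚ) := mod_cast padicNorm.nonneg _
    have hdist := nearestIntDist_nonneg (q * u)
    positivity
  obtain ⟨N, hN⟩ := Filter.eventually_atTop.1 (Filter.eventually_lt_of_lt_liminf hau hbdd)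
  exact ⟨a / (max N 1 : ℕ) ^ 2, by positivity, mem_uniformlyBadlyApproximable_of_le hp
    (le_max_right _ _) fun q hq => (hN q ((le_max_left _ _).trans hq)).le⟩

/-- For composite `p`, `padicNorm p q` is `p ^ (-k)` with `p ^ k` the largest power of `p`
dividing the integer `q ≠ 0`. -/
theorem dimH_set_liminf_padic_pos_eq_zero_general {p : ℕ} (hp : 2 ≤ p) :
    dimH {u : ℝ |
      0 < Filter.liminf
        (fun q : ℕ => (q : ℝ) * (padicNorm p (q : ℚ) : ℝ) * nearestIntDist ((q : ℝ) * u))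
        Filter.atTop} = 0 := by
  refine le_antisymm ?_ zero_le
  calc _ ≤ dimH (⋃ M : ℕ, uniformlyBadlyApproximable p (1 / (M + 1))) := by
        refine dimH_mono fun u hu => ?_
        obtain ⟨c, hc, hmem⟩ := exists_mem_uniformlyBadlyApproximable hp hu
        obtain ⟨M, hM⟩ := exists_nat_one_div_lt hc
        exact Set.mem_iUnion.2 ⟨M, uniformlyBadlyApproximable_anti hM.le hmem⟩
    _ = ⨆ M : ℕ, dimH (uniformlyBadlyApproximable p (1 / (M + 1))) := dimH_iUnion _
    _ ≤ 0 := iSup_le fun M => (dimH_uniformlyBadlyApproximable hp Nat.one_div_pos_of_nat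
        (div_le_one_of_le₀ (by linarith [M.cast_nonneg (α := ℝ)]) (by positivity))).le

end PadicNorm

/-- The set of real numbers `u` with `liminf_{q → ∞} q·|q|_p·⟨qu⟩ > 0` has Hausdorff
dimension zero. -/
theorem dimH_set_liminf_padic_pos_eq_zero (p : ℕ) (hp : p.Prime) :
    dimH {u : ℝ |
      0 < Filter.liminf
        (fun q : ℕ => (q : ℝ) * (padicNorm p (q : ℚ) : ℝ) * nearestIntDist ((q : ℝ) * u))
        Filter.atTop} = 0 :=
  dimH_set_liminf_padic_pos_eq_zero_general hp.two_le
end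

section
/- Mahler's criterion for X: a subset L ⊆ X has compact closure in X if and only if there exists δ > 0 such that L ⊆ K_δ. -/
open Matrix MatrixGroups

/-- Topology on the special linear group, induced from the space of matrices. -/
instance Matrix.SpecialLinearGroup.topologicalSpace {n : Type*} [DecidableEq n] [Fintype n]
    {R : Type*} [CommRing R] [TopologicalSpace R] :
    TopologicalSpace (Matrix.SpecialLinearGroup n R) :=
  TopologicalSpace.induced (fun A => (A : Matrix n n R)) inferInstance

/-- The ring `ℤ[1/p]`, realized as the localization of `ℤ` away from `p`. -/
abbrev ZInvP (p : ℕ) : Type := Localization.Away (p : ℤ)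

/-- The canonical ring homomorphism `ℤ[1/p] → ℝ`. -/
noncomputable def zInvPToR (p : ℕ) [Fact p.Prime] : ZInvP p →+* ℝ :=
  Localization.awayLift (Int.castRingHom ℝ) (p : ℤ) (by
    have hp : ((p : ℤ) : ℝ) ≠ 0 := by
      exact_mod_cast Int.natCast_ne_zero.mpr (Fact.out : p.Prime).ne_zero
    simpa [isUnit_iff_ne_zero] using hp)

/-- The canonical ring homomorphism `ℤ[1/p] → ℚ_p`. -/
noncomputable def zInvPToQp (p : ℕ) [Fact p.Prime] : ZInvP p →+* ℚ_[p] :=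
  Localization.awayLift (Int.castRingHom ℚ_[p]) (p : ℤ) (by
    have hp : ((p : ℤ) : ℚ_[p]) ≠ 0 := by
      exact_mod_cast Int.natCast_ne_zero.mpr (Fact.out : p.Prime).ne_zero
    simpa [isUnit_iff_ne_zero] using hp)

/-- The group `G = SL(2,ℝ) × SL(2,ℚ_p)`. -/
abbrev GP (p : ℕ) [Fact p.Prime] : Type := SL(2, ℝ) × SL(2, ℚ_[p])

/-- The diagonal embedding `ι : SL(2,ℤ[1/p]) → G`, `ι(A) = (A, A)`. -/
noncomputable def iotaP (p : ℕ) [Fact p.Prime] : SL(2, ZInvP p) →* GP p :=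
  (Matrix.SpecialLinearGroup.map (zInvPToR p)).prod
    (Matrix.SpecialLinearGroup.map (zInvPToQp p))

/-- The lattice `Γ = ι(SL(2,ℤ[1/p]))` as a subgroup of `G`. -/
noncomputable def GammaP (p : ℕ) [Fact p.Prime] : Subgroup (GP p) := (iotaP p).range

/-- The homogeneous space `X = G/Γ` (with the quotient topology). -/
abbrev XP (p : ℕ) [Fact p.Prime] : Type := GP p ⧸ GammaP p

/-- The lattice `Λ_x ⊆ ℝ² × ℚ_p²` attached to a point `x ∈ X`: for any representative
`(A,B)` of `x`, it is the set of pairs `(A·w, B·w)` with `w ∈ ℤ[1/p]²`. -/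
def LambdaP (p : ℕ) [Fact p.Prime] (x : XP p) : Set ((Fin 2 → ℝ) × (Fin 2 → ℚ_[p])) :=
  {v | ∃ (g : GP p) (w : Fin 2 → ZInvP p), QuotientGroup.mk g = x ∧
        v = ((g.1 : Matrix (Fin 2) (Fin 2) ℝ).mulVec (fun i => zInvPToR p (w i)),
             (g.2 : Matrix (Fin 2) (Fin 2) ℚ_[p]).mulVec (fun i => zInvPToQp p (w i)))}

/-- `K_δ = {x ∈ X : Λ_x ∩ B_δ(0) = {0}}` (the ball taken in the sup metric on `ℝ²×ℚ_p²`). -/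
def KdeltaP (p : ℕ) [Fact p.Prime] (δ : ℝ) : Set (XP p) :=
  {x | LambdaP p x ∩ Metric.ball 0 δ = {0}}

/-! Strong approximation for `SL(2)` and Gauss reduction of positive definite binary quadratic forms
show that every point of `X` has a representative `(A, B)` for which `B` has entries in `ℤ_p` and
the columns `a₀, a₁` of `A` satisfy `‖a₀‖ ‖a₁‖ ≤ 2`. If the point lies in `K_δ`, testing the
lattice on `pᵏ eⱼ` with `p⁻ᵏ < δ` gives `‖aⱼ‖ ≥ δ p⁻ᵏ`. So the entries of `A` are bounded in
terms of `δ`, and the closed set `K_δ` lies in the image of a compact set of pairs `(A, B)`.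

Conversely, `ℤ[1/p]` meets the open unit ball of `ℝ × ℚ_p` only in `0`, and an element of `G`
expands distances by a locally bounded factor. Hence every point of `X` has some `K_δ` as a
neighbourhood, and a compact set lies in a single `K_δ` because `K_δ` grows as `δ` shrinks. -/

section

open Topology
open scoped Matrix.Norms.Elementwise

section Matrices

theorem norm_mulVec_le {m n R : Type*} [Fintype m] [Fintype n] [NonUnitalSeminormedRing R]
    (A : Matrix m n R) (v : n → R) : ‖A *ᵥ v‖ ≤ Fintype.card n * ‖A‖ * ‖v‖ := by
  refine (pi_norm_le_iff_of_nonneg (by positivity)).2 fun i ↦ ?_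
  calc ‖∑ j, A i j * v j‖ ≤ ∑ j, ‖A i j * v j‖ := norm_sum_le _ _
    _ ≤ ∑ _j, ‖A‖ * ‖v‖ := by
      gcongr with j
      refine (norm_mul_le _ _).trans ?_
      gcongr
      exacts [norm_entry_le_entrywise_sup_norm A, norm_le_pi_norm v j]
    _ = Fintype.card n * ‖A‖ * ‖v‖ := by simp [mul_assoc]

theorem norm_mul_le_of_isUltrametricDist {l m n R : Type*} [Fintype l] [Fintype m] [Fintype n]
    [NonUnitalSeminormedRing R] [IsUltrametricDist R] (A : Matrix l m R) (B : Matrix m n R) :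
    ‖A * B‖ ≤ ‖A‖ * ‖B‖ := by
  refine (Matrix.norm_le_iff (by positivity)).2 fun i j ↦ ?_
  refine IsUltrametricDist.norm_sum_le_of_forall_le_of_nonneg (by positivity) fun k _ ↦ ?_
  refine (norm_mul_le _ _).trans ?_
  gcongr <;> exact norm_entry_le_entrywise_sup_norm _

theorem sq_norm_le_sum_sq {n : Type*} [Fintype n] (v : n → ℝ) : ‖v‖ ^ 2 ≤ ∑ i, v i ^ 2 := by
  have hsum : 0 ≤ ∑ i, v i ^ 2 := Finset.sum_nonneg fun i _ ↦ sq_nonneg (v i)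
  refine (Real.le_sqrt (norm_nonneg v) hsum).1 ((pi_norm_le_iff_of_nonneg (by positivity)).2 ?_)
  exact fun i ↦ Real.abs_le_sqrt
    (Finset.single_le_sum (fun j _ ↦ sq_nonneg (v j)) (Finset.mem_univ i))

theorem norm_col_le_norm {m n R : Type*} [Fintype m] [Fintype n] [SeminormedAddCommGroup R]
    (A : Matrix m n R) (j : n) : ‖A.col j‖ ≤ ‖A‖ :=
  (pi_norm_le_iff_of_nonneg (norm_nonneg A)).2 fun _ ↦ norm_entry_le_entrywise_sup_norm A

theorem norm_le_of_norm_col_mul_norm_col_le {m R : Type*} [Fintype m]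
    [SeminormedAddCommGroup R] {A : Matrix m (Fin 2) R} {c C : ℝ} (hc : 0 < c)
    (hcol : ∀ j, c ≤ ‖A.col j‖) (hprod : ‖A.col 0‖ * ‖A.col 1‖ ≤ C) : ‖A‖ ≤ C / c := by
  have hC : 0 ≤ C := le_trans (by positivity) hprod
  refine (Matrix.norm_le_iff (by positivity)).2 fun i j ↦ ?_
  refine (norm_le_pi_norm (A.col j) i).trans ((le_div_iff₀ hc).2 (le_trans ?_ hprod))
  fin_cases j
  · exact mul_le_mul_of_nonneg_left (hcol 1) (norm_nonneg _)
  · rw [mul_comm]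
    exact mul_le_mul_of_nonneg_right (hcol 0) (norm_nonneg _)

theorem isCompact_setOf_specialLinearGroup_norm_le {n K : Type*} [Fintype n] [DecidableEq n]
    [NormedField K] [ProperSpace K] (R : ℝ) :
    IsCompact {A : SpecialLinearGroup n K | ‖(A : Matrix n n K)‖ ≤ R} := by
  have : ProperSpace (Matrix n n K) := inferInstanceAs (ProperSpace (n → n → K))
  have hball := SpecialLinearGroup.isClosedEmbedding_val.isCompact_preimage
    (isCompact_closedBall (0 : Matrix n n K) R)
  have hpre : {A : SpecialLinearGroup n K | ‖(A : Matrix n n K)‖ ≤ R} =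
      Subtype.val ⁻¹' Metric.closedBall (0 : Matrix n n K) R :=
    Set.ext fun A ↦ mem_closedBall_zero_iff.symm
  exact hpre ▸ hball

-- Mathlib's instance is for its own topology on the special linear group, which is definitionally
-- but not reducibly equal to the one declared above.
instance specialLinearGroup_isTopologicalGroup {n R : Type*} [DecidableEq n] [Fintype n]
    [CommRing R] [TopologicalSpace R] [IsTopologicalRing R] :
    IsTopologicalGroup (SpecialLinearGroup n R) :=
  SpecialLinearGroup.topologicalGroup

theorem denseRange_SL2_map {R K : Type*} [CommRing R] [Field K] [TopologicalSpace K]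
    [IsTopologicalRing K] {f : R →+* K} (hf : DenseRange f) :
    DenseRange (SpecialLinearGroup.map (n := Fin 2) f) := by
  intro B
  let H := (SpecialLinearGroup.map (n := Fin 2) f).range.topologicalClosure
  change B ∈ H
  refine SL2.transvection_induction (· ∈ H) (fun i j hij c ↦ ?_) (fun _ _ ↦ mul_mem) B
  have hcont : Continuous fun c : K ↦ SpecialLinearGroup.transvection hij c := by
    refine continuous_induced_rng.2 (continuous_const.add (continuous_matrix fun k l ↦ ?_))
    by_cases h : i = k ∧ j = l <;> simp [h, continuous_id', continuous_const]
  refine hf.induction_on c ((Subgroup.isClosed_topologicalClosure _).preimage hcont) fun a ↦ ?_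
  refine subset_closure ⟨SpecialLinearGroup.transvection hij a, ?_⟩
  ext k l
  simp [SpecialLinearGroup.transvection_coe, Matrix.one_apply, single_apply, apply_ite f]

end Matrices

section GaussReduction

theorem prod_sum_sq_eq_normSq_div_im_sq (A : SL(2, ℝ)) :
    (∑ i, A i 0 ^ 2) * ∑ i, A i 1 ^ 2 =
      Complex.normSq ↑(A⁻¹ • UpperHalfPlane.I) / (A⁻¹ • UpperHalfPlane.I).im ^ 2 := by
  have hdet := A.det_coe
  rw [det_fin_two] at hdet
  have hcol : A 0 0 ^ 2 + A 1 0 ^ 2 ≠ 0 := fun h ↦ by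
    have h0 : A 0 0 = 0 := by nlinarith
    have h1 : A 1 0 = 0 := by nlinarith
    simp [h0, h1] at hdet
  have hz : (↑(A⁻¹ • UpperHalfPlane.I) : ℂ) =
      (A 1 1 * Complex.I - A 0 1) / (A 0 0 - A 1 0 * Complex.I) := by
    rw [UpperHalfPlane.coe_specialLinearGroup_apply]
    simp [SpecialLinearGroup.SL2_inv_expl, sub_eq_neg_add, add_comm]
  have him : (A⁻¹ • UpperHalfPlane.I).im = 1 / (A 0 0 ^ 2 + A 1 0 ^ 2) := by
    calc (A⁻¹ • UpperHalfPlane.I).im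
        = (A 0 0 * A 1 1 - A 0 1 * A 1 0) / (A 0 0 ^ 2 + A 1 0 ^ 2) := by
          rw [← UpperHalfPlane.coe_im, hz]
          simp [Complex.div_im, Complex.normSq_apply, ← sub_div, ← sq, mul_comm]
      _ = 1 / (A 0 0 ^ 2 + A 1 0 ^ 2) := by rw [hdet]
  have hnormSq : Complex.normSq ↑(A⁻¹ • UpperHalfPlane.I) =
      (A 0 1 ^ 2 + A 1 1 ^ 2) / (A 0 0 ^ 2 + A 1 0 ^ 2) := by
    rw [hz]
    simp [Complex.normSq_apply, ← sq]
  rw [him, hnormSq, Fin.sum_univ_two, Fin.sum_univ_two]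
  field_simp

theorem normSq_div_im_sq_le_of_mem_fd {z : UpperHalfPlane} (hz : z ∈ ModularGroup.fd) :
    Complex.normSq z / z.im ^ 2 ≤ 4 / 3 := by
  have him := ModularGroup.three_le_four_mul_im_sq_of_mem_fd hz
  have hre : z.re ^ 2 ≤ 1 / 4 := by
    rw [← sq_abs]
    nlinarith [hz.2, abs_nonneg z.re]
  rw [div_le_iff₀ (by positivity), Complex.normSq_apply, UpperHalfPlane.coe_re,
    UpperHalfPlane.coe_im]
  linarith

-- `A⁻¹ • i` is the root in the upper half plane of the quadratic form with Gram matrix `Aᵀ A`, so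
-- moving it into the fundamental domain of `SL(2, ℤ)` is Gauss reduction of this form.
theorem exists_norm_col_mul_norm_col_le_two (A : SL(2, ℝ)) :
    ∃ γ : SL(2, ℤ), ‖(A * SpecialLinearGroup.map (Int.castRingHom ℝ) γ).1.col 0‖ *
      ‖(A * SpecialLinearGroup.map (Int.castRingHom ℝ) γ).1.col 1‖ ≤ 2 := by
  obtain ⟨γ, hγ⟩ := ModularGroup.exists_smul_mem_fd (A⁻¹ • UpperHalfPlane.I)
  refine ⟨γ⁻¹, ?_⟩
  set B : SL(2, ℝ) := A * SpecialLinearGroup.map (Int.castRingHom ℝ) γ⁻¹ with hB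
  have hBI : B⁻¹ • UpperHalfPlane.I = γ • A⁻¹ • UpperHalfPlane.I := by
    rw [hB, _root_.mul_inv_rev, mul_smul, map_inv, inv_inv]
    rfl
  rw [← hBI] at hγ
  have hprod : (‖B.1.col 0‖ * ‖B.1.col 1‖) ^ 2 ≤ 4 / 3 := by
    calc (‖B.1.col 0‖ * ‖B.1.col 1‖) ^ 2 = ‖B.1.col 0‖ ^ 2 * ‖B.1.col 1‖ ^ 2 := mul_pow ..
      _ ≤ (∑ i, B i 0 ^ 2) * ∑ i, B i 1 ^ 2 :=
        mul_le_mul (sq_norm_le_sum_sq _) (sq_norm_le_sum_sq _) (by positivity)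
          (Finset.sum_nonneg fun i _ ↦ sq_nonneg (B i 0))
      _ ≤ 4 / 3 := prod_sum_sq_eq_normSq_div_im_sq B ▸ normSq_div_im_sq_le_of_mem_fd hγ
  exact (abs_le_of_sq_le_sq' (by linarith) zero_le_two).2

end GaussReduction

section SIntegers

variable {p : ℕ} [Fact p.Prime]

theorem exists_intCast_of_norm_le_one {z : ZInvP p} (hz : ‖zInvPToQp p z‖ ≤ 1) :
    ∃ m : ℤ, z = m := by
  obtain ⟨n, a, h⟩ := IsLocalization.Away.surj (p : ℤ) z
  have hQ : zInvPToQp p z * (p : ℚ_[p]) ^ n = a := by simpa using congrArg (zInvPToQp p) h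
  have ha : ‖(a : ℚ_[p])‖ ≤ (p : ℝ) ^ (-n : ℤ) := by
    rw [← hQ, norm_mul, norm_pow, Padic.norm_p, _root_.zpow_neg, zpow_natCast, inv_pow]
    exact mul_le_of_le_one_left (by positivity) hz
  obtain ⟨m, rfl⟩ := (Padic.norm_int_le_pow_iff_dvd a n).1 ha
  refine ⟨m, ((IsLocalization.Away.algebraMap_isUnit (p : ℤ)).pow n).mul_right_cancel ?_⟩
  rw [h]
  simp [mul_comm]

theorem one_le_norm_zInvPToR_zInvPToQp {z : ZInvP p} (hz : z ≠ 0) :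
    1 ≤ ‖(zInvPToR p z, zInvPToQp p z)‖ := by
  by_contra! h
  obtain ⟨hR, hQ⟩ := max_lt_iff.1 h
  obtain ⟨m, rfl⟩ := exists_intCast_of_norm_le_one hQ.le
  simp only [map_intCast, Real.norm_eq_abs] at hR
  have hm : |m| < 1 := by exact_mod_cast hR
  exact hz (by rw [Int.abs_lt_one_iff.1 hm, Int.cast_zero])

theorem denseRange_zInvPToQp : DenseRange (zInvPToQp p) := by
  let S := (zInvPToQp p).range.topologicalClosure
  have hint (y : ℤ_[p]) : (y : ℚ_[p]) ∈ S := by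
    refine PadicInt.denseRange_intCast.induction_on y
      ((Subring.isClosed_topologicalClosure _).preimage continuous_subtype_val) fun m ↦ ?_
    simp
  have hinv : (p : ℚ_[p])⁻¹ ∈ S := by
    refine Subring.le_topologicalClosure _ ⟨IsLocalization.Away.invSelf (p : ℤ), ?_⟩
    refine eq_inv_of_mul_eq_one_right ?_
    simpa using congrArg (zInvPToQp p) (IsLocalization.Away.mul_invSelf (S := ZInvP p) (p : ℤ))
  intro x
  have hp : 1 < (p : ℝ) := by exact_mod_cast (Fact.out : p.Prime).one_lt
  obtain ⟨k, hk⟩ := pow_unbounded_of_one_lt ‖x‖ hp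
  have hpkx : ‖(p : ℚ_[p]) ^ k * x‖ ≤ 1 := by
    rw [norm_mul, norm_pow, Padic.norm_p, inv_pow, inv_mul_le_iff₀ (by positivity), mul_one]
    exact hk.le
  have hx : (p : ℚ_[p])⁻¹ ^ k * (p ^ k * x) ∈ S := mul_mem (pow_mem hinv k) (hint ⟨_, hpkx⟩)
  have hp0 : (p : ℚ_[p]) ≠ 0 := by exact_mod_cast (Fact.out : p.Prime).ne_zero
  rwa [inv_pow, inv_mul_cancel_left₀ (pow_ne_zero k hp0)] at hx

theorem exists_norm_mul_map_zInvPToQp_le_one (B : SL(2, ℚ_[p])) :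
    ∃ γ : SL(2, ZInvP p), ‖(B * SpecialLinearGroup.map (zInvPToQp p) γ).1‖ ≤ 1 := by
  have : IsUltrametricDist (Matrix (Fin 2) (Fin 2) ℚ_[p]) :=
    inferInstanceAs (IsUltrametricDist (Fin 2 → Fin 2 → ℚ_[p]))
  have hcont : Continuous fun C : SL(2, ℚ_[p]) ↦ (B * C).1 :=
    continuous_induced_dom.comp (continuous_const_mul B)
  have hopen := (IsUltrametricDist.isOpen_closedBall
    (0 : Matrix (Fin 2) (Fin 2) ℚ_[p]) one_ne_zero).preimage hcont
  have hne : B⁻¹ ∈ (fun C : SL(2, ℚ_[p]) ↦ (B * C).1) ⁻¹' Metric.closedBall 0 1 := by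
    rw [Set.mem_preimage, mem_closedBall_zero_iff, mul_inv_cancel, Matrix.norm_le_iff zero_le_one]
    intro i j
    rcases eq_or_ne i j with rfl | hij <;> simp [*]
  obtain ⟨γ, hγ⟩ := (denseRange_SL2_map denseRange_zInvPToQp).exists_mem_open hopen ⟨_, hne⟩
  exact ⟨γ, mem_closedBall_zero_iff.1 hγ⟩

theorem norm_map_intCast_le_one {m : Type*} [Fintype m] [DecidableEq m]
    (γ : SpecialLinearGroup m ℤ) :
    ‖(SpecialLinearGroup.map (Int.castRingHom ℚ_[p]) γ).1‖ ≤ 1 :=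
  (Matrix.norm_le_iff zero_le_one).2 fun i j ↦ Padic.norm_int_le_one (γ i j)

end SIntegers

section Action

variable {p : ℕ} [Fact p.Prime]

/-- The linear action of `G` on `ℝ² × ℚ_p²`, factor by factor. -/
noncomputable def actP (g : GP p) (v : (Fin 2 → ℝ) × (Fin 2 → ℚ_[p])) :
    (Fin 2 → ℝ) × (Fin 2 → ℚ_[p]) :=
  (g.1.1 *ᵥ v.1, g.2.1 *ᵥ v.2)

/-- The diagonal embedding `ℤ[1/p]² → ℝ² × ℚ_p²`; its image is the lattice of the base point
of `X`. -/
noncomputable def diagP (w : Fin 2 → ZInvP p) : (Fin 2 → ℝ) × (Fin 2 → ℚ_[p]) :=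
  (zInvPToR p ∘ w, zInvPToQp p ∘ w)

/-- The size of `g ∈ G`: the largest absolute value of an entry of either component. -/
noncomputable def normP (g : GP p) : ℝ := max ‖g.1.1‖ ‖g.2.1‖

theorem actP_actP (g h : GP p) (v : (Fin 2 → ℝ) × (Fin 2 → ℚ_[p])) :
    actP g (actP h v) = actP (g * h) v :=
  Prod.ext (mulVec_mulVec v.1 g.1.1 h.1.1) (mulVec_mulVec v.2 g.2.1 h.2.1)

theorem actP_zero (g : GP p) : actP g 0 = 0 := by
  simp [actP]

theorem actP_inv_actP (g : GP p) (v : (Fin 2 → ℝ) × (Fin 2 → ℚ_[p])) :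
    actP g⁻¹ (actP g v) = v := by
  rw [actP_actP, inv_mul_cancel]
  simp [actP]

theorem actP_iotaP_diagP (γ : SL(2, ZInvP p)) (w : Fin 2 → ZInvP p) :
    actP (iotaP p γ) (diagP w) = diagP (γ.1 *ᵥ w) :=
  Prod.ext (funext fun i ↦ ((zInvPToR p).map_mulVec γ.1 w i).symm)
    (funext fun i ↦ ((zInvPToQp p).map_mulVec γ.1 w i).symm)

theorem continuous_actP_left (v : (Fin 2 → ℝ) × (Fin 2 → ℚ_[p])) :
    Continuous fun g : GP p ↦ actP g v :=
  ((continuous_induced_dom.comp continuous_fst).matrix_mulVec continuous_const).prodMk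
    ((continuous_induced_dom.comp continuous_snd).matrix_mulVec continuous_const)

theorem continuous_normP : Continuous (normP (p := p)) :=
  (continuous_induced_dom.comp continuous_fst).norm.max
    (continuous_induced_dom.comp continuous_snd).norm

theorem normP_nonneg (g : GP p) : 0 ≤ normP g :=
  (norm_nonneg g.1.1).trans (le_max_left _ _)

theorem norm_actP_le (g : GP p) (v : (Fin 2 → ℝ) × (Fin 2 → ℚ_[p])) :
    ‖actP g v‖ ≤ 2 * normP g * ‖v‖ := by
  have hg := normP_nonneg g
  have hR := norm_mulVec_le g.1.1 v.1
  have hQ := norm_mulVec_le g.2.1 v.2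
  rw [Fintype.card_fin, Nat.cast_ofNat] at hR hQ
  refine max_le (hR.trans ?_) (hQ.trans ?_)
  · gcongr
    exacts [le_max_left _ _, norm_fst_le v]
  · gcongr
    exacts [le_max_right _ _, norm_snd_le v]

theorem diagP_zero : diagP (0 : Fin 2 → ZInvP p) = 0 :=
  Prod.ext (funext fun _ ↦ map_zero (zInvPToR p)) (funext fun _ ↦ map_zero (zInvPToQp p))

theorem one_le_norm_diagP {w : Fin 2 → ZInvP p} (hw : w ≠ 0) : 1 ≤ ‖diagP w‖ := by
  obtain ⟨i, hi⟩ := Function.ne_iff.1 hw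
  exact (one_le_norm_zInvPToR_zInvPToQp hi).trans
    (max_le_max (norm_le_pi_norm (diagP w).1 i) (norm_le_pi_norm (diagP w).2 i))

end Action

section Kdelta

variable {p : ℕ} [Fact p.Prime]

theorem LambdaP_mk (g : GP p) :
    LambdaP p (QuotientGroup.mk g) = Set.range fun w ↦ actP g (diagP w) := by
  ext v
  constructor
  · rintro ⟨h, w, hx, rfl⟩
    obtain ⟨γ, hγ⟩ := QuotientGroup.eq.1 hx.symm
    refine ⟨γ.1 *ᵥ w, ?_⟩
    calc actP g (diagP (γ.1 *ᵥ w)) = actP (g * iotaP p γ) (diagP w) := by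
          rw [← actP_iotaP_diagP, actP_actP]
      _ = actP h (diagP w) := by rw [hγ, mul_inv_cancel_left]
  · rintro ⟨w, rfl⟩
    exact ⟨g, w, rfl, rfl⟩

theorem mk_mem_KdeltaP_iff {δ : ℝ} (hδ : 0 < δ) {g : GP p} :
    QuotientGroup.mk g ∈ KdeltaP p δ ↔ ∀ w ≠ 0, δ ≤ ‖actP g (diagP w)‖ := by
  change LambdaP p _ ∩ _ = _ ↔ _
  have hzero : actP g (diagP 0) = 0 := by rw [diagP_zero, actP_zero]
  rw [LambdaP_mk]
  constructor
  · intro h w hw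
    by_contra! hlt
    have hact : actP g (diagP w) = 0 := h.subset ⟨⟨w, rfl⟩, mem_ball_zero_iff.2 hlt⟩
    have hdiag : diagP w = 0 := by
      rw [← actP_inv_actP g (diagP w), hact, actP_zero]
    have hone := one_le_norm_diagP hw
    rw [hdiag, norm_zero] at hone
    exact hone.not_gt one_pos
  · refine fun h ↦ Set.Subset.antisymm ?_ ?_
    · rintro _ ⟨⟨w, rfl⟩, hball⟩
      have hw : w = 0 := by
        by_contra hw
        exact (h w hw).not_gt (mem_ball_zero_iff.1 hball)
      exact hw ▸ hzero
    · rintro _ rfl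
      exact ⟨⟨0, hzero⟩, Metric.mem_ball_self hδ⟩

theorem KdeltaP_anti {δ δ' : ℝ} (hδ : 0 < δ) (hle : δ ≤ δ') : KdeltaP p δ' ⊆ KdeltaP p δ := by
  intro x
  induction x using QuotientGroup.induction_on with
  | H g =>
    rw [mk_mem_KdeltaP_iff hδ, mk_mem_KdeltaP_iff (hδ.trans_le hle)]
    exact fun h w hw ↦ hle.trans (h w hw)

theorem isClosed_KdeltaP {δ : ℝ} (hδ : 0 < δ) : IsClosed (KdeltaP p δ) := by
  have hpre : ((↑) : GP p → XP p) ⁻¹' KdeltaP p δ =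
      ⋂ w ≠ 0, {g | δ ≤ ‖actP g (diagP w)‖} := by
    ext g
    simp [mk_mem_KdeltaP_iff hδ]
  rw [← QuotientGroup.isOpenQuotientMap_mk.isQuotientMap.isClosed_preimage, hpre]
  exact isClosed_biInter fun w _ ↦ isClosed_le continuous_const (continuous_actP_left _).norm

theorem mk_mem_KdeltaP_of_normP_inv_le {g : GP p} {C : ℝ} (hC : 0 < C) (hg : normP g⁻¹ ≤ C) :
    QuotientGroup.mk g ∈ KdeltaP p (1 / (2 * C)) := by
  refine (mk_mem_KdeltaP_iff (by positivity)).2 fun w hw ↦ ?_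
  rw [div_le_iff₀' (by positivity)]
  calc 1 ≤ ‖diagP w‖ := one_le_norm_diagP hw
    _ = ‖actP g⁻¹ (actP g (diagP w))‖ := by rw [actP_inv_actP]
    _ ≤ 2 * normP g⁻¹ * ‖actP g (diagP w)‖ := norm_actP_le _ _
    _ ≤ 2 * C * ‖actP g (diagP w)‖ := by gcongr

theorem exists_KdeltaP_mem_nhds (x : XP p) : ∃ δ > 0, KdeltaP p δ ∈ 𝓝 x := by
  induction x using QuotientGroup.induction_on with
  | H g =>
    have hC : 0 < normP g⁻¹ + 1 := add_pos_of_nonneg_of_pos (normP_nonneg _) one_pos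
    refine ⟨1 / (2 * (normP g⁻¹ + 1)), by positivity, ?_⟩
    have hnhds : {h : GP p | normP h⁻¹ < normP g⁻¹ + 1} ∈ 𝓝 g :=
      (continuous_normP.comp continuous_inv).continuousAt.eventually_lt continuousAt_const
        (lt_add_one _)
    refine Filter.mem_of_superset (QuotientGroup.isOpenMap_coe.image_mem_nhds hnhds) ?_
    rintro _ ⟨h, hh, rfl⟩
    exact mk_mem_KdeltaP_of_normP_inv_le hC hh.le

theorem exists_subset_KdeltaP_of_isCompact {L : Set (XP p)} (hL : IsCompact L) :
    ∃ δ > 0, L ⊆ KdeltaP p δ := by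
  refine hL.induction_on (p := fun s ↦ ∃ δ > 0, s ⊆ KdeltaP p δ) ⟨1, one_pos, Set.empty_subset _⟩
    (fun s t hst ⟨δ, hδ, ht⟩ ↦ ⟨δ, hδ, hst.trans ht⟩) ?_ fun x _ ↦ ?_
  · rintro s t ⟨δ, hδ, hs⟩ ⟨ε, hε, ht⟩
    have hmin := lt_min hδ hε
    exact ⟨min δ ε, hmin, Set.union_subset (hs.trans (KdeltaP_anti hmin (min_le_left δ ε)))
      (ht.trans (KdeltaP_anti hmin (min_le_right δ ε)))⟩
  · obtain ⟨δ, hδ, hx⟩ := exists_KdeltaP_mem_nhds x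
    exact ⟨_, mem_nhdsWithin_of_mem_nhds hx, δ, hδ, Set.Subset.rfl⟩

end Kdelta

section Compactness

variable {p : ℕ} [Fact p.Prime]

theorem exists_mk_eq_norm_snd_le_one_norm_col_mul_norm_col_le_two (x : XP p) :
    ∃ g : GP p, QuotientGroup.mk g = x ∧ ‖g.2.1‖ ≤ 1 ∧ ‖g.1.1.col 0‖ * ‖g.1.1.col 1‖ ≤ 2 := by
  induction x using QuotientGroup.induction_on with
  | H g =>
    obtain ⟨γ, hγ⟩ := exists_norm_mul_map_zInvPToQp_le_one g.2
    obtain ⟨σ, hσ⟩ := exists_norm_col_mul_norm_col_le_two (g * iotaP p γ).1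
    let τ := SpecialLinearGroup.map (Int.castRingHom (ZInvP p)) σ
    have hτ : iotaP p τ = (SpecialLinearGroup.map (Int.castRingHom ℝ) σ,
        SpecialLinearGroup.map (Int.castRingHom ℚ_[p]) σ) := by
      ext <;> simp [iotaP, τ]
    refine ⟨g * iotaP p γ * iotaP p τ, ?_, ?_, ?_⟩
    · rw [mul_assoc, ← map_mul]
      exact QuotientGroup.mk_mul_of_mem g (MonoidHom.mem_range.2 ⟨_, rfl⟩)
    · rw [hτ]
      exact (norm_mul_le_of_isUltrametricDist _ _).trans
        (mul_le_one₀ hγ (norm_nonneg _) (norm_map_intCast_le_one σ))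
    · rwa [hτ]

theorem le_norm_col_of_mk_mem_KdeltaP {g : GP p} {δ : ℝ} {k : ℕ}
    (hg : QuotientGroup.mk g ∈ KdeltaP p δ) (hint : ‖g.2.1‖ ≤ 1) (hk : (p : ℝ)⁻¹ ^ k < δ)
    (j : Fin 2) : δ / (p : ℝ) ^ k ≤ ‖g.1.1.col j‖ := by
  have hp : 0 < (p : ℝ) := by exact_mod_cast (Fact.out : p.Prime).pos
  -- The `p`-adic component of this test vector is short, so its real component is not.
  let w : Fin 2 → ZInvP p := Pi.single j ((p : ZInvP p) ^ k)
  have hw : w ≠ 0 := Pi.single_ne_zero_iff.2 fun h ↦ by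
    simpa [hp.ne'] using congrArg (zInvPToR p) h
  have hact : actP g (diagP w) = ((p : ℝ) ^ k • g.1.1.col j, (p : ℚ_[p]) ^ k • g.2.1.col j) := by
    have hR : zInvPToR p ∘ w = Pi.single j ((p : ℝ) ^ k) := by
      ext i; simp [w, Pi.single_apply, apply_ite (zInvPToR p)]
    have hQ : zInvPToQp p ∘ w = Pi.single j ((p : ℚ_[p]) ^ k) := by
      ext i; simp [w, Pi.single_apply, apply_ite (zInvPToQp p)]
    simp only [actP, diagP, hR, hQ, mulVec_single, op_smul_eq_smul]
  have hnorm := (mk_mem_KdeltaP_iff ((by positivity : (0 : ℝ) < _).trans hk)).1 hg w hw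
  have hpadic : ‖(p : ℚ_[p]) ^ k • g.2.1.col j‖ < δ := by
    rw [norm_smul, norm_pow, Padic.norm_p]
    exact (mul_le_of_le_one_right (by positivity)
      ((norm_col_le_norm g.2.1 j).trans hint)).trans_lt hk
  rw [hact, Prod.norm_def, le_max_iff, or_iff_left hpadic.not_ge, norm_smul, norm_pow,
    Real.norm_natCast] at hnorm
  exact (div_le_iff₀' (by positivity)).2 hnorm

theorem isCompact_KdeltaP {δ : ℝ} (hδ : 0 < δ) : IsCompact (KdeltaP p δ) := by
  have hp : 1 < (p : ℝ) := by exact_mod_cast (Fact.out : p.Prime).one_lt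
  obtain ⟨k, hk⟩ := exists_pow_lt_of_lt_one hδ (inv_lt_one_of_one_lt₀ hp)
  have hc : 0 < δ / (p : ℝ) ^ k := by positivity
  have hcompact := (isCompact_setOf_specialLinearGroup_norm_le (n := Fin 2) (K := ℝ)
    (2 / (δ / (p : ℝ) ^ k))).prod
      (isCompact_setOf_specialLinearGroup_norm_le (n := Fin 2) (K := ℚ_[p]) 1)
  refine (hcompact.image (f := ((↑) : GP p → XP p)) continuous_quotient_mk').of_isClosed_subset
    (isClosed_KdeltaP hδ) fun x hx ↦ ?_
  obtain ⟨g, rfl, hint, hprod⟩ := exists_mk_eq_norm_snd_le_one_norm_col_mul_norm_col_le_two x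
  exact ⟨g, ⟨norm_le_of_norm_col_mul_norm_col_le hc
    (le_norm_col_of_mk_mem_KdeltaP hx hint hk) hprod, hint⟩, rfl⟩

end Compactness

end

/-- Mahler's criterion for `X`: a subset `L ⊆ X` has compact closure if and only if
`L ⊆ K_δ` for some `δ > 0`. -/
theorem mahler_criterion (p : ℕ) [Fact p.Prime] (L : Set (XP p)) :
    IsCompact (closure L) ↔ ∃ δ : ℝ, 0 < δ ∧ L ⊆ KdeltaP p δ := by
  constructor
  · intro hL
    obtain ⟨δ, hδ, hLδ⟩ := exists_subset_KdeltaP_of_isCompact hL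
    exact ⟨δ, hδ, subset_closure.trans hLδ⟩
  · rintro ⟨δ, hδ, hLδ⟩
    exact (isCompact_KdeltaP hδ).of_isClosed_subset isClosed_closure
      (closure_minimal hLδ (isClosed_KdeltaP hδ))
end
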